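/- arXiv:math/0209364 — 2 statements merged into one kernel-verified Lean document; each statement's English description precedes it below -/
import Mathlib

section
/- Any tame embedded sphere of codimension one in S^d separates S^d into exactly two connected components, each homeomorphic to an open d-ball, and the closure of each component is homeomorphic to a closed d-ball. -/
open Topology

namespace GS
open MeasureTheory Set Metric

lemma interp_exists (t0 : ℝ) (ht0 : 0 < t0) (n : ℕ) :
    ∃ (s : Finset ℕ) (t c : ℕ → ℝ), (∀ i ∈ s, 0 ≤ t i ∧ t i ≤ t0) ∧ ∑ i ∈ s, c i = 1 ∧
      ∀ p : Polynomial ℝ, p.natDegree ≤ n → p.eval 1 = ∑ i ∈ s, c i * p.eval (t i) := by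
  classical
  set t : ℕ → ℝ := fun i => t0 * (i / (n + 1)) with ht
  have hinj : Set.InjOn t (Finset.range (n + 1) : Finset ℕ) := by
    intro i _ j _ hij
    have h1 : (0 : ℝ) < n + 1 := by positivity
    simp only [ht] at hij
    have := mul_left_cancel₀ ht0.ne' hij
    field_simp at this
    exact_mod_cast this
  refine ⟨Finset.range (n + 1), t,
    fun i => (Lagrange.basis (Finset.range (n + 1)) t i).eval 1, ?_, ?_, ?_⟩
  · intro i hi
    have hi' : (i : ℝ) ≤ n + 1 := by
      have := Finset.mem_range.1 hi
      exact_mod_cast this.le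
    have h1 : (0 : ℝ) < n + 1 := by positivity
    refine ⟨by positivity, ?_⟩
    have : (i : ℝ) / (n + 1) ≤ 1 := (div_le_one h1).2 hi'
    simp only [ht]
    nlinarith
  · rw [← Polynomial.eval_finsetSum, Lagrange.sum_basis hinj ⟨0, by simp⟩]
    simp
  · intro p hp
    have hdeg : p.degree < ((Finset.range (n + 1)).card : WithBot ℕ) := by
      rw [Finset.card_range]
      refine lt_of_le_of_lt Polynomial.degree_le_natDegree ?_
      exact_mod_cast Nat.lt_succ_of_le hp
    conv_lhs => rw [Lagrange.eq_interpolate hinj hdeg]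
    rw [Lagrange.interpolate_apply, Polynomial.eval_finsetSum]
    refine Finset.sum_congr rfl fun i _ => ?_
    simp [mul_comm]

variable {n : ℕ}

local notation "EE" => EuclideanSpace ℝ (Fin n)

lemma det_poly (A : EE →L[ℝ] EE) : ∃ p : Polynomial ℝ, p.natDegree ≤ n ∧
    ∀ t : ℝ, p.eval t = (1 + t • A).det := by
  classical
  let b := (EuclideanSpace.basisFun (Fin n) ℝ).toBasis
  let M := LinearMap.toMatrix b b (A : EE →ₗ[ℝ] EE)
  refine ⟨((Polynomial.X : Polynomial ℝ) • M.map Polynomial.C + (1 : Matrix (Fin n) (Fin n) ℝ).map Polynomial.C).det, ?_, ?_⟩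
  · simpa using Polynomial.natDegree_det_X_add_C_le M 1
  · intro t
    have : (1 + t • A).det = LinearMap.det ((1 : EE →ₗ[ℝ] EE) + t • (A : EE →ₗ[ℝ] EE)) := rfl
    rw [this, ← LinearMap.det_toMatrix b, map_add, map_smul, LinearMap.toMatrix_one,
      ← Polynomial.coe_evalRingHom, RingHom.map_det]
    congr 1
    ext i j
    simp [M, Matrix.one_apply, apply_ite, add_comm, Matrix.map_apply]
    exact mul_comm _ _

lemma isUnit_one_add {A : EE →L[ℝ] EE} (hA : ‖A‖ < 1) : IsUnit (1 + A) := by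
  have := (Units.oneSub (-A) (by simpa using hA)).isUnit
  simpa using this

lemma det_ne_zero_of_isUnit {A : EE →L[ℝ] EE} (hA : IsUnit A) : A.det ≠ 0 := by
  obtain ⟨u, rfl⟩ := hA
  intro h
  have h1 : ((u : EE →L[ℝ] EE) * (↑u⁻¹ : EE →L[ℝ] EE)).det = 1 := by
    simp [ContinuousLinearMap.det]
  have h2 : ((u : EE →L[ℝ] EE) * (↑u⁻¹ : EE →L[ℝ] EE)).det =
    (u : EE →L[ℝ] EE).det * (↑u⁻¹ : EE →L[ℝ] EE).det := by
      simp only [ContinuousLinearMap.det]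
      rw [← LinearMap.det_comp]; rfl
  rw [h2, h] at h1
  simp at h1

lemma det_one_add_pos {A : EE →L[ℝ] EE} (hA : ‖A‖ < 1) : 0 < (1 + A).det := by
  by_contra hneg
  push Not at hneg
  have hc : ContinuousOn (fun s : ℝ => (1 + s • A).det) (Icc 0 1) := by
    apply Continuous.continuousOn
    exact ContinuousLinearMap.continuous_det.comp (by fun_prop)
  have h := intermediate_value_Icc' zero_le_one hc
  have h0 : (0 : ℝ) ∈ Icc ((1 + (1 : ℝ) • A).det) ((1 + (0 : ℝ) • A).det) := by
    refine ⟨by simpa using hneg, ?_⟩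
    simp [ContinuousLinearMap.det]
  obtain ⟨s, hs, hs0⟩ := h h0
  refine det_ne_zero_of_isUnit (isUnit_one_add (A := s • A) ?_) hs0
  rw [norm_smul, Real.norm_of_nonneg hs.1]
  nlinarith [hs.1, hs.2, norm_nonneg A]

/-- there is no `C^1` retraction of the closed ball to the sphere -/
theorem no_c1_retraction (f : EE → EE) (hf : ∀ x ∈ closedBall (0 : EE) 1, ContDiffAt ℝ 1 f x)
    (hs : ∀ x ∈ closedBall (0 : EE) 1, ‖f x‖ = 1) (hid : ∀ x, ‖x‖ = 1 → f x = x) : False := by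
  set B := closedBall (0 : EE) 1 with hB
  set h : EE → EE := fun x => f x - x with hh
  have hhd : ∀ x ∈ B, ContDiffAt ℝ 1 h x := fun x hx => (hf x hx).sub contDiffAt_id
  have hcont : ContinuousOn (fderiv ℝ h) B := fun x hx =>
    ((hhd x hx).continuousAt_fderiv one_ne_zero).continuousWithinAt
  obtain ⟨C0, hC0⟩ := (isCompact_closedBall (0 : EE) 1).exists_bound_of_continuousOn hcont
  set C : ℝ := max C0 1 with hC
  have hCpos : 0 < C := by positivity
  have hCb : ∀ x ∈ B, ‖fderiv ℝ h x‖ ≤ C := fun x hx => (hC0 x hx).trans (le_max_left _ _)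
  have hlip : LipschitzOnWith ⟨C, hCpos.le⟩ h B :=
    Convex.lipschitzOnWith_of_nnnorm_fderiv_le
      (fun x hx => (hhd x hx).differentiableAt one_ne_zero) (fun x hx => hCb x hx)
      (convex_closedBall _ _)
  set t0 : ℝ := 1 / (2 * C) with ht0
  have ht0pos : 0 < t0 := by positivity
  have ht0C : t0 * C = 1 / 2 := by rw [ht0]; field_simp
  have hC1 : 1 ≤ C := le_max_right _ _
  have ht01 : t0 < 1 := by nlinarith
  -- derivative of f_t
  have hder : ∀ t : ℝ, ∀ x ∈ B, HasStrictFDerivAt (fun x => x + t • h x) (1 + t • fderiv ℝ h x) x := by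
    intro t x hx
    exact (hasStrictFDerivAt_id x).add (((hhd x hx).hasStrictFDerivAt one_ne_zero).const_smul t)
  have hsmall : ∀ t ∈ Icc 0 t0, ∀ x ∈ B, ‖t • fderiv ℝ h x‖ < 1 := by
    intro t ht x hx
    rw [norm_smul, Real.norm_of_nonneg ht.1]
    have := hCb x hx
    nlinarith [ht.1, ht.2, norm_nonneg (fderiv ℝ h x)]
  have hball : ball (0 : EE) 1 ⊆ B := ball_subset_closedBall
  -- key volume identity
  have key : ∀ t ∈ Icc 0 t0, ∫ x in ball (0 : EE) 1, (1 + t • fderiv ℝ h x).det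
      = ∫ x in ball (0 : EE) 1, (1 : ℝ) := by
    intro t ht
    set g : EE → EE := fun x => x + t • h x with hg
    have hinj : InjOn g (ball (0 : EE) 1) := by
      intro x hx y hy hxy
      have h1 : x - y = t • (h y - h x) := by
        simp only [hg] at hxy
        have : x - y = t • h y - t • h x := by
          rw [sub_eq_sub_iff_add_eq_add, add_comm (t • h y), ← hxy]
        rw [this]; exact (smul_sub _ _ _).symm
      have h2 : ‖h y - h x‖ ≤ C * ‖y - x‖ := by
        have := hlip.dist_le_mul y (hball hy) x (hball hx)
        rwa [dist_eq_norm, dist_eq_norm] at this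
      have h3 : ‖x - y‖ ≤ t * (C * ‖y - x‖) := by
        rw [h1, norm_smul, Real.norm_of_nonneg ht.1]
        exact mul_le_mul_of_nonneg_left h2 ht.1
      rw [norm_sub_rev y x] at h3
      have : ‖x - y‖ ≤ 1/2 * ‖x - y‖ := by
        refine h3.trans ?_
        rw [← ht0C, mul_assoc]
        exact mul_le_mul_of_nonneg_right ht.2 (by positivity)
      have : ‖x - y‖ = 0 := by linarith [norm_nonneg (x - y)]
      exact sub_eq_zero.1 (norm_eq_zero.1 this)
    have hgeq : ∀ x, g x = (1 - t) • x + t • f x := by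
      intro x; simp only [hg, hh, smul_sub, sub_smul, one_smul]; abel
    have ht1 : t < 1 := lt_of_le_of_lt ht.2 ht01
    have hmaps : ∀ x ∈ ball (0 : EE) 1, g x ∈ ball (0 : EE) 1 := by
      intro x hx
      rw [mem_ball_zero_iff] at hx ⊢
      rw [hgeq]
      calc ‖(1 - t) • x + t • f x‖ ≤ ‖(1 - t) • x‖ + ‖t • f x‖ := norm_add_le _ _
        _ = (1 - t) * ‖x‖ + t * 1 := by
            rw [norm_smul, norm_smul, hs x (by rw [hB, mem_closedBall_zero_iff]; exact hx.le),
              Real.norm_of_nonneg ht.1, Real.norm_of_nonneg (by linarith)]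
        _ < 1 := by nlinarith
    have hopen : IsOpen (g '' ball (0 : EE) 1) := by
      rw [isOpen_iff_mem_nhds]
      rintro _ ⟨x, hx, rfl⟩
      have hu := isUnit_one_add (hsmall t ht x (hball hx))
      have hb := (ContinuousLinearMap.isUnit_iff_bijective.1 hu).2
      have := (hder t x (hball hx)).map_nhds_eq_of_surj (LinearMap.range_eq_top.2 hb)
      rw [← this]
      exact Filter.image_mem_map (isOpen_ball.mem_nhds hx)
    have hgc : ContinuousOn g B := fun x hx => (hder t x hx).continuousAt.continuousWithinAt
    have himg : g '' ball (0 : EE) 1 = ball (0 : EE) 1 := by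
      apply Subset.antisymm
      · rintro _ ⟨x, hx, rfl⟩; exact hmaps x hx
      · refine IsPreconnected.subset_of_closure_inter_subset
          (convex_ball (0 : EE) 1).isPreconnected hopen ⟨g 0, hmaps 0 (by simp), 0, by simp, rfl⟩ ?_
        rintro y ⟨hy1, hy2⟩
        have hcl : IsClosed (g '' B) :=
          ((isCompact_closedBall (0 : EE) 1).image_of_continuousOn hgc).isClosed
        obtain ⟨x, hx, rfl⟩ := closure_minimal (image_mono hball) hcl hy1
        refine ⟨x, ?_, rfl⟩
        rw [mem_ball_zero_iff]
        have hx1 : ‖x‖ ≤ 1 := mem_closedBall_zero_iff.1 hx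
        refine lt_of_le_of_ne hx1 fun hx2 => ?_
        have : g x = x := by simp [hg, hh, hid x hx2]
        rw [this, mem_ball_zero_iff] at hy2
        linarith
    have hcv := integral_image_eq_integral_abs_det_fderiv_smul volume
      (measurableSet_ball (x := (0 : EE)) (ε := 1))
      (fun x hx => (hder t x (hball hx)).hasFDerivAt.hasFDerivWithinAt) hinj (fun _ => (1 : ℝ))
    rw [himg] at hcv
    rw [hcv]
    refine setIntegral_congr_fun measurableSet_ball fun x hx => ?_
    have := det_one_add_pos (hsmall t ht x (hball hx))
    simp [abs_of_pos this]
  obtain ⟨s, t, c, hts, hc1, hp⟩ := interp_exists t0 ht0pos n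
  have hint : ∀ t : ℝ, IntegrableOn (fun x => (1 + t • fderiv ℝ h x).det) (ball (0 : EE) 1) := by
    intro t
    have : ContinuousOn (fun x => (1 + t • fderiv ℝ h x).det) B :=
      ContinuousLinearMap.continuous_det.comp_continuousOn
        (continuousOn_const.add (hcont.const_smul t))
    exact (this.integrableOn_compact (isCompact_closedBall (0 : EE) 1)).mono_set hball
  have hone : ∀ x ∈ ball (0 : EE) 1, (1 + (1 : ℝ) • fderiv ℝ h x).det = 0 := by
    intro x hx
    by_contra hne
    have hfd : HasFDerivAt f (1 + (1 : ℝ) • fderiv ℝ h x) x := by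
      have := (hder 1 x (hball hx)).hasFDerivAt
      have h2 : (fun x => x + (1 : ℝ) • h x) = f := by
        ext1 y; simp [hh]
      rwa [h2] at this
    set L := (1 + (1 : ℝ) • fderiv ℝ h x) with hL
    have hn : HasFDerivAt (fun y => ‖f y‖ ^ 2) (2 • (innerSL ℝ (f x)).comp L) x := by
      simpa using hfd.norm_sq
    have hn0 : HasFDerivAt (fun y => ‖f y‖ ^ 2) (0 : EE →L[ℝ] ℝ) x := by
      refine (hasFDerivAt_const (1 : ℝ) x).congr_of_eventuallyEq ?_
      filter_upwards [isOpen_ball.mem_nhds hx] with y hy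
      simp [hs y (hball hy)]
    have heq := hn.unique hn0
    have hsurj : Function.Surjective L := by
      have : IsUnit (LinearMap.det (L : EE →ₗ[ℝ] EE)) := isUnit_iff_ne_zero.2 hne
      have := (LinearMap.isUnit_iff_isUnit_det _).2 this
      exact ((Module.End.isUnit_iff _).1 this).2
    obtain ⟨v, hv⟩ := hsurj (f x)
    have := congrArg (fun A : EE →L[ℝ] ℝ => A v) heq
    simp [hv, hs x (hball hx)] at this
  have hfin : ∫ x in ball (0 : EE) 1, (1 + (1 : ℝ) • fderiv ℝ h x).det
      = ∑ i ∈ s, c i * ∫ x in ball (0 : EE) 1, (1 + t i • fderiv ℝ h x).det := by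
    have h1 : ∀ x, (1 + (1 : ℝ) • fderiv ℝ h x).det
        = ∑ i ∈ s, c i * (1 + t i • fderiv ℝ h x).det := by
      intro x
      obtain ⟨p, hpd, hpe⟩ := det_poly (fderiv ℝ h x)
      simp only [← hpe]
      exact hp p hpd
    simp_rw [h1]
    rw [integral_finsetSum _ (fun i _ => (hint (t i)).const_mul (c i))]
    refine Finset.sum_congr rfl fun i _ => ?_
    rw [integral_const_mul]
  rw [setIntegral_congr_fun measurableSet_ball hone,
    Finset.sum_congr rfl (fun i hi => by rw [key (t i) (hts i hi)]), ← Finset.sum_mul, hc1] at hfin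
  simp only [integral_zero, one_mul] at hfin
  have hpos : 0 < volume.real (ball (0 : EE) 1) :=
    ENNReal.toReal_pos (measure_ball_pos _ _ one_pos).ne' measure_ball_lt_top.ne
  simp at hfin
  rw [← hfin] at hpos
  exact lt_irrefl _ hpos

end GS

namespace GS
open MeasureTheory Set Metric

variable {n : ℕ}

local notation "EE" => EuclideanSpace ℝ (Fin n)

lemma exists_smooth_approx (G : EE → EE) (hG : Continuous G) (δ : ℝ) (hδ : 0 < δ) :
    ∃ p : EE → EE, ContDiff ℝ 1 p ∧ ∀ x, ‖p x - G x‖ < δ := by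
  obtain ⟨g, hg1, hg2, -⟩ := hG.exists_contDiff_approx 1 (ε := fun _ => δ) continuous_const
    (fun _ => hδ)
  refine ⟨g, by exact_mod_cast hg1, fun x => ?_⟩
  have := hg2 x
  rwa [dist_eq_norm] at this

lemma exists_continuous_ext {K : Set EE} (hK : IsClosed K) (f : EE → EE) (hf : ContinuousOn f K) :
    ∃ F : EE → EE, Continuous F ∧ ∀ x ∈ K, F x = f x := by
  obtain ⟨g, hg⟩ := ContinuousMap.exists_restrict_eq hK
    (⟨K.domRestrict f, hf.domRestrict⟩ : C(K, EE))
  refine ⟨g, g.continuous, fun x hx => ?_⟩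
  exact DFunLike.congr_fun hg ⟨x, hx⟩

lemma no_smooth_fixedpointfree (p : EE → EE) (hp : ContDiff ℝ 1 p)
    (hm : ∀ x ∈ closedBall (0 : EE) 1, ‖p x‖ ≤ 1)
    (hne : ∀ x ∈ closedBall (0 : EE) 1, p x ≠ x) : False := by
  set v : EE → EE := fun x => x - p x with hv
  set D : EE → ℝ := fun x => (inner ℝ x (v x)) ^ 2 + ‖v x‖ ^ 2 * (1 - ‖x‖ ^ 2) with hD
  set l : EE → ℝ := fun x => (-(inner ℝ x (v x)) + Real.sqrt (D x)) / ‖v x‖ ^ 2 with hl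
  have hv0 : ∀ x ∈ closedBall (0 : EE) 1, ‖v x‖ ^ 2 ≠ 0 := by
    intro x hx h
    have : v x = 0 := by simpa using h
    exact hne x hx (sub_eq_zero.1 this).symm
  have hinner : ∀ x, ‖x‖ = 1 → 0 < inner ℝ x (v x) := by
    intro x hx
    have hxB : x ∈ closedBall (0 : EE) 1 := by simp [hx]
    have h1 : ‖v x‖ ^ 2 = ‖x‖ ^ 2 - 2 * inner ℝ x (p x) + ‖p x‖ ^ 2 := norm_sub_sq_real _ _
    have h2 : 0 < ‖v x‖ ^ 2 := lt_of_le_of_ne (sq_nonneg _) (hv0 x hxB).symm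
    have h3 : inner ℝ x (v x) = ‖x‖ ^ 2 - inner ℝ x (p x) := by
      simp only [hv, inner_sub_right, real_inner_self_eq_norm_sq]
    have h4 := hm x hxB
    have h5 := norm_nonneg (p x)
    rw [h3]
    rw [hx] at *
    nlinarith
  have hDpos : ∀ x ∈ closedBall (0 : EE) 1, 0 < D x := by
    intro x hx
    have hx1 : ‖x‖ ≤ 1 := mem_closedBall_zero_iff.1 hx
    have h2 : 0 < ‖v x‖ ^ 2 := lt_of_le_of_ne (sq_nonneg _) (hv0 x hx).symm
    rcases hx1.lt_or_eq with h | h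
    · have h3 : 0 < 1 - ‖x‖ ^ 2 := by nlinarith [norm_nonneg x]
      simp only [hD]
      positivity
    · simp only [hD]
      have := hinner x h
      rw [h]
      norm_num
      positivity
  have hvd : ContDiff ℝ 1 v := contDiff_id.sub hp
  have hDd : ContDiff ℝ 1 D :=
    ((contDiff_id.inner ℝ hvd).pow 2).add ((hvd.norm_sq ℝ).mul
      (contDiff_const.sub (contDiff_id.norm_sq ℝ)))
  refine no_c1_retraction (fun x => x + l x • v x) ?_ ?_ ?_
  · intro x hx
    have h1 : ContDiffAt ℝ 1 l x := by
      refine ContDiffAt.div ?_ (hvd.norm_sq ℝ).contDiffAt (hv0 x hx)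
      exact ((contDiff_id.inner ℝ hvd).neg.contDiffAt).add
        (hDd.contDiffAt.sqrt (hDpos x hx).ne')
    exact contDiffAt_id.add (h1.smul hvd.contDiffAt)
  · intro x hx
    have h1 : ‖x + l x • v x‖ ^ 2 = 1 := by
      rw [norm_add_sq_real, inner_smul_right, norm_smul, mul_pow, Real.norm_eq_abs, sq_abs]
      have hsq := Real.sq_sqrt (hDpos x hx).le
      have hv0' := hv0 x hx
      have hlx : l x * ‖v x‖ ^ 2 = -(inner ℝ x (v x)) + Real.sqrt (D x) := by
        simp only [hl]; exact div_mul_cancel₀ _ hv0'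
      have h3 : (l x * ‖v x‖ ^ 2 + inner ℝ x (v x)) ^ 2 = D x := by rw [hlx]; linear_combination hsq
      have h4 : ‖v x‖ ^ 2 * (‖x‖ ^ 2 + 2 * (l x * inner ℝ x (v x)) + l x ^ 2 * ‖v x‖ ^ 2 - 1) = 0 := by
        simp only [hD] at h3
        linear_combination h3
      have := (mul_eq_zero.1 h4).resolve_left hv0'
      linarith
    have h2 := norm_nonneg (x + l x • v x)
    nlinarith
  · intro x hx
    have : l x = 0 := by
      simp only [hl, hD, hx]
      have := hinner x hx
      simp [Real.sqrt_sq this.le]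
    simp [this]

/-- Brouwer's fixed point theorem -/
theorem brouwer (f : EE → EE) (hf : ContinuousOn f (closedBall 0 1))
    (hm : ∀ x ∈ closedBall (0 : EE) 1, ‖f x‖ ≤ 1) : ∃ x ∈ closedBall (0 : EE) 1, f x = x := by
  by_contra hno
  push Not at hno
  obtain ⟨F, hF, hFf⟩ := exists_continuous_ext isClosed_closedBall f hf
  obtain ⟨x0, hx0, hmin⟩ := (isCompact_closedBall (0 : EE) 1).exists_isMinOn ⟨0, by simp⟩
    ((hf.sub continuousOn_id).norm)
  set μ := ‖f x0 - x0‖ with hμ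
  have hμpos : 0 < μ := norm_pos_iff.2 (sub_ne_zero.2 (hno x0 hx0))
  have hμle : ∀ x ∈ closedBall (0 : EE) 1, μ ≤ ‖f x - x‖ := fun x hx => hmin hx
  set δ := μ / 4 with hδ
  have hδpos : 0 < δ := by positivity
  obtain ⟨g, hg, hgF⟩ := exists_smooth_approx F hF δ hδpos
  have hgn : ∀ x ∈ closedBall (0 : EE) 1, ‖g x‖ ≤ 1 + δ := by
    intro x hx
    have h1 := hgF x
    rw [hFf x hx] at h1
    have h2 := hm x hx
    have : g x = (g x - f x) + f x := by abel
    rw [this]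
    exact (norm_add_le _ _).trans (by linarith)
  have hnn : ∀ x, ‖(1 + δ)⁻¹ • g x‖ = (1 + δ)⁻¹ * ‖g x‖ := fun x => by
    rw [norm_smul, Real.norm_of_nonneg (by positivity)]
  refine no_smooth_fixedpointfree (fun x => (1 + δ)⁻¹ • g x) (hg.const_smul _) ?_ ?_
  · intro x hx
    rw [hnn, inv_mul_le_iff₀ (by positivity)]
    simpa using hgn x hx
  · intro x hx heq
    have h1 := hgF x
    rw [hFf x hx] at h1
    have h2 : ‖(1 + δ)⁻¹ • g x - g x‖ ≤ δ := by
      have : (1 + δ)⁻¹ • g x - g x = (-(δ * (1 + δ)⁻¹)) • g x := by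
        rw [sub_eq_iff_eq_add]
        nth_rewrite 3 [← one_smul ℝ (g x)]
        rw [← add_smul]
        congr 1
        field_simp
        ring
      rw [this, norm_smul, norm_neg, Real.norm_of_nonneg (by positivity), mul_assoc]
      have : (1 + δ)⁻¹ * ‖g x‖ ≤ 1 := by
        rw [inv_mul_le_iff₀ (by positivity)]
        simpa using hgn x hx
      nlinarith
    have h3 := hμle x hx
    rw [heq] at h2
    have h4 : f x - x = -((x - g x) + (g x - f x)) := by abel
    have h5 : ‖f x - x‖ ≤ ‖x - g x‖ + ‖g x - f x‖ := by
      rw [h4, norm_neg]; exact norm_add_le _ _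
    linarith

theorem iod_ball (f : EE → EE) (hf : ContinuousOn f (closedBall 0 1))
    (hinj : InjOn f (closedBall 0 1)) : f '' closedBall 0 1 ∈ 𝓝 (f 0) := by
  rcases subsingleton_or_nontrivial EE with hsub | hnt
  · have : f '' closedBall (0 : EE) 1 = univ :=
      eq_univ_of_forall fun y => ⟨0, by simp, Subsingleton.elim _ _⟩
    rw [this]; exact Filter.univ_mem
  by_contra hnot
  set B := closedBall (0 : EE) 1 with hB
  have hBc : IsCompact B := isCompact_closedBall 0 1
  have h0B : (0 : EE) ∈ B := by simp [hB]
  set K := f '' B with hK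
  have hKc : IsCompact K := hBc.image_of_continuousOn hf
  -- inverse
  obtain ⟨G, hGc, hGf⟩ : ∃ G : EE → EE, Continuous G ∧ ∀ x ∈ B, G (f x) = x := by
    have : CompactSpace B := isCompact_iff_compactSpace.1 hBc
    have he : IsClosedEmbedding (B.domRestrict f) :=
      hf.domRestrict.isClosedEmbedding (injOn_iff_injective.1 hinj)
    obtain ⟨g, hg⟩ := ContinuousMap.exists_extension' he
      (⟨Subtype.val, continuous_subtype_val⟩ : C(B, EE))
    exact ⟨g, g.continuous, fun x hx => congrFun hg ⟨x, hx⟩⟩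
  have stab : ∀ H : EE → EE, ContinuousOn H K → (∀ y ∈ K, ‖G y - H y‖ ≤ 1) →
      ∃ y ∈ K, H y = 0 := by
    intro H hH hle
    obtain ⟨x, hx, hxe⟩ := brouwer (fun x => x - H (f x))
      (continuousOn_id.sub (hH.comp hf (mapsTo_image f B))) (fun x hx => by
        have := hle (f x) (mem_image_of_mem f hx)
        rwa [hGf x hx] at this)
    exact ⟨f x, mem_image_of_mem f hx, by simpa using hxe⟩
  have hG0 : G (f 0) = 0 := hGf 0 h0B
  obtain ⟨e, he, heG⟩ : ∃ e > 0, ∀ y, ‖y - f 0‖ ≤ 2 * e → ‖G y‖ ≤ 1/10 := by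
    obtain ⟨d, hd, hdG⟩ := Metric.continuous_iff.1 hGc (f 0) (1/10) (by norm_num)
    refine ⟨d/4, by positivity, fun y hy => ?_⟩
    have := hdG y (by rw [dist_eq_norm]; linarith)
    rw [hG0, dist_zero_right] at this
    exact this.le
  obtain ⟨c, hcK, hc⟩ : ∃ c, c ∉ K ∧ ‖c - f 0‖ < e := by
    by_contra hcon
    push Not at hcon
    apply hnot
    refine Filter.mem_of_superset (ball_mem_nhds (f 0) he) fun c hc => ?_
    by_contra h
    have := hcon c h
    rw [mem_ball, dist_eq_norm] at hc
    linarith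
  obtain ⟨m, hm, hmG⟩ : ∃ m > 0, ∀ y ∈ K, e ≤ ‖y - c‖ → m ≤ ‖G y‖ := by
    have hS : IsCompact (K ∩ {y | e ≤ ‖y - c‖}) :=
      hKc.inter_right (isClosed_le continuous_const (by fun_prop))
    rcases (K ∩ {y | e ≤ ‖y - c‖}).eq_empty_or_nonempty with h | h
    · refine ⟨1, one_pos, fun y hy hy2 => ?_⟩
      have : y ∈ K ∩ {y | e ≤ ‖y - c‖} := ⟨hy, hy2⟩
      rw [h] at this; exact this.elim
    · obtain ⟨y0, hy0, hmin⟩ := hS.exists_isMinOn h hGc.norm.continuousOn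
      refine ⟨‖G y0‖, ?_, fun y hy hy2 => hmin ⟨hy, hy2⟩⟩
      obtain ⟨⟨x, hx, rfl⟩, hy2⟩ := hy0
      rw [hGf x hx, gt_iff_lt, norm_pos_iff]
      rintro rfl
      rw [mem_ofPred_eq, norm_sub_rev] at hy2
      linarith
  set δ := min m (1/10) with hδ
  have hδpos : 0 < δ := by positivity
  obtain ⟨P0, hP0, hP0G⟩ := exists_smooth_approx G hGc (δ/2) (by positivity)
  obtain ⟨w, hw, hwn⟩ : ∃ w, w ∉ P0 '' sphere c e ∧ ‖w‖ < δ / 2 := by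
    by_contra hcon
    push Not at hcon
    have h1 : volume (P0 '' sphere c e) = 0 :=
      addHaar_image_eq_zero_of_differentiableOn_of_addHaar_eq_zero volume
        (hP0.differentiable one_ne_zero).differentiableOn (Measure.addHaar_sphere volume c e)
    have h2 : ball (0 : EE) (δ/2) ⊆ P0 '' sphere c e := fun w hw => by
      by_contra h
      have := hcon w h
      rw [mem_ball_zero_iff] at hw
      linarith
    exact (measure_ball_pos volume (0 : EE) (half_pos hδpos)).ne' (measure_mono_null h2 h1)
  set P : EE → EE := fun x => P0 x - w with hP
  have hPc : Continuous P := hP0.continuous.sub continuous_const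
  have hPG : ∀ x, ‖P x - G x‖ < δ := by
    intro x
    have h1 := hP0G x
    have : P x - G x = (P0 x - G x) - w := by simp only [hP]; abel
    rw [this]
    exact (norm_sub_le _ _).trans_lt (by linarith)
  set Φ : EE → EE := fun y => c + max (e / ‖y - c‖) 1 • (y - c) with hΦ
  have hyc : ∀ y ∈ K, 0 < ‖y - c‖ := fun y hy => norm_pos_iff.2 (sub_ne_zero.2 (by
    rintro rfl; exact hcK hy))
  have hΦc : ContinuousOn Φ K := by
    have : ContinuousOn (fun y => e / ‖y - c‖) K :=
      continuousOn_const.div (by fun_prop) (fun y hy => (hyc y hy).ne')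
    exact continuousOn_const.add ((this.sup continuousOn_const).smul (by fun_prop))
  have hΦ1 : ∀ y ∈ K, e ≤ ‖y - c‖ → Φ y = y := by
    intro y hy h
    have : max (e / ‖y - c‖) 1 = 1 := max_eq_right ((div_le_one (hyc y hy)).2 h)
    simp [hΦ, this]
  have hΦ2 : ∀ y ∈ K, ‖y - c‖ < e → ‖Φ y - c‖ = e := by
    intro y hy h
    have h1 : max (e / ‖y - c‖) 1 = e / ‖y - c‖ :=
      max_eq_left ((one_le_div (hyc y hy)).2 h.le)
    have h2 := hyc y hy
    simp only [hΦ, h1, add_sub_cancel_left]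
    rw [norm_smul, Real.norm_of_nonneg (by positivity)]
    field_simp
  obtain ⟨y, hy, hy0⟩ := stab (P ∘ Φ) (hPc.comp_continuousOn hΦc) (by
    intro y hy
    rcases le_or_gt e ‖y - c‖ with h | h
    · rw [Function.comp, hΦ1 y hy h, norm_sub_rev]
      exact (hPG y).le.trans ((min_le_right _ _).trans (by norm_num))
    · have h1 : ‖G y‖ ≤ 1/10 := heG y (by
        have : y - f 0 = (y - c) + (c - f 0) := by abel
        rw [this]
        exact (norm_add_le _ _).trans (by linarith))
      have h2 : ‖G (Φ y)‖ ≤ 1/10 := heG (Φ y) (by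
        have : Φ y - f 0 = (Φ y - c) + (c - f 0) := by abel
        rw [this]
        have := hΦ2 y hy h
        exact (norm_add_le _ _).trans (by linarith))
      have h3 := hPG (Φ y)
      have h4 : δ ≤ 1/10 := min_le_right _ _
      have : G y - (P ∘ Φ) y = G y - G (Φ y) - (P (Φ y) - G (Φ y)) := by
        simp only [Function.comp]; abel
      rw [this]
      have h5 := norm_sub_le (G y - G (Φ y)) (P (Φ y) - G (Φ y))
      have h6 := norm_sub_le (G y) (G (Φ y))
      linarith)
  rcases le_or_gt e ‖y - c‖ with h | h
  · rw [Function.comp, hΦ1 y hy h] at hy0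
    have h1 := hPG y
    rw [hy0, zero_sub, norm_neg] at h1
    have h2 := hmG y hy h
    have h3 : δ ≤ m := min_le_left _ _
    linarith
  · refine hw ⟨Φ y, ?_, ?_⟩
    · rw [mem_sphere, dist_eq_norm]; exact hΦ2 y hy h
    · have : P0 (Φ y) - w = 0 := hy0
      exact sub_eq_zero.1 this

/-- invariance of domain in Euclidean space -/
theorem iod_euclidean (f : EE → EE) (U : Set EE) (hU : IsOpen U) (hf : ContinuousOn f U)
    (hinj : InjOn f U) : IsOpen (f '' U) := by
  rw [isOpen_iff_mem_nhds]
  rintro _ ⟨x, hx, rfl⟩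
  obtain ⟨r, hr, hrU⟩ := Metric.nhds_basis_closedBall.mem_iff.1 (hU.mem_nhds hx)
  have hmaps : MapsTo (fun z : EE => x + r • z) (closedBall 0 1) U := by
    intro z hz
    apply hrU
    rw [mem_closedBall_zero_iff] at hz
    rw [mem_closedBall, dist_eq_norm, add_sub_cancel_left, norm_smul, Real.norm_of_nonneg hr.le]
    nlinarith
  have h := iod_ball (fun z => f (x + r • z)) (hf.comp (by fun_prop) hmaps) (by
    intro z hz z' hz' h
    have := hinj (hmaps hz) (hmaps hz') h
    simpa [hr.ne'] using this)
  simp only [smul_zero, add_zero] at h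
  refine Filter.mem_of_superset h ?_
  rintro _ ⟨z, hz, rfl⟩
  exact mem_image_of_mem f (hmaps hz)

/-- invariance of domain for topological manifolds -/
theorem iod_charted {M N : Type*} [TopologicalSpace M] [TopologicalSpace N]
    [ChartedSpace EE M] [ChartedSpace EE N] (f : M → N) (U : Set M) (hU : IsOpen U)
    (hf : ContinuousOn f U) (hinj : InjOn f U) : IsOpen (f '' U) := by
  rw [isOpen_iff_mem_nhds]
  rintro _ ⟨x, hx, rfl⟩
  set φ := chartAt EE x
  set χ := chartAt EE (f x)
  set W : Set M := U ∩ f ⁻¹' χ.source with hW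
  have hWo : IsOpen W := hf.isOpen_inter_preimage hU χ.open_source
  have hxW : x ∈ W := ⟨hx, mem_chart_source EE (f x)⟩
  set T : Set EE := φ.target ∩ φ.symm ⁻¹' W with hT
  have hTo : IsOpen T := φ.isOpen_inter_preimage_symm hWo
  have hg : ContinuousOn (fun z => χ (f (φ.symm z))) T := by
    refine χ.continuousOn.comp (hf.comp (φ.continuousOn_symm.mono inter_subset_left) ?_) ?_
    · intro z hz; exact hz.2.1
    · intro z hz; exact hz.2.2
  have hgi : InjOn (fun z => χ (f (φ.symm z))) T := by
    intro z hz z' hz' h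
    have h1 := χ.injOn hz.2.2 hz'.2.2 h
    have h2 := hinj hz.2.1 hz'.2.1 h1
    exact φ.symm.injOn hz.1 hz'.1 h2
  have ho := iod_euclidean _ T hTo hg hgi
  have ho2 := χ.isOpen_inter_preimage ho
  have hxs : x ∈ φ.source := mem_chart_source EE x
  refine Filter.mem_of_superset (ho2.mem_nhds ⟨mem_chart_source EE (f x), φ x, ⟨φ.map_source hxs, ?_⟩, ?_⟩) ?_
  · simpa [φ.left_inv hxs] using hxW
  · simp [φ.left_inv hxs]
  · rintro y ⟨hy1, z, hz, hzy⟩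
    refine ⟨φ.symm z, hz.2.1, ?_⟩
    exact χ.injOn hz.2.2 hy1 hzy

end GS

namespace GS
open Set Metric

/-- a compactly supported homeomorphism of an open subset extends by the identity -/
lemma transplant {E X : Type*} [TopologicalSpace E] [TopologicalSpace X] [T2Space X]
    (j : E → X) (hj : IsOpenEmbedding j) (s : E ≃ₜ E) (K : Set E) (hK : IsCompact K)
    (hs : ∀ e, e ∉ K → s e = e) :
    ∃ θ : X ≃ₜ X, (∀ e, θ (j e) = j (s e)) ∧ ∀ x, x ∉ j '' K → θ x = x := by
  classical
  let ex : (E ≃ₜ E) → X → X := fun s x => if h : ∃ e, j e = x then j (s h.choose) else x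
  have ex1 : ∀ s e, ex s (j e) = j (s e) := by
    intro s e
    have h : ∃ e', j e' = j e := ⟨e, rfl⟩
    have h2 : h.choose = e := hj.injective h.choose_spec
    simp only [ex]
    rw [dif_pos h, h2]
  have ex2 : ∀ s : E ≃ₜ E, (∀ e, e ∉ K → s e = e) → ∀ x, x ∉ j '' K → ex s x = x := by
    intro s hs x hx
    by_cases h : ∃ e, j e = x
    · obtain ⟨e, rfl⟩ := h
      rw [ex1, hs]
      intro he
      exact hx ⟨e, he, rfl⟩
    · simp only [ex]
      rw [dif_neg h]
  have exc : ∀ s : E ≃ₜ E, (∀ e, e ∉ K → s e = e) → Continuous (ex s) := by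
    intro s hs
    rw [continuous_iff_continuousAt]
    intro x
    by_cases h : ∃ e, j e = x
    · obtain ⟨e, rfl⟩ := h
      rw [← hj.continuousAt_iff]
      have : ex s ∘ j = j ∘ s := funext fun e => ex1 s e
      rw [this]
      exact (hj.continuous.comp s.continuous).continuousAt
    · have hcl : IsClosed (j '' K) := (hK.image hj.continuous).isClosed
      have hx : x ∉ j '' K := fun ⟨e, _, he⟩ => h ⟨e, he⟩
      refine continuousAt_id.congr ?_
      filter_upwards [hcl.isOpen_compl.mem_nhds hx] with y hy
      exact (ex2 s hs y hy).symm
  have hs' : ∀ e, e ∉ K → s.symm e = e := fun e he => by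
    rw [Homeomorph.symm_apply_eq, hs e he]
  have hinv : ∀ s t : E ≃ₜ E, (∀ e, t (s e) = e) → ∀ x, ex t (ex s x) = x := by
    intro s t hst x
    by_cases h : ∃ e, j e = x
    · obtain ⟨e, rfl⟩ := h
      rw [ex1, ex1, hst]
    · have : ∀ s, ex s x = x := fun s => by simp only [ex]; rw [dif_neg h]
      rw [this, this]
  refine ⟨⟨⟨ex s, ex s.symm, hinv s s.symm (by simp), hinv s.symm s (by simp)⟩,
    exc s hs, exc s.symm hs'⟩, ?_, ?_⟩
  · intro e; exact ex1 s e
  · intro x hx; exact ex2 s hs x hx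

lemma lift_lemma {T X Y : Type*} [TopologicalSpace T] [TopologicalSpace X] [TopologicalSpace Y]
    [CompactSpace X] [T2Space Y] (F : X → Y) (hF : Continuous F) (u : T → Y) (hu : Continuous u)
    (i : T → X) (hi : Continuous i) (T0 : Set T) (hT0 : IsOpen T0)
    (h0 : ∀ t ∈ T0, F (i t) = u t)
    (h1 : ∀ t, t ∉ T0 → ∃ x, F x = u t ∧ ∀ x', F x' = u t → x' = x) :
    ∃ k : T → X, Continuous k ∧ (∀ t, F (k t) = u t) ∧ ∀ t ∈ T0, k t = i t := by
  classical
  choose g hg hg' using h1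
  let k : T → X := fun t => if h : t ∈ T0 then i t else g t h
  have hk0 : ∀ t ∈ T0, k t = i t := fun t ht => by simp only [k]; rw [dif_pos ht]
  have hk1 : ∀ t (h : t ∉ T0), k t = g t h := fun t ht => by simp only [k]; rw [dif_neg ht]
  have hFk : ∀ t, F (k t) = u t := by
    intro t
    by_cases h : t ∈ T0
    · rw [hk0 t h, h0 t h]
    · rw [hk1 t h, hg t h]
  refine ⟨k, ?_, hFk, hk0⟩
  rw [continuous_iff_continuousAt]
  intro t
  by_cases h : t ∈ T0
  · refine hi.continuousAt.congr ?_
    filter_upwards [hT0.mem_nhds h] with t' ht'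
    exact (hk0 t' ht').symm
  · have hc := hF.isClosedMap.comap_nhds_eq hF (u t)
    have hfib : F ⁻¹' {u t} = {k t} := by
      ext x
      simp only [mem_preimage, mem_singleton_iff]
      constructor
      · intro hx; rw [hk1 t h]; exact hg' t h x hx
      · rintro rfl; exact hFk t
    rw [hfib, nhdsSet_singleton] at hc
    rw [ContinuousAt, ← hc, Filter.tendsto_comap_iff]
    have : F ∘ k = u := funext hFk
    rw [this]
    exact hu.continuousAt

def Shrinks (X : Type*) [TopologicalSpace X] : Prop :=
  ∀ p q : X, p ≠ q → ∀ P ∈ 𝓝 p, ∃ P0 ∈ 𝓝 p, ∀ O ∈ 𝓝 q, ∃ h : X ≃ₜ X,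
    (∀ x, x ∉ P → h x ∈ O) ∧ (∀ᶠ x in 𝓝 q, h x = x) ∧ ∀ x ∈ P0, h x = x

/-- Brown's argument: the fibre over `b` can be shrunk. -/
theorem brown {X Y : Type*} [MetricSpace X] [CompactSpace X] [TopologicalSpace Y] [T2Space Y]
    (hX : Shrinks X) (hY : Shrinks Y)
    (iod : ∀ (V : Set X) (j : V → X), IsOpen V → Continuous j → Function.Injective j →
      IsOpenEmbedding j)
    (F : X → Y) (hF : Continuous F) (hsurj : Function.Surjective F) (a b : Y) (hab : a ≠ b)
    (hinj : ∀ x x', F x = F x' → F x ≠ a → F x ≠ b → x = x')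
    (x0 : X) (hx0a : F x0 ≠ a) (hx0b : F x0 ≠ b) (O' : Set Y) (hO' : O' ∈ 𝓝 b)
    (ε : ℝ) (hε : 0 < ε) :
    ∃ θ : X ≃ₜ X, (∀ x, F x ∉ O' → θ x = x) ∧
      ∀ x x', F x = b → F x' = b → dist (θ x) (θ x') < ε := by
  obtain ⟨q, hq⟩ := hsurj b
  have hx0q : x0 ≠ q := by rintro rfl; exact hx0b hq
  set P : Set X := F ⁻¹' ({a}ᶜ ∩ {b}ᶜ) with hP
  have hPo : IsOpen P := (isOpen_compl_singleton.inter isOpen_compl_singleton).preimage hF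
  have hx0P : x0 ∈ P := ⟨hx0a, hx0b⟩
  obtain ⟨P0, hP0, hs⟩ := hX x0 q hx0q P (hPo.mem_nhds hx0P)
  obtain ⟨C, hC, hCcl, hCsub⟩ := exists_mem_nhds_isClosed_subset
    (Filter.inter_mem (interior_mem_nhds.2 hP0) (hPo.mem_nhds hx0P))
  set V : Set X := Cᶜ with hV
  have hVo : IsOpen V := hCcl.isOpen_compl
  set Q : Set X := (interior C)ᶜ with hQ
  have hVQ : V ⊆ Q := compl_subset_compl.2 interior_subset
  have hQcl : IsClosed Q := isOpen_interior.isClosed_compl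
  have : CompactSpace Q := isCompact_iff_compactSpace.1 hQcl.isCompact
  have hx0Q : x0 ∉ Q := fun h => h (mem_interior_iff_mem_nhds.2 hC)
  have hbV : ∀ x, F x = b → x ∈ V := fun x hx hxC => (hCsub hxC).2.2 hx
  have haV : ∀ x, F x = a → x ∈ V := fun x hx hxC => (hCsub hxC).2.1 hx
  -- the target shrinking
  set R : Set Y := (F '' Q)ᶜ with hR
  have hRo : IsOpen R := (hF.isClosedMap _ hQcl).isOpen_compl
  have hx0R : F x0 ∈ R := by
    rintro ⟨t, ht, hte⟩
    rw [hinj x0 t hte.symm hx0a hx0b] at hx0Q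
    exact hx0Q ht
  obtain ⟨_, _, hh1⟩ := hY (F x0) a hx0a R (hRo.mem_nhds hx0R)
  obtain ⟨h1, h1R, h1a, -⟩ := hh1 {b}ᶜ (isOpen_compl_singleton.mem_nhds hab)
  obtain ⟨O1, hO1, hO1o, haO1⟩ := _root_.eventually_nhds_iff.1 h1a
  have h1Q : ∀ t ∈ Q, h1 (F t) ≠ b := fun t ht => h1R (F t) (fun h => h ⟨t, ht, rfl⟩)
  have h1aa : h1 a = a := hO1 a haO1
  obtain ⟨k, hk, hFk, hk1⟩ := lift_lemma F hF (fun t : Q => h1 (F t)) (by fun_prop)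
    (fun t : Q => (t : X)) continuous_subtype_val {t : Q | F t ∈ O1}
    (hO1o.preimage (hF.comp continuous_subtype_val)) (fun t ht => (hO1 _ ht).symm) (by
      intro t ht
      obtain ⟨x, hx⟩ := hsurj (h1 (F t))
      refine ⟨x, hx, fun x' hx' => hinj x' x (hx'.trans hx.symm) ?_ ?_⟩
      · rw [hx']
        intro h
        rw [← h1aa] at h
        apply ht
        rw [mem_ofPred_eq, h1.injective h]
        exact haO1
      · rw [hx']; exact h1Q t t.2)
  set q0 : Q := ⟨q, hVQ (hbV q hq)⟩ with hq0
  set c := k q0 with hc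
  have hFc : F c = h1 b := by rw [hc, hFk]; simp [hq0, hq]
  have hFca : F c ≠ a := by
    rw [hFc]; intro h; rw [← h1aa] at h; exact hab (h1.injective h).symm
  have hFcb : F c ≠ b := by
    rw [hc, hFk]; exact h1Q _ q0.2
  have hkc : ∀ t, k t = c ↔ F t = b := by
    intro t
    constructor
    · intro h
      have h2 := hFk t
      rw [h, hFc] at h2
      exact (h1.injective h2).symm
    · intro h
      refine (hinj c (k t) ?_ hFca hFcb).symm
      rw [hFc, hFk, h]
  have hkinj : ∀ t t', k t = k t' → k t ≠ c → t = t' := by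
    intro t t' h hne
    have h2 : F t = F t' := h1.injective (by rw [← hFk, ← hFk, h])
    by_cases hta : F t = a
    · have h3 := hk1 t (by rw [mem_ofPred_eq, hta]; exact haO1)
      have h4 := hk1 t' (by rw [mem_ofPred_eq, ← h2, hta]; exact haO1)
      rw [h3, h4] at h
      exact Subtype.ext h
    · exact Subtype.ext (hinj _ _ h2 hta (fun h => hne ((hkc t).2 h)))
  have hrange : range k ∈ 𝓝 c := by
    have hcl : IsClosed (F ⁻¹' (h1 '' (F '' C))) :=
      ((h1.isClosedMap _ (hF.isClosedMap _ hCcl))).preimage hF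
    have hcmem : c ∈ (F ⁻¹' (h1 '' (F '' C)))ᶜ := by
      rintro ⟨_, ⟨t, ht, rfl⟩, h⟩
      rw [hFc] at h
      exact hbV t (h1.injective h) ht
    refine Filter.mem_of_superset (hcl.isOpen_compl.mem_nhds hcmem) ?_
    intro x hx
    obtain ⟨t, ht⟩ := hsurj (h1.symm (F x))
    have ht' : h1 (F t) = F x := by rw [ht]; simp
    have htC : t ∉ C := fun h => hx ⟨_, ⟨t, h, rfl⟩, ht'⟩
    have htQ : t ∈ Q := hVQ htC
    by_cases hxa : F x = a
    · refine ⟨⟨x, hVQ (haV x hxa)⟩, hk1 _ ?_⟩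
      simpa [hxa] using haO1
    · refine ⟨⟨t, htQ⟩, ?_⟩
      have h3 := hFk ⟨t, htQ⟩
      simp only [ht'] at h3
      refine (hinj x _ h3.symm hxa ?_).symm
      rw [← ht']; exact h1Q t htQ
  -- second shrinking
  have hqk : q ∉ range k := by
    rintro ⟨t, ht⟩
    have := hFk t
    rw [ht, hq] at this
    exact h1Q t t.2 this.symm
  have hkcl : IsClosed (range k) := (isCompact_range hk).isClosed
  have hqc : q ≠ c := fun h => hqk (h ▸ mem_range_self q0)
  obtain ⟨_, _, hh2⟩ := hX q c hqc (range k)ᶜ (hkcl.isOpen_compl.mem_nhds hqk)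
  have hO3 : ∀ᶠ z in 𝓝 c, ∀ t : Q, k t = z → (F t ∈ O' ∧ (t : X) ∈ V) := by
    have := hk.isClosedMap.eventually_nhds_fiber (p := fun t : Q => F t ∈ O' ∧ (t : X) ∈ V) c (by
      intro t ht
      have htb : F t = b := (hkc t).1 ht
      have e1 : ∀ᶠ t' : Q in 𝓝 t, F t' ∈ O' :=
        (hF.comp continuous_subtype_val).continuousAt.eventually_mem (by
          simpa [htb] using hO')
      have e2 : ∀ᶠ t' : Q in 𝓝 t, (t' : X) ∈ V :=
        continuous_subtype_val.continuousAt.eventually_mem (hVo.mem_nhds (hbV t htb))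
      exact e1.and e2)
    filter_upwards [this] with z hz t ht using hz t ht
  obtain ⟨h2, h2k, h2c, -⟩ := hh2 _ (Filter.inter_mem hrange hO3)
  have h2k' : ∀ t, h2 (k t) ∈ range k ∧ ∀ t' : Q, k t' = h2 (k t) → (F t' ∈ O' ∧ (t' : X) ∈ V) :=
    fun t => h2k (k t) (fun h => h ⟨t, rfl⟩)
  obtain ⟨O2, hO2, hO2o, hcO2⟩ := _root_.eventually_nhds_iff.1 h2c
  have h2cc : h2 c = c := hO2 c hcO2
  obtain ⟨l, hl, hkl, hl1⟩ := lift_lemma k hk (fun t : Q => h2 (k t)) (by fun_prop)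
    id continuous_id (k ⁻¹' O2) (hO2o.preimage hk) (fun t ht => (hO2 _ ht).symm) (by
      intro t ht
      obtain ⟨x, hx⟩ := (h2k' t).1
      refine ⟨x, hx, fun x' hx' => hkinj x' x (hx'.trans hx.symm) ?_⟩
      rw [hx']
      intro h
      have h := h.trans h2cc.symm
      apply ht
      rw [mem_preimage, h2.injective h]
      exact hcO2)
  have hlinj : Function.Injective l := by
    intro t t' h
    have h3 : k t = k t' := h2.injective (by rw [← hkl, ← hkl, h])
    by_cases htc : k t = c
    · have h4 := hl1 t (by rw [mem_preimage, htc]; exact hcO2)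
      have h5 := hl1 t' (by rw [mem_preimage, ← h3, htc]; exact hcO2)
      rw [h4, h5] at h
      exact h
    · exact hkinj t t' h3 htc
  -- third step
  let j : V → X := fun v => (l ⟨v, hVQ v.2⟩ : X)
  have hjc : Continuous j := by
    apply continuous_subtype_val.comp (hl.comp _)
    exact continuous_subtype_val.subtype_mk _
  have hjinj : Function.Injective j := by
    intro v v' h
    have := hlinj (Subtype.ext h)
    exact Subtype.ext (congrArg (fun t : Q => (t : X)) this)
  have hje := iod V j hVo hjc hjinj
  have hjb : ∀ (x : X) (hx : F x = b), j ⟨x, hbV x hx⟩ = x := by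
    intro x hx
    have := hl1 ⟨x, hVQ (hbV x hx)⟩ (by
      rw [mem_preimage, (hkc _).2 hx]; exact hcO2)
    exact congrArg (fun t : Q => (t : X)) this
  have hjO : ∀ v, F (j v) ∈ O' := fun v => ((h2k' ⟨v, hVQ v.2⟩).2 _ (hkl _)).1
  let qV : V := ⟨q, hbV q hq⟩
  have hOn : (Subtype.val '' {v : V | dist (j v) (j qV) < ε / 2}) ∈ 𝓝 q := by
    have h3 : {v : V | dist (j v) (j qV) < ε / 2} ∈ 𝓝 qV :=
      hjc.continuousAt.eventually_mem (ball_mem_nhds (j qV) (half_pos hε))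
    exact hVo.isOpenMap_subtype_val.image_mem_nhds h3
  obtain ⟨s, hsO, -, hsP0⟩ := hs _ hOn
  have hsC : ∀ x ∈ C, s x = x := fun x hx => hsP0 x (interior_subset (hCsub hx).1)
  have hsV : ∀ x, x ∈ V ↔ s x ∈ V := by
    intro x
    rw [hV, mem_compl_iff, mem_compl_iff, not_iff_not]
    constructor
    · intro hx; rw [hsC x hx]; exact hx
    · intro hx
      have := s.injective (hsC _ hx)
      rwa [this] at hx
  let sV : V ≃ₜ V := s.subtype hsV
  let K : Set V := {v | (v : X) ∉ interior P0}
  have hKc : IsCompact K := by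
    rw [Subtype.isCompact_iff]
    have : (Subtype.val '' K) = (interior P0)ᶜ := by
      ext x
      constructor
      · rintro ⟨v, hv, rfl⟩; exact hv
      · intro hx
        exact ⟨⟨x, fun h => hx (hCsub h).1⟩, hx, rfl⟩
    rw [this]
    exact isOpen_interior.isClosed_compl.isCompact
  obtain ⟨θ, hθ1, hθ2⟩ := transplant j hje sV K hKc (by
    intro v hv
    refine Subtype.ext (hsP0 v ?_)
    by_contra h
    exact hv (fun h' => h (interior_subset h')))
  refine ⟨θ, ?_, ?_⟩
  · intro x hx
    apply hθ2
    rintro ⟨v, _, rfl⟩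
    exact hx (hjO v)
  · have key : ∀ x, F x = b → dist (θ x) (j qV) < ε / 2 := by
      intro x hx
      have h3 := hθ1 ⟨x, hbV x hx⟩
      rw [hjb x hx] at h3
      rw [h3]
      obtain ⟨v, hv, hve⟩ := hsO x (fun h => h.2 hx)
      have : sV ⟨x, hbV x hx⟩ = v := Subtype.ext hve.symm
      rw [this]
      exact hv
    intro x x' hx hx'
    have h3 := key x hx
    have h4 := key x' hx'
    have := dist_triangle_right (θ x) (θ x') (j qV)
    linarith

/-- Bing's shrinking criterion -/
theorem bing {X Y : Type*} [MetricSpace X] [CompactSpace X] [MetricSpace Y] [CompactSpace Y]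
    (Φ : X → Y) (hΦ : Continuous Φ) (hsurj : Function.Surjective Φ) (D : Set X)
    (H : ∀ ε > 0, ∃ h : X ≃ₜ X, (∀ x ∈ D, h x = x) ∧ (∀ x, dist (Φ (h x)) (Φ x) < ε) ∧
      ∀ x x', Φ (h x) = Φ (h x') → dist x x' < ε) :
    ∃ G : X ≃ₜ Y, ∀ x ∈ D, G x = Φ x := by
  let S : Set C(X, Y) := {f | ∃ h : X ≃ₜ X, (∀ x ∈ D, h x = x) ∧ ∀ x, f x = Φ (h x)}
  let Z := closure S
  have hZc : IsClosed Z := isClosed_closure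
  have : CompleteSpace Z := hZc.completeSpace_coe
  have hSne : (⟨Φ, hΦ⟩ : C(X, Y)) ∈ S := ⟨Homeomorph.refl X, by simp, by simp⟩
  have : Nonempty Z := ⟨⟨_, subset_closure hSne⟩⟩
  let W : ℕ → Set Z := fun m => {f | ∀ x x', f.1 x = f.1 x' → dist x x' < 1 / (m + 1 : ℝ)}
  have hWo : ∀ m, IsOpen (W m) := by
    intro m
    let T : Set ((X × X) × C(X, Y)) :=
      {p | 1 / (m + 1 : ℝ) ≤ dist p.1.1 p.1.2 ∧ p.2 p.1.1 = p.2 p.1.2}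
    have hT : IsClosed T := by
      have h1 : IsClosed {p : (X × X) × C(X, Y) | 1 / (m + 1 : ℝ) ≤ dist p.1.1 p.1.2} :=
        isClosed_le (by fun_prop) (by fun_prop)
      have h2 : IsClosed {p : (X × X) × C(X, Y) | p.2 p.1.1 = p.2 p.1.2} :=
        isClosed_eq (by fun_prop) (by fun_prop)
      exact h1.inter h2
    have h1 := isClosedMap_snd_of_compactSpace T hT
    have h2 : W m = Subtype.val ⁻¹' (Prod.snd '' T)ᶜ := by
      ext f
      constructor
      · rintro hf ⟨⟨⟨x, x'⟩, g⟩, ⟨hd, he⟩, hg⟩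
        simp only at hg
        subst hg
        exact absurd (hf x x' he) (not_lt.2 hd)
      · intro hf x x' he
        by_contra hd
        exact hf ⟨⟨⟨x, x'⟩, f.1⟩, ⟨not_lt.1 hd, he⟩, rfl⟩
    rw [h2]
    exact h1.isOpen_compl.preimage continuous_subtype_val
  have hWd : ∀ m, Dense (W m) := by
    intro m
    rw [Metric.dense_iff]
    rintro ⟨f, hf⟩ r hr
    obtain ⟨g, ⟨h, hhD, hh⟩, hgf⟩ := Metric.mem_closure_iff.1 hf (r / 2) (half_pos hr)
    have huc : UniformContinuous h.symm :=
      CompactSpace.uniformContinuous_of_continuous h.symm.continuous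
    obtain ⟨δ, hδ, hδh⟩ := Metric.uniformContinuous_iff.1 huc (1 / (m + 1 : ℝ)) (by positivity)
    obtain ⟨k, hkD, hkΦ, hkf⟩ := H (min δ (r / 4)) (by positivity)
    let g' : C(X, Y) := ⟨fun x => Φ (k (h x)), by fun_prop⟩
    have hg'S : g' ∈ S := ⟨h.trans k, fun x hx => by simp [hhD x hx, hkD x hx], fun x => rfl⟩
    refine ⟨⟨g', subset_closure hg'S⟩, ?_, ?_⟩
    · rw [mem_ball, Subtype.dist_eq]
      have h1 : dist g' g ≤ r / 4 := by
        rw [ContinuousMap.dist_le (by positivity)]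
        intro x
        rw [hh x]
        exact ((hkΦ (h x)).trans_le (min_le_right _ _)).le
      have h2 := dist_triangle g' g f
      rw [dist_comm g f] at h2
      change dist g' f < r
      linarith
    · intro x x' he
      have h1 := hkf (h x) (h x') he
      have h2 := hδh (h1.trans_le (min_le_left _ _))
      simpa using h2
  obtain ⟨f, hf⟩ := (dense_iInter_of_isOpen hWo hWd).nonempty
  rw [mem_iInter] at hf
  have hfinj : Function.Injective f.1 := by
    intro x x' he
    by_contra hne
    obtain ⟨m, hm⟩ := exists_nat_one_div_lt (dist_pos.2 hne)
    exact absurd (hf m x x' he) (not_lt.2 hm.le)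
  have hfsurj : Function.Surjective f.1 := by
    intro y
    have hcl : IsClosed (range f.1) := (isCompact_range f.1.continuous).isClosed
    change y ∈ range f.1
    rw [← hcl.closure_eq, Metric.mem_closure_iff]
    intro e he
    obtain ⟨g, ⟨h, hhD, hh⟩, hgf⟩ := Metric.mem_closure_iff.1 f.2 e he
    obtain ⟨x, hx⟩ := hsurj y
    refine ⟨f.1 (h.symm x), ⟨_, rfl⟩, ?_⟩
    have h1 := ContinuousMap.dist_apply_le_dist (f := f.1) (g := g) (h.symm x)
    rw [hh] at h1
    simp only [Homeomorph.apply_symm_apply, hx] at h1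
    rw [dist_comm]
    linarith
  have hfD : ∀ x ∈ D, f.1 x = Φ x := by
    intro x hx
    have hcl : IsClosed {g : C(X, Y) | g x = Φ x} := isClosed_eq (by fun_prop) (by fun_prop)
    have : S ⊆ {g : C(X, Y) | g x = Φ x} := by
      rintro g ⟨h, hhD, hh⟩
      rw [mem_ofPred_eq, hh, hhD x hx]
    exact closure_minimal this hcl f.2
  let e := Equiv.ofBijective f.1 ⟨hfinj, hfsurj⟩
  exact ⟨Continuous.homeoOfEquivCompactToT2 (f := e) f.1.continuous, fun x hx => hfD x hx⟩

end GS

namespace GS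
open Set Metric

lemma radial_aux {E : Type*} [NormedAddCommGroup E] [NormedSpace ℝ E] (ρ : ℝ → ℝ) (hc : Continuous ρ)
    (a : ℝ) (ha : 0 < a) (h : ∀ r ≤ a, ρ r = r) :
    Continuous (fun w : E => (ρ ‖w‖ / ‖w‖) • w) := by
  rw [continuous_iff_continuousAt]
  intro w
  by_cases hw : w = 0
  · subst hw
    have h1 : (fun w : E => (ρ ‖w‖ / ‖w‖) • w) =ᶠ[𝓝 0] id := by
      filter_upwards [ball_mem_nhds (0 : E) ha] with x hx
      rw [mem_ball_zero_iff] at hx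
      rw [h _ hx.le]
      by_cases hx0 : x = 0
      · simp [hx0]
      · rw [div_self (norm_ne_zero_iff.2 hx0), one_smul]; rfl
    exact continuousAt_id.congr h1.symm
  · have : ‖w‖ ≠ 0 := norm_ne_zero_iff.2 hw
    fun_prop (disch := assumption)

lemma radial_norm {E : Type*} [NormedAddCommGroup E] [NormedSpace ℝ E] (ρ : ℝ → ℝ) (w : E)
    (h0 : ρ 0 = 0) (hρ : 0 ≤ ρ ‖w‖) : ‖(ρ ‖w‖ / ‖w‖) • w‖ = ρ ‖w‖ := by
  by_cases hw : w = 0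
  · simp [hw, h0]
  · have : ‖w‖ ≠ 0 := norm_ne_zero_iff.2 hw
    rw [norm_smul, norm_div, norm_norm, Real.norm_of_nonneg hρ, div_mul_cancel₀ _ this]

lemma radial_inv {E : Type*} [NormedAddCommGroup E] [NormedSpace ℝ E] (ρ : ℝ ≃o ℝ)
    (h0 : ρ 0 = 0) (w : E) :
    (ρ.symm ‖(ρ ‖w‖ / ‖w‖) • w‖ / ‖(ρ ‖w‖ / ‖w‖) • w‖) • ((ρ ‖w‖ / ‖w‖) • w) = w := by
  have h1 : 0 ≤ ρ ‖w‖ := by rw [← h0]; exact ρ.monotone (norm_nonneg w)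
  rw [radial_norm ρ w h0 h1]
  by_cases hw : w = 0
  · simp [hw]
  · have h2 : 0 < ‖w‖ := norm_pos_iff.2 hw
    have h3 : 0 < ρ ‖w‖ := by rw [← h0]; exact ρ.strictMono h2
    rw [ρ.symm_apply_apply, smul_smul]
    have : ‖w‖ / ρ ‖w‖ * (ρ ‖w‖ / ‖w‖) = 1 := by field_simp
    rw [this, one_smul]

lemma exists_rho (a R : ℝ) (ha : 0 < a) (haR : a < R) :
    ∃ ρ : ℝ ≃o ℝ, (∀ r ≤ a, ρ r = r) ∧ (∀ r, 2 * R ≤ r → ρ r = r) ∧ ∀ r ≤ R, ρ r ≤ 2 * a := by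
  have hR : 0 < R := ha.trans haR
  have hm : 0 < a / R := div_pos ha hR
  have hm1 : a / R < 1 := (div_lt_one hR).2 haR
  have hmR : a / R * R = a := div_mul_cancel₀ _ hR.ne'
  set m := a / R
  let f : ℝ → ℝ := fun r => max (min r (a + m * (r - a))) (min r (2 * r - 2 * R))
  have hf1 : ∀ r ≤ a, f r = r := by
    intro r hr
    have : r ≤ a + m * (r - a) := by nlinarith
    simp only [f]
    rw [min_eq_left this]
    exact max_eq_left (min_le_left _ _)
  have hf2 : ∀ r, 2 * R ≤ r → f r = r := by
    intro r hr
    simp only [f]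
    rw [min_eq_left (by linarith : r ≤ 2 * r - 2 * R)]
    exact max_eq_right (min_le_left _ _)
  have hf3 : ∀ r ≤ R, f r ≤ 2 * a := by
    intro r hr
    apply max_le
    · apply (min_le_right _ _).trans; nlinarith
    · apply (min_le_right _ _).trans; nlinarith
  have hc : Continuous f := by fun_prop
  have hs : StrictMono f := by
    have h1 : StrictMono (fun r : ℝ => a + m * (r - a)) := by
      intro x y hxy; simp only; nlinarith
    have h2 : StrictMono (fun r : ℝ => 2 * r - 2 * R) := by
      intro x y hxy; simp only; linarith
    intro x y hxy
    exact max_lt_max (min_lt_min hxy (h1 hxy)) (min_lt_min hxy (h2 hxy))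
  have hsurj : Function.Surjective f := by
    apply hc.surjective
    · apply Filter.tendsto_id.congr'
      filter_upwards [Filter.eventually_ge_atTop (2 * R)] with r hr
      exact (hf2 r hr).symm
    · apply Filter.tendsto_id.congr'
      filter_upwards [Filter.eventually_le_atBot a] with r hr
      exact (hf1 r hr).symm
  exact ⟨hs.orderIsoOfSurjective f hsurj, hf1, hf2, hf3⟩

lemma radial_homeo {E : Type*} [NormedAddCommGroup E] [NormedSpace ℝ E] (v : E) (a R : ℝ)
    (ha : 0 < a) (haR : a < R) : ∃ s : E ≃ₜ E, (∀ e ∈ closedBall v a, s e = e) ∧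
      (∀ e, e ∉ closedBall v (2 * R) → s e = e) ∧
      ∀ e ∈ closedBall v R, s e ∈ closedBall v (2 * a) := by
  obtain ⟨ρ, h1, h2, h3⟩ := exists_rho a R ha haR
  have h0 : ρ 0 = 0 := h1 0 ha.le
  have h1' : ∀ r ≤ a, ρ.symm r = r := fun r hr => by
    rw [OrderIso.symm_apply_eq]; exact (h1 r hr).symm
  let s : E ≃ₜ E :=
    { toFun := fun w => (ρ ‖w‖ / ‖w‖) • w
      invFun := fun w => (ρ.symm ‖w‖ / ‖w‖) • w
      left_inv := fun w => radial_inv ρ h0 w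
      right_inv := fun w => radial_inv ρ.symm (h1' 0 ha.le) w
      continuous_toFun := radial_aux ρ ρ.continuous a ha h1
      continuous_invFun := radial_aux ρ.symm ρ.symm.continuous a ha h1' }
  have hs : ∀ w, s w = (ρ ‖w‖ / ‖w‖) • w := fun w => rfl
  have hsid : ∀ w, ρ ‖w‖ = ‖w‖ → s w = w := by
    intro w hw
    rw [hs, hw]
    by_cases hx0 : w = 0
    · simp [hx0]
    · rw [div_self (norm_ne_zero_iff.2 hx0), one_smul]
  refine ⟨(Homeomorph.subRight v).trans (s.trans (Homeomorph.addRight v)), ?_, ?_, ?_⟩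
  · intro e he
    rw [mem_closedBall_iff_norm] at he
    simp [hsid _ (h1 _ he)]
  · intro e he
    rw [mem_closedBall_iff_norm] at he
    simp [hsid _ (h2 _ (not_le.1 he).le)]
  · intro e he
    rw [mem_closedBall_iff_norm] at he ⊢
    have := h3 _ he
    have h4 : 0 ≤ ρ ‖e - v‖ := by rw [← h0]; exact ρ.monotone (norm_nonneg _)
    simpa [hs, radial_norm ρ (e - v) h0 h4] using this

lemma shrinks_of {E X : Type*} [NormedAddCommGroup E] [NormedSpace ℝ E] [ProperSpace E]
    [TopologicalSpace X] [CompactSpace X] [T2Space X]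
    (H : ∀ p : X, ∃ j : E → X, IsOpenEmbedding j ∧ range j = {p}ᶜ) : Shrinks X := by
  intro p q hpq P hP
  obtain ⟨j, hj, hr⟩ := H p
  obtain ⟨v, hv⟩ : q ∈ range j := by rw [hr]; exact hpq.symm
  obtain ⟨R, hR0, hR⟩ : ∃ R, 0 < R ∧ ∀ e, j e ∉ interior P → e ∈ closedBall v R := by
    have hc : IsCompact (interior P)ᶜ := isOpen_interior.isClosed_compl.isCompact
    have hc2 : IsCompact (j ⁻¹' (interior P)ᶜ) := by
      apply hj.isInducing.isCompact_preimage' hc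
      rw [hr, compl_subset_compl, singleton_subset_iff]
      exact mem_interior_iff_mem_nhds.2 hP
    obtain ⟨R, hR⟩ := hc2.isBounded.subset_closedBall v
    exact ⟨max R 1, by positivity, fun e he => closedBall_subset_closedBall (le_max_left _ _) (hR he)⟩
  have hKc : IsCompact (closedBall v (2 * R)) := isCompact_closedBall _ _
  refine ⟨(j '' closedBall v (2 * R))ᶜ, ?_, ?_⟩
  · apply (hKc.image hj.continuous).isClosed.isOpen_compl.mem_nhds
    rintro ⟨e, _, he⟩
    have : j e ∈ ({p} : Set X)ᶜ := hr ▸ mem_range_self e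
    exact this he
  · intro O hO
    have hO1 : j ⁻¹' O ∈ 𝓝 v := hj.continuous.continuousAt (hv ▸ hO)
    obtain ⟨δ, hδ, hδO⟩ := Metric.nhds_basis_closedBall.mem_iff.1 hO1
    let a := min (δ / 2) (R / 2)
    have ha : 0 < a := by positivity
    have haR : a < R := lt_of_le_of_lt (min_le_right _ _) (by linarith)
    have haδ : 2 * a ≤ δ := by have := min_le_left (δ / 2) (R / 2); simp only [a]; linarith
    obtain ⟨s, hs1, hs2, hs3⟩ := radial_homeo v a R ha haR
    obtain ⟨θ, hθ1, hθ2⟩ := transplant j hj s _ hKc hs2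
    refine ⟨θ, ?_, ?_, ?_⟩
    · intro x hx
      obtain ⟨e, rfl⟩ : x ∈ range j := by
        rw [hr]; rintro rfl; exact hx (mem_of_mem_nhds hP)
      rw [hθ1]
      have := hs3 e (hR e (fun h => hx (interior_subset h)))
      exact hδO (closedBall_subset_closedBall haδ this)
    · have : j '' closedBall v a ∈ 𝓝 q := by
        rw [← hv]; exact hj.isOpenMap.image_mem_nhds (closedBall_mem_nhds v ha)
      filter_upwards [this]
      rintro _ ⟨e, he, rfl⟩
      rw [hθ1, hs1 e he]
    · intro x hx
      exact hθ2 x hx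

local notation "𝕊" d => (sphere (0 : EuclideanSpace ℝ (Fin (d + 1))) 1)

lemma exists_stereo (d : ℕ) (p : 𝕊 d) :
    ∃ j : EuclideanSpace ℝ (Fin d) → 𝕊 d, IsOpenEmbedding j ∧ range j = {p}ᶜ := by
  have := Fact.mk (@finrank_euclideanSpace_fin ℝ _ (d + 1))
  refine ⟨(stereographic' d p).symm, (stereographic' d p).symm.isOpenEmbedding (by simp), ?_⟩
  have h : ∀ x ∈ ({p} : Set (𝕊 d))ᶜ, x ∈ range (stereographic' d p).symm := by
    intro x hx
    exact ⟨stereographic' d p x, (stereographic' d p).left_inv (by simpa using hx)⟩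
  refine Subset.antisymm ?_ h
  rintro _ ⟨e, rfl⟩
  have := (stereographic' d p).map_target (x := e) (by simp)
  simpa using this

lemma shrinks_sphere (d : ℕ) : Shrinks (𝕊 d) := shrinks_of (exists_stereo d)

lemma iod_sphere (d : ℕ) (V : Set (𝕊 d)) (j : V → 𝕊 d) (hV : IsOpen V) (hc : Continuous j)
    (hinj : Function.Injective j) : IsOpenEmbedding j := by
  refine IsOpenEmbedding.of_continuous_injective_isOpenMap hc hinj ?_
  intro U hU
  exact iod_charted (n := d) (M := (⟨V, hV⟩ : TopologicalSpace.Opens (𝕊 d))) j U hU hc.continuousOn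
    hinj.injOn

/-- the open collar is open -/
lemma collar_open (d : ℕ) (ψ : (sphere (0 : EuclideanSpace ℝ (Fin d)) 1) × (Icc (-1 : ℝ) 1) → 𝕊 d)
    (hψ : IsEmbedding ψ) : IsOpen (ψ '' {p | (p.2 : ℝ) ∈ Ioo (-1 : ℝ) 1}) := by
  classical
  rcases isEmpty_or_nonempty (sphere (0 : EuclideanSpace ℝ (Fin d)) 1) with he | ⟨⟨x0⟩⟩
  · have : {p : (sphere (0 : EuclideanSpace ℝ (Fin d)) 1) × (Icc (-1 : ℝ) 1) |
      (p.2 : ℝ) ∈ Ioo (-1 : ℝ) 1} = ∅ := by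
      ext p; exact (he.false p.1).elim
    rw [this]; simp
  let U : Set (EuclideanSpace ℝ (Fin d)) := {y | 1 < ‖y‖ ∧ ‖y‖ < 3}
  have hU : IsOpen U := (isOpen_lt continuous_const continuous_norm).inter
    (isOpen_lt continuous_norm continuous_const)
  have hn : ∀ y ∈ U, ‖y‖ ≠ 0 := fun y hy => by have := hy.1; linarith
  let g : U → (sphere (0 : EuclideanSpace ℝ (Fin d)) 1) × (Icc (-1 : ℝ) 1) := fun y =>
    (⟨(‖(y : EuclideanSpace ℝ (Fin d))‖)⁻¹ • (y : EuclideanSpace ℝ (Fin d)), by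
      rw [mem_sphere_zero_iff_norm, norm_smul, norm_inv, norm_norm, inv_mul_cancel₀ (hn y y.2)]⟩,
      ⟨‖(y : EuclideanSpace ℝ (Fin d))‖ - 2, by
        constructor <;> linarith [y.2.1, y.2.2]⟩)
  have hg : Continuous g := by
    apply Continuous.prodMk
    · apply Continuous.subtype_mk
      have h1 : Continuous fun y : U => (‖(y : EuclideanSpace ℝ (Fin d))‖)⁻¹ :=
        (continuous_subtype_val.norm).inv₀ (fun y => hn y y.2)
      exact h1.smul continuous_subtype_val
    · apply Continuous.subtype_mk
      fun_prop
  have hginj : Function.Injective g := by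
    intro y y' h
    have h1 := congrArg (fun p => (p.2 : ℝ)) h
    have h2 := congrArg (fun p => (p.1 : EuclideanSpace ℝ (Fin d))) h
    simp only [g] at h1 h2
    have h3 : ‖(y : EuclideanSpace ℝ (Fin d))‖ = ‖(y' : EuclideanSpace ℝ (Fin d))‖ := by linarith
    rw [h3] at h2
    exact Subtype.ext (smul_right_injective _ (inv_ne_zero (hn y' y'.2)) h2)
  have hgr : range g = {p | (p.2 : ℝ) ∈ Ioo (-1 : ℝ) 1} := by
    ext p
    constructor
    · rintro ⟨y, rfl⟩
      change _ ∈ Ioo (-1 : ℝ) 1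
      constructor <;> simp only [g] <;> linarith [y.2.1, y.2.2]
    · intro hp
      have hp1 : ‖(p.1 : EuclideanSpace ℝ (Fin d))‖ = 1 := mem_sphere_zero_iff_norm.1 p.1.2
      have hp2 : 0 < (p.2 : ℝ) + 2 := by linarith [hp.1]
      have hnn : ‖((p.2 : ℝ) + 2) • (p.1 : EuclideanSpace ℝ (Fin d))‖ = (p.2 : ℝ) + 2 := by
        rw [norm_smul, hp1, mul_one, Real.norm_of_nonneg hp2.le]
      refine ⟨⟨((p.2 : ℝ) + 2) • p.1, ?_, ?_⟩, ?_⟩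
      · rw [hnn]; linarith [hp.1]
      · rw [hnn]; linarith [hp.2]
      · apply Prod.ext
        · apply Subtype.ext
          simp only [g]
          rw [hnn, smul_smul, inv_mul_cancel₀ hp2.ne', one_smul]
        · apply Subtype.ext
          simp only [g]
          rw [hnn]; ring
  have := iod_charted (n := d) (M := (⟨U, hU⟩ : TopologicalSpace.Opens (EuclideanSpace ℝ (Fin d))))
    (N := 𝕊 d) (ψ ∘ g) univ isOpen_univ (hψ.continuous.comp hg).continuousOn
    (hψ.injective.comp hginj).injOn
  rwa [image_univ, range_comp, hgr] at this

end GS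

namespace GS
open Set Metric

local notation "𝕊" d => (sphere (0 : EuclideanSpace ℝ (Fin (d + 1))) 1)

/-- coordinates: height and the rest -/
noncomputable def mk {d : ℕ} (x : EuclideanSpace ℝ (Fin d)) (s : ℝ) : EuclideanSpace ℝ (Fin (d + 1)) :=
  WithLp.toLp 2 (Fin.cons s (fun i => x i))

noncomputable def tl {d : ℕ} (y : EuclideanSpace ℝ (Fin (d + 1))) : EuclideanSpace ℝ (Fin d) :=
  WithLp.toLp 2 (fun i => y i.succ)

@[simp] lemma mk_zero {d : ℕ} (x : EuclideanSpace ℝ (Fin d)) (s : ℝ) : mk x s 0 = s := rfl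

@[simp] lemma tl_mk {d : ℕ} (x : EuclideanSpace ℝ (Fin d)) (s : ℝ) : tl (mk x s) = x := rfl

@[simp] lemma mk_tl {d : ℕ} (y : EuclideanSpace ℝ (Fin (d + 1))) : mk (tl y) (y 0) = y := by
  ext i
  refine Fin.cases ?_ (fun i => ?_) i <;> rfl

lemma mk_inj {d : ℕ} {x x' : EuclideanSpace ℝ (Fin d)} {s s' : ℝ} (h : mk x s = mk x' s') :
    x = x' ∧ s = s' :=
  ⟨by rw [← tl_mk x s, h, tl_mk], by rw [← mk_zero x s, h, mk_zero]⟩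

lemma norm_mk {d : ℕ} (x : EuclideanSpace ℝ (Fin d)) (s : ℝ) : ‖mk x s‖ ^ 2 = s ^ 2 + ‖x‖ ^ 2 := by
  rw [EuclideanSpace.norm_sq_eq, EuclideanSpace.norm_sq_eq, Fin.sum_univ_succ]
  simp [mk]

lemma norm_tl {d : ℕ} (y : EuclideanSpace ℝ (Fin (d + 1))) : ‖y‖ ^ 2 = y 0 ^ 2 + ‖tl y‖ ^ 2 := by
  rw [← norm_mk, mk_tl]

lemma sphere_eq {d : ℕ} (y : 𝕊 d) :
    (y : EuclideanSpace ℝ (Fin (d + 1))) 0 ^ 2 + ‖tl (y : EuclideanSpace ℝ (Fin (d + 1)))‖ ^ 2 = 1 := by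
  rw [← norm_tl, mem_sphere_zero_iff_norm.1 y.2, one_pow]

lemma mk_mem {d : ℕ} (x : EuclideanSpace ℝ (Fin d)) (s : ℝ) (h : s ^ 2 + ‖x‖ ^ 2 = 1) :
    mk x s ∈ 𝕊 d := by
  rw [mem_sphere_zero_iff_norm]
  have := norm_mk x s
  rw [h] at this
  exact (pow_eq_one_iff_of_nonneg (norm_nonneg _) two_ne_zero).1 this

lemma continuous_mk {d : ℕ} :
    Continuous (fun p : EuclideanSpace ℝ (Fin d) × ℝ => mk p.1 p.2) := by
  apply (PiLp.continuous_toLp 2 _).comp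
  apply continuous_pi
  intro i
  refine Fin.cases ?_ (fun i => ?_) i
  · exact continuous_snd
  · simp only [Fin.cons_succ]; fun_prop

@[fun_prop] lemma continuous_tl {d : ℕ} : Continuous (tl (d := d)) := by
  unfold tl
  fun_prop

lemma mk_cont {Z : Type*} [TopologicalSpace Z] {d : ℕ} {f : Z → EuclideanSpace ℝ (Fin d)} {g : Z → ℝ}
    (hf : Continuous f) (hg : Continuous g) : Continuous (fun z => mk (f z) (g z)) :=
  continuous_mk.comp (hf.prodMk hg)

/-- open hemisphere -/
def hemi (d : ℕ) (ε : ℝ) : Set (𝕊 d) := {y | 0 < ε * (y : EuclideanSpace ℝ (Fin (d + 1))) 0}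
def chemi (d : ℕ) (ε : ℝ) : Set (𝕊 d) := {y | 0 ≤ ε * (y : EuclideanSpace ℝ (Fin (d + 1))) 0}

lemma sqrt_id {ε s r : ℝ} (hε : ε ^ 2 = 1) (h : s ^ 2 + r ^ 2 = 1) (hs : 0 ≤ ε * s) :
    ε * √(1 - r ^ 2) = s := by
  have : 1 - r ^ 2 = (ε * s) ^ 2 := by rw [mul_pow, hε]; linarith
  rw [this, Real.sqrt_sq hs, ← mul_assoc, ← pow_two, hε, one_mul]

lemma sqrt_mem {d : ℕ} {ε : ℝ} (hε : ε ^ 2 = 1) (x : EuclideanSpace ℝ (Fin d)) (hx : ‖x‖ ≤ 1) :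
    mk x (ε * √(1 - ‖x‖ ^ 2)) ∈ 𝕊 d := by
  apply mk_mem
  rw [mul_pow, hε, Real.sq_sqrt (by nlinarith [norm_nonneg x])]
  ring

noncomputable def chemiHomeo (d : ℕ) (ε : ℝ) (hε : ε ^ 2 = 1) :
    chemi d ε ≃ₜ closedBall (0 : EuclideanSpace ℝ (Fin d)) 1 where
  toFun y := ⟨tl y.1.1, by
    rw [mem_closedBall_zero_iff]
    nlinarith [sphere_eq y.1, sq_nonneg ((y.1 : EuclideanSpace ℝ (Fin (d + 1))) 0),
      norm_nonneg (tl (y.1 : EuclideanSpace ℝ (Fin (d + 1))))]⟩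
  invFun x := ⟨⟨mk x.1 (ε * √(1 - ‖x.1‖ ^ 2)), sqrt_mem hε x.1 (mem_closedBall_zero_iff.1 x.2)⟩, by
    change 0 ≤ ε * mk x.1 (ε * √(1 - ‖x.1‖ ^ 2)) 0
    rw [mk_zero, ← mul_assoc, ← pow_two, hε, one_mul]
    exact Real.sqrt_nonneg _⟩
  left_inv y := by
    apply Subtype.ext; apply Subtype.ext
    change mk (tl y.1.1) (ε * √(1 - ‖tl y.1.1‖ ^ 2)) = y.1.1
    rw [sqrt_id hε (sphere_eq y.1) y.2, mk_tl]
  right_inv x := rfl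
  continuous_toFun := by
    apply Continuous.subtype_mk
    fun_prop
  continuous_invFun := by
    apply Continuous.subtype_mk
    apply Continuous.subtype_mk
    apply mk_cont <;> fun_prop

noncomputable def hemiHomeo (d : ℕ) (ε : ℝ) (hε : ε ^ 2 = 1) :
    hemi d ε ≃ₜ ball (0 : EuclideanSpace ℝ (Fin d)) 1 where
  toFun y := ⟨tl y.1.1, by
    rw [mem_ball_zero_iff]
    have h1 := y.2
    have h2 : 0 < (ε * (y.1 : EuclideanSpace ℝ (Fin (d + 1))) 0) ^ 2 := pow_pos h1 2
    rw [mul_pow, hε] at h2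
    nlinarith [sphere_eq y.1, norm_nonneg (tl (y.1 : EuclideanSpace ℝ (Fin (d + 1))))]⟩
  invFun x := ⟨⟨mk x.1 (ε * √(1 - ‖x.1‖ ^ 2)), sqrt_mem hε x.1 (mem_ball_zero_iff.1 x.2).le⟩, by
    change 0 < ε * mk x.1 (ε * √(1 - ‖x.1‖ ^ 2)) 0
    rw [mk_zero, ← mul_assoc, ← pow_two, hε, one_mul]
    have := mem_ball_zero_iff.1 x.2
    exact Real.sqrt_pos.2 (by nlinarith [norm_nonneg x.1])⟩
  left_inv y := by
    apply Subtype.ext; apply Subtype.ext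
    change mk (tl y.1.1) (ε * √(1 - ‖tl y.1.1‖ ^ 2)) = y.1.1
    rw [sqrt_id hε (sphere_eq y.1) (le_of_lt y.2), mk_tl]
  right_inv x := rfl
  continuous_toFun := by
    apply Continuous.subtype_mk
    fun_prop
  continuous_invFun := by
    apply Continuous.subtype_mk
    apply Continuous.subtype_mk
    apply mk_cont <;> fun_prop

lemma closure_hemi (d : ℕ) (ε : ℝ) (hε : ε ^ 2 = 1) : closure (hemi d ε) = chemi d ε := by
  apply Subset.antisymm
  · apply closure_minimal
    · intro y hy
      exact (show 0 < ε * (y : EuclideanSpace ℝ (Fin (d + 1))) 0 from hy).le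
    · exact isClosed_le continuous_const (by fun_prop)
  · intro y hy
    suffices hs : (y : EuclideanSpace ℝ (Fin (d + 1))) ∈ closure (Subtype.val '' hemi d ε) by
      rw [Topology.IsEmbedding.subtypeVal.closure_eq_preimage_closure_image]
      exact hs
    have hyn : ‖tl y.1‖ ≤ 1 := by
      nlinarith [sphere_eq y, sq_nonneg ((y : EuclideanSpace ℝ (Fin (d + 1))) 0),
      norm_nonneg (tl (y : EuclideanSpace ℝ (Fin (d + 1))))]
    let c : ℝ → EuclideanSpace ℝ (Fin (d + 1)) := fun t =>
      mk ((1 - t) • tl y.1) (ε * √(1 - ‖(1 - t) • tl y.1‖ ^ 2))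
    have hc : Continuous c := by apply mk_cont <;> fun_prop
    have hc0 : c 0 = y := by
      simp only [c, sub_zero, one_smul]
      rw [sqrt_id hε (sphere_eq y) hy, mk_tl]
    have ht : Filter.Tendsto c (𝓝[>] 0) (𝓝 (y : EuclideanSpace ℝ (Fin (d + 1)))) := by
      rw [← hc0]; exact hc.continuousWithinAt
    apply mem_closure_of_tendsto ht
    have h1 : Ioo (0 : ℝ) 1 ∈ 𝓝[>] (0 : ℝ) := Ioo_mem_nhdsGT one_pos
    filter_upwards [h1] with t ht
    have hn : ‖(1 - t) • tl y.1‖ < 1 := by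
      rw [norm_smul, Real.norm_of_nonneg (by linarith [ht.2])]
      nlinarith [ht.1, ht.2, norm_nonneg (tl y.1)]
    refine ⟨⟨c t, sqrt_mem hε _ hn.le⟩, ?_, rfl⟩
    change 0 < ε * mk ((1 - t) • tl y.1) (ε * √(1 - ‖(1 - t) • tl y.1‖ ^ 2)) 0
    rw [mk_zero, ← mul_assoc, ← pow_two, hε, one_mul]
    exact Real.sqrt_pos.2 (by nlinarith [norm_nonneg ((1 - t) • tl y.1)])

theorem conclude (d : ℕ) (S : Set (𝕊 d)) (G : (𝕊 d) ≃ₜ (𝕊 d))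
    (hG : ∀ x, x ∈ S ↔ (G x : EuclideanSpace ℝ (Fin (d + 1))) 0 = 0) :
    ∃ U V : Set (𝕊 d),
      IsOpen U ∧ IsOpen V ∧ Disjoint U V ∧
      IsConnected U ∧ IsConnected V ∧
      U ∪ V = Sᶜ ∧
      Nonempty (↥U ≃ₜ ↥(Metric.ball (0 : EuclideanSpace ℝ (Fin d)) 1)) ∧
      Nonempty (↥V ≃ₜ ↥(Metric.ball (0 : EuclideanSpace ℝ (Fin d)) 1)) ∧
      Nonempty (↥(closure U) ≃ₜ ↥(Metric.closedBall (0 : EuclideanSpace ℝ (Fin d)) 1)) ∧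
      Nonempty (↥(closure V) ≃ₜ ↥(Metric.closedBall (0 : EuclideanSpace ℝ (Fin d)) 1)) := by
  have hop : ∀ ε, IsOpen (G ⁻¹' hemi d ε) := fun ε =>
    (isOpen_lt continuous_const (by fun_prop)).preimage G.continuous
  have hho : ∀ ε : ℝ, ε ^ 2 = 1 →
      Nonempty (↥(G ⁻¹' hemi d ε) ≃ₜ ↥(Metric.ball (0 : EuclideanSpace ℝ (Fin d)) 1)) := fun ε hε =>
    ⟨(G.sets rfl).trans (hemiHomeo d ε hε)⟩
  have hco : ∀ ε : ℝ, ε ^ 2 = 1 → IsConnected (G ⁻¹' hemi d ε) := by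
    intro ε hε
    obtain ⟨e⟩ := hho ε hε
    have h1 : IsConnected (ball (0 : EuclideanSpace ℝ (Fin d)) 1) :=
      ⟨⟨0, by simp⟩, (convex_ball _ _).isPreconnected⟩
    have := isConnected_iff_connectedSpace.1 h1
    exact isConnected_iff_connectedSpace.2 (e.symm.surjective.connectedSpace e.symm.continuous)
  have hcl : ∀ ε : ℝ, ε ^ 2 = 1 → Nonempty (↥(closure (G ⁻¹' hemi d ε)) ≃ₜ
      ↥(Metric.closedBall (0 : EuclideanSpace ℝ (Fin d)) 1)) := by
    intro ε hε
    have : closure (G ⁻¹' hemi d ε) = G ⁻¹' chemi d ε := by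
      rw [← closure_hemi d ε hε, G.preimage_closure]
    exact ⟨(G.sets this).trans (chemiHomeo d ε hε)⟩
  refine ⟨G ⁻¹' hemi d 1, G ⁻¹' hemi d (-1), hop 1, hop (-1), ?_, hco 1 (by norm_num),
    hco (-1) (by norm_num), ?_, hho 1 (by norm_num), hho (-1) (by norm_num), hcl 1 (by norm_num),
    hcl (-1) (by norm_num)⟩
  · rw [Set.disjoint_left]
    intro x hx hx'
    change 0 < 1 * (G x : EuclideanSpace ℝ (Fin (d + 1))) 0 at hx
    change 0 < -1 * (G x : EuclideanSpace ℝ (Fin (d + 1))) 0 at hx'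
    linarith
  · ext x
    rw [mem_compl_iff, hG x]
    change (0 < 1 * (G x : EuclideanSpace ℝ (Fin (d + 1))) 0 ∨
      0 < -1 * (G x : EuclideanSpace ℝ (Fin (d + 1))) 0) ↔ _
    constructor
    · rintro (h | h) h0 <;> rw [h0] at h <;> simp at h
    · intro h
      rcases lt_or_gt_of_ne h with h | h
      · right; linarith
      · left; linarith

end GS

namespace GS
open Set Metric

local notation "𝕊" d => (sphere (0 : EuclideanSpace ℝ (Fin (d + 1))) 1)

lemma exp_eq_one_int {r : ℝ} (h : Circle.exp r = 1) : ∃ n : ℤ, r = n * (2 * Real.pi) := by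
  rw [← Circle.exp_zero, Circle.exp_eq_exp] at h
  obtain ⟨m, hm⟩ := h
  exact ⟨m, by rw [hm, zero_add]⟩

lemma const_of_exp {X : Type*} [TopologicalSpace X] (s : Set X) (hs : IsPreconnected s)
    (u : X → ℝ) (hu : ContinuousOn u s) (h : ∀ x ∈ s, Circle.exp (u x) = 1) :
    ∀ x ∈ s, ∀ y ∈ s, u x = u y := by
  have key : ∀ x ∈ s, ∀ y ∈ s, ¬ u x < u y := by
    intro x hx y hy hlt
    obtain ⟨n, hn⟩ := exp_eq_one_int (h x hx)
    obtain ⟨m, hm⟩ := exp_eq_one_int (h y hy)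
    have hpi := Real.pi_pos
    have h1 : n < m := by
      by_contra hh
      have : (m : ℝ) ≤ n := by exact_mod_cast not_lt.1 hh
      nlinarith
    have h2 : (n : ℝ) + 1 ≤ m := by exact_mod_cast h1
    obtain ⟨z, hz, hzu⟩ := hs.intermediate_value hx hy hu
      (show u x + Real.pi ∈ Icc (u x) (u y) from ⟨by linarith, by nlinarith⟩)
    obtain ⟨k, hk⟩ := exp_eq_one_int (h z hz)
    have h3 : (2 * k : ℝ) = 2 * n + 1 := by
      apply mul_right_cancel₀ hpi.ne'
      linarith
    have h4 : 2 * k = 2 * n + 1 := by exact_mod_cast h3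
    omega
  intro x hx y hy
  exact le_antisymm (not_lt.1 (key y hy x hx)) (not_lt.1 (key x hx y hy))

lemma one_lt_rank {d : ℕ} (hd : 2 ≤ d) : 1 < Module.rank ℝ (EuclideanSpace ℝ (Fin d)) := by
  rw [← Module.finrank_eq_rank, finrank_euclideanSpace_fin]
  exact_mod_cast hd

lemma lift_E {d : ℕ} (f : EuclideanSpace ℝ (Fin d) → Circle) (hf : Continuous f) :
    ∃ g : EuclideanSpace ℝ (Fin d) → ℝ, Continuous g ∧ ∀ x, Circle.exp (g x) = f x := by
  obtain ⟨e, he⟩ := Circle.exp_surjective (f 0)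
  obtain ⟨F, ⟨_, hF⟩, _⟩ := Circle.isCoveringMap_exp.existsUnique_continuousMap_lifts ⟨f, hf⟩ 0 e he
  exact ⟨F, F.continuous, fun x => congrFun hF x⟩

lemma lift_sphere {d : ℕ} (hd : 2 ≤ d) (f : (𝕊 d) → Circle) (hf : Continuous f) :
    ∃ g : (𝕊 d) → ℝ, Continuous g ∧ ∀ x, Circle.exp (g x) = f x := by
  classical
  have hfact := Fact.mk (@finrank_euclideanSpace_fin ℝ _ (d + 1))
  have hloc : ∀ p : 𝕊 d, ∃ g : (𝕊 d) → ℝ, ContinuousOn g {p}ᶜ ∧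
      ∀ x, x ≠ p → Circle.exp (g x) = f x := by
    intro p
    have hc : Continuous (stereographic' d p).symm :=
      ((stereographic' d p).symm.isOpenEmbedding (by simp)).continuous
    obtain ⟨g, hg, hge⟩ := lift_E (fun e => f ((stereographic' d p).symm e)) (hf.comp hc)
    refine ⟨fun x => g (stereographic' d p x), ?_, ?_⟩
    · apply hg.comp_continuousOn
      have := (stereographic' d p).continuousOn
      simpa using this
    · intro x hx
      rw [hge, (stereographic' d p).left_inv (by simpa using hx)]
  let p : 𝕊 d := ⟨mk 0 1, mk_mem _ _ (by simp)⟩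
  let q : 𝕊 d := ⟨mk 0 (-1), mk_mem _ _ (by simp)⟩
  have hpq : p ≠ q := by
    intro h
    have := (mk_inj (congrArg Subtype.val h)).2
    norm_num at this
  obtain ⟨g1, hg1, hg1e⟩ := hloc p
  obtain ⟨g2, hg2, hg2e⟩ := hloc q
  have hconn : IsConnected (({p} : Set (𝕊 d))ᶜ ∩ {q}ᶜ) := by
    obtain ⟨j, hj, hr⟩ := exists_stereo d p
    obtain ⟨v, hv⟩ : q ∈ range j := by rw [hr]; exact hpq.symm
    have : (({p} : Set (𝕊 d))ᶜ ∩ {q}ᶜ) = j '' {v}ᶜ := by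
      rw [← hr, ← hv]
      ext x
      constructor
      · rintro ⟨⟨e, rfl⟩, h⟩
        exact ⟨e, fun he => h (congrArg j he), rfl⟩
      · rintro ⟨e, he, rfl⟩
        exact ⟨mem_range_self e, fun h => he (hj.injective h)⟩
    rw [this]
    apply IsConnected.image _ _ hj.continuous.continuousOn
    apply isConnected_compl_singleton_of_one_lt_rank
    exact one_lt_rank hd
  obtain ⟨⟨z, hz⟩, hpre⟩ := hconn
  have hcst := const_of_exp _ hpre (fun x => g1 x - g2 x)
    ((hg1.mono inter_subset_left).sub (hg2.mono inter_subset_right)) (by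
      intro x hx
      rw [Circle.exp_sub, hg1e x hx.1, hg2e x hx.2, div_self'])
  set c := g1 z - g2 z with hc
  have hcc : ∀ x, x ≠ p → x ≠ q → g1 x = g2 x + c := by
    intro x hx hx'
    have := hcst x ⟨hx, hx'⟩ z hz
    linarith
  have hec : Circle.exp c = 1 := by
    rw [hc, Circle.exp_sub, hg1e z hz.1, hg2e z hz.2, div_self']
  refine ⟨fun x => if x = p then g2 x + c else g1 x, ?_, ?_⟩
  · rw [continuous_iff_continuousAt]
    intro x
    by_cases hx : x = p
    · have h1 : {q}ᶜ ∈ 𝓝 x := isOpen_compl_singleton.mem_nhds (by rw [hx]; exact hpq)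
      have h2 : ContinuousAt (fun x => g2 x + c) x := (hg2.continuousAt h1).add continuousAt_const
      apply h2.congr
      filter_upwards [h1] with y hy
      split_ifs with h
      · rfl
      · exact (hcc y h hy).symm
    · have h1 : {p}ᶜ ∈ 𝓝 x := isOpen_compl_singleton.mem_nhds hx
      apply (hg1.continuousAt h1).congr
      filter_upwards [h1] with y hy
      rw [if_neg (show ¬ y = p from hy)]
  · intro x
    simp only
    split_ifs with h
    · rw [Circle.exp_add, hec, mul_one, hg2e x (by rw [h]; exact hpq)]
    · exact hg1e x h

lemma glue {X Y Z : Type*} [TopologicalSpace X] [TopologicalSpace Y] [TopologicalSpace Z]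
    (ψ : Z → X) (hψ : IsClosedEmbedding ψ) (W : Set X) (hW : IsOpen W) (hWr : W ⊆ range ψ)
    (F : X → Y) (h1 : Continuous (F ∘ ψ)) (h2 : ContinuousOn F Wᶜ) : Continuous F := by
  refine continuous_iff_isClosed.2 fun B hB => ?_
  have h3 : F ⁻¹' B = ψ '' ((F ∘ ψ) ⁻¹' B) ∪ (Wᶜ ∩ F ⁻¹' B) := by
    ext x
    constructor
    · intro hx
      by_cases hxW : x ∈ W
      · obtain ⟨z, rfl⟩ := hWr hxW
        exact Or.inl ⟨z, hx, rfl⟩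
      · exact Or.inr ⟨hxW, hx⟩
    · rintro (⟨z, hz, rfl⟩ | h)
      · exact hz
      · exact h.2
  rw [h3]
  exact (hψ.isClosedMap _ (hB.preimage h1)).union
    (h2.preimage_isClosed_of_isClosed hW.isClosed_compl hB)

abbrev Collar (d : ℕ) := (sphere (0 : EuclideanSpace ℝ (Fin d)) 1) × (Icc (-1 : ℝ) 1)

def openCollar (d : ℕ) : Set (Collar d) := {p | (p.2 : ℝ) ∈ Ioo (-1 : ℝ) 1}

lemma exists_g {d : ℕ} (hd : 2 ≤ d) (ψ : Collar d → 𝕊 d) (hψ : IsEmbedding ψ) :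
    ∃ g : (𝕊 d) → ℝ, Continuous g ∧ (∀ p, g (ψ p) = p.2) ∧
      ∀ y, y ∉ ψ '' openCollar d → 1 ≤ g y ∨ g y ≤ -1 := by
  classical
  have hcl : IsClosedEmbedding ψ := hψ.continuous.isClosedEmbedding hψ.injective
  have hWo : IsOpen (ψ '' openCollar d) := collar_open d ψ hψ
  have hpi := Real.pi_pos
  let f : (𝕊 d) → Circle := fun y => if h : ∃ p ∈ openCollar d, ψ p = y then
    Circle.exp (Real.pi * (h.choose.2 + 1)) else 1
  have hfψ : ∀ p, f (ψ p) = Circle.exp (Real.pi * (p.2 + 1)) := by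
    intro p
    by_cases hp : p ∈ openCollar d
    · have h : ∃ p' ∈ openCollar d, ψ p' = ψ p := ⟨p, hp, rfl⟩
      simp only [f]
      rw [dif_pos h, hψ.injective h.choose_spec.2]
    · have h : ¬ ∃ p' ∈ openCollar d, ψ p' = ψ p := by
        rintro ⟨p', hp', h⟩
        rw [hψ.injective h] at hp'
        exact hp hp'
      simp only [f]
      rw [dif_neg h]
      have h2 := p.2.2
      by_cases h3 : (p.2 : ℝ) < 1
      · have h4 : (p.2 : ℝ) = -1 := by
          by_contra h5
          exact hp ⟨lt_of_le_of_ne h2.1 (Ne.symm h5), h3⟩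
        rw [h4]; simp
      · have h4 : (p.2 : ℝ) = 1 := le_antisymm h2.2 (not_lt.1 h3)
        rw [h4, show Real.pi * (1 + 1) = 2 * Real.pi by ring, Circle.exp_two_pi]
  have hfW : ∀ y, y ∉ ψ '' openCollar d → f y = 1 := fun y hy => dif_neg hy
  have hf : Continuous f := by
    apply glue ψ hcl _ hWo (image_subset_range _ _)
    · have : f ∘ ψ = fun p => Circle.exp (Real.pi * (p.2 + 1)) := funext hfψ
      rw [this]; fun_prop
    · exact continuousOn_const.congr (fun y hy => hfW y hy)
  obtain ⟨g, hg, hge⟩ := lift_sphere hd f hf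
  have hconn : IsPreconnected (univ : Set (Collar d)) := by
    have h1 : PreconnectedSpace (sphere (0 : EuclideanSpace ℝ (Fin d)) 1) :=
      isPreconnected_iff_preconnectedSpace.1 (isPreconnected_sphere (one_lt_rank hd) 0 1)
    have h2 : PreconnectedSpace (Icc (-1 : ℝ) 1) :=
      isPreconnected_iff_preconnectedSpace.1 isPreconnected_Icc
    exact isPreconnected_univ
  have hexp : ∀ p : Collar d, Circle.exp (g (ψ p) - Real.pi * (p.2 + 1)) = 1 := by
    intro p
    rw [Circle.exp_sub, hge, hfψ, div_self']
  have hcst := const_of_exp univ hconn (fun p => g (ψ p) - Real.pi * (p.2 + 1))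
    (Continuous.continuousOn (by have := hψ.continuous; fun_prop)) (fun p _ => hexp p)
  obtain ⟨x0, hx0⟩ : (sphere (0 : EuclideanSpace ℝ (Fin d)) 1).Nonempty :=
    (isConnected_sphere (one_lt_rank hd) 0 zero_le_one).nonempty
  let p0 : Collar d := (⟨x0, hx0⟩, ⟨0, by norm_num⟩)
  obtain ⟨n, hn⟩ := exp_eq_one_int (hexp p0)
  have hc : ∀ p, g (ψ p) = Real.pi * (p.2 + 1) + n * (2 * Real.pi) := by
    intro p
    have := hcst p (mem_univ _) p0 (mem_univ _)
    rw [hn] at this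
    linarith
  refine ⟨fun y => g y / Real.pi - 2 * n - 1, by fun_prop, ?_, ?_⟩
  · intro p
    simp only
    rw [hc p]
    field_simp
    ring
  · intro y hy
    obtain ⟨m, hm⟩ := exp_eq_one_int ((hge y).trans (hfW y hy))
    have h1 : g y / Real.pi - 2 * n - 1 = 2 * (m - n) - 1 := by
      rw [hm]; field_simp
    simp only
    rw [h1]
    rcases le_or_gt m n with h | h
    · right
      have : (m : ℝ) ≤ n := by exact_mod_cast h
      linarith
    · left
      have : (n : ℝ) + 1 ≤ m := by exact_mod_cast h
      linarith

lemma exists_F {d : ℕ} (hd : 2 ≤ d) (ψ : Collar d → 𝕊 d) (hψ : IsEmbedding ψ) :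
    ∃ F : (𝕊 d) → 𝕊 d, Continuous F ∧ (∀ p : Collar d, (F (ψ p)).1 =
      mk (Real.cos (Real.pi * p.2 / 2) • p.1.1) (Real.sin (Real.pi * p.2 / 2))) ∧
      ∀ y, y ∉ ψ '' openCollar d → (F y).1 = mk 0 1 ∨ (F y).1 = mk 0 (-1) := by
  classical
  have hcl : IsClosedEmbedding ψ := hψ.continuous.isClosedEmbedding hψ.injective
  have hWo : IsOpen (ψ '' openCollar d) := collar_open d ψ hψ
  have hpi := Real.pi_pos
  obtain ⟨g, hg, hgψ, hgW⟩ := exists_g hd ψ hψ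
  let Ψ : Collar d → EuclideanSpace ℝ (Fin (d + 1)) := fun p =>
    mk (Real.cos (Real.pi * p.2 / 2) • p.1.1) (Real.sin (Real.pi * p.2 / 2))
  have hΨ : Continuous Ψ := by
    apply mk_cont <;> fun_prop
  let f : (𝕊 d) → EuclideanSpace ℝ (Fin (d + 1)) := fun y =>
    if h : ∃ p ∈ openCollar d, ψ p = y then Ψ h.choose else mk 0 (max (-1) (min 1 (g y)))
  have hfψ : ∀ p, f (ψ p) = Ψ p := by
    intro p
    by_cases hp : p ∈ openCollar d
    · have h : ∃ p' ∈ openCollar d, ψ p' = ψ p := ⟨p, hp, rfl⟩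
      simp only [f]
      rw [dif_pos h, hψ.injective h.choose_spec.2]
    · have h : ¬ ∃ p' ∈ openCollar d, ψ p' = ψ p := by
        rintro ⟨p', hp', h⟩
        rw [hψ.injective h] at hp'
        exact hp hp'
      simp only [f]
      rw [dif_neg h, hgψ]
      simp only [Ψ]
      have h2 := p.2.2
      by_cases h3 : (p.2 : ℝ) < 1
      · have h4 : (p.2 : ℝ) = -1 := by
          by_contra h5
          exact hp ⟨lt_of_le_of_ne h2.1 (Ne.symm h5), h3⟩
        rw [h4, show Real.pi * -1 / 2 = -(Real.pi / 2) by ring, Real.cos_neg, Real.sin_neg]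
        simp
      · have h4 : (p.2 : ℝ) = 1 := le_antisymm h2.2 (not_lt.1 h3)
        rw [h4, mul_one]
        simp
  have hfW : ∀ y, y ∉ ψ '' openCollar d → f y = mk 0 (max (-1) (min 1 (g y))) :=
    fun y hy => dif_neg hy
  have hfW' : ∀ y, y ∉ ψ '' openCollar d → f y = mk 0 1 ∨ f y = mk 0 (-1) := by
    intro y hy
    rw [hfW y hy]
    rcases hgW y hy with h | h
    · left; rw [min_eq_left h, max_eq_right (by norm_num)]
    · right; rw [min_eq_right (by linarith), max_eq_left h]
  have hf : Continuous f := by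
    apply glue ψ hcl _ hWo (image_subset_range _ _)
    · have : f ∘ ψ = Ψ := funext hfψ
      rw [this]; exact hΨ
    · have h1 : Continuous fun y => mk (0 : EuclideanSpace ℝ (Fin d)) (max (-1) (min 1 (g y))) := by
        apply mk_cont <;> fun_prop
      exact h1.continuousOn.congr (fun y hy => hfW y hy)
  have hmem : ∀ y, f y ∈ 𝕊 d := by
    intro y
    by_cases hy : y ∈ ψ '' openCollar d
    · obtain ⟨p, _, rfl⟩ := hy
      rw [hfψ]
      apply mk_mem
      rw [norm_smul, mem_sphere_zero_iff_norm.1 p.1.2, mul_one, Real.norm_eq_abs, sq_abs,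
        Real.sin_sq_add_cos_sq]
    · rcases hfW' y hy with h | h <;> rw [h] <;> apply mk_mem <;> simp
  exact ⟨fun y => ⟨f y, hmem y⟩, hf.subtype_mk _, hfψ, hfW'⟩

end GS

namespace GS
open Set Metric

local notation "𝕊" d => (sphere (0 : EuclideanSpace ℝ (Fin (d + 1))) 1)

lemma stays {X : Type*} [TopologicalSpace X] (θ : X ≃ₜ X) (A : Set X) (h : ∀ x, x ∉ A → θ x = x)
    (x : X) (hx : x ∈ A) : θ x ∈ A := by
  by_contra h'
  have := θ.injective (h _ h')
  rw [this] at h'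
  exact h' hx

lemma combine {X Y : Type*} [MetricSpace X] [CompactSpace X] [MetricSpace Y] [CompactSpace Y]
    (hX : Shrinks X) (hY : Shrinks Y)
    (iod : ∀ (V : Set X) (j : V → X), IsOpen V → Continuous j → Function.Injective j →
      IsOpenEmbedding j)
    (F : X → Y) (hF : Continuous F) (hsurj : Function.Surjective F) (a b : Y) (hab : a ≠ b)
    (hinj : ∀ x x', F x = F x' → F x ≠ a → F x ≠ b → x = x')
    (D : Set X) (x0 : X) (hx0 : x0 ∈ D) (A B : Set Y) (hA : A ∈ 𝓝 a) (hB : B ∈ 𝓝 b)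
    (hAB : Disjoint A B) (hDA : ∀ x ∈ D, F x ∉ A) (hDB : ∀ x ∈ D, F x ∉ B) :
    ∃ G : X ≃ₜ Y, ∀ x ∈ D, G x = F x := by
  have haA := mem_of_mem_nhds hA
  have hbB := mem_of_mem_nhds hB
  have hx0a : F x0 ≠ a := fun h => hDA x0 hx0 (h ▸ haA)
  have hx0b : F x0 ≠ b := fun h => hDB x0 hx0 (h ▸ hbB)
  apply bing F hF hsurj D
  intro ε hε
  have hε2 := half_pos hε
  set A' := A ∩ ball a (ε / 2) with hA'
  set B' := B ∩ ball b (ε / 2) with hB'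
  have haA' : a ∈ A' := ⟨haA, mem_ball_self hε2⟩
  have hbB' : b ∈ B' := ⟨hbB, mem_ball_self hε2⟩
  have hdis : ∀ y, y ∈ A' → y ∉ B' := fun y h1 h2 => Set.disjoint_left.1 hAB h1.1 h2.1
  obtain ⟨θ, hθ1, hθ2⟩ := brown hX hY iod F hF hsurj a b hab hinj x0 hx0a hx0b B'
    (Filter.inter_mem hB (ball_mem_nhds _ hε2)) ε hε
  obtain ⟨η, hη1, hη2⟩ := brown hX hY iod F hF hsurj b a hab.symm
    (fun x x' h h1 h2 => hinj x x' h h2 h1) x0 hx0b hx0a A'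
    (Filter.inter_mem hA (ball_mem_nhds _ hε2)) ε hε
  have hθs : ∀ x, F x ∈ B' → F (θ x) ∈ B' := stays θ (F ⁻¹' B') hθ1
  have hηs : ∀ x, F x ∈ A' → F (η x) ∈ A' := stays η (F ⁻¹' A') hη1
  have hval1 : ∀ x, F x ∈ A' → θ (η x) = η x := fun x hx => hθ1 _ (hdis _ (hηs x hx))
  have hval2 : ∀ x, F x ∉ A' → θ (η x) = θ x := fun x hx => by rw [hη1 x hx]
  have hsmall : ∀ x, dist (F x) (F (θ (η x))) < ε := by
    intro x
    by_cases h1 : F x ∈ A'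
    · rw [hval1 x h1]
      have h2 := mem_ball.1 h1.2
      have h3 := mem_ball.1 (hηs x h1).2
      linarith [dist_triangle_right (F x) (F (η x)) a]
    · rw [hval2 x h1]
      by_cases h4 : F x ∈ B'
      · have h2 := mem_ball.1 h4.2
        have h3 := mem_ball.1 (hθs x h4).2
        linarith [dist_triangle_right (F x) (F (θ x)) b]
      · rw [hθ1 x h4, dist_self]; exact hε
  refine ⟨(η.trans θ).symm, ?_, ?_, ?_⟩
  · intro x hx
    rw [Homeomorph.symm_apply_eq]
    change x = θ (η x)
    rw [hval2 x (fun h => hDA x hx h.1), hθ1 x (fun h => hDB x hx h.1)]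
  · intro x
    have := hsmall ((η.trans θ).symm x)
    rwa [show θ (η ((η.trans θ).symm x)) = x from (η.trans θ).apply_symm_apply x] at this
  · intro x x' h
    obtain ⟨y, rfl⟩ := (η.trans θ).surjective x
    obtain ⟨y', rfl⟩ := (η.trans θ).surjective x'
    rw [Homeomorph.symm_apply_apply, Homeomorph.symm_apply_apply] at h
    change dist (θ (η y)) (θ (η y')) < ε
    by_cases h1 : F y = a
    · have h1' : F y' = a := h ▸ h1
      rw [hval1 y (h1 ▸ haA'), hval1 y' (h1' ▸ haA')]
      exact hη2 y y' h1 h1'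
    · by_cases h2 : F y = b
      · have h2' : F y' = b := h ▸ h2
        rw [hval2 y (fun h' => hdis _ h' (h2 ▸ hbB')), hval2 y' (fun h' => hdis _ h' (h2' ▸ hbB'))]
        exact hθ2 y y' h2 h2'
      · rw [hinj y y' h h1 h2, dist_self]; exact hε

theorem exists_G {d : ℕ} (hd : 2 ≤ d) (ψ : Collar d → 𝕊 d) (hψ : IsEmbedding ψ) :
    ∃ G : (𝕊 d) ≃ₜ (𝕊 d), ∀ y, y ∈ (range fun x => ψ (x, ⟨0, by norm_num⟩)) ↔
      (G y : EuclideanSpace ℝ (Fin (d + 1))) 0 = 0 := by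
  have hpi := Real.pi_pos
  obtain ⟨F, hF, hFψ, hFW⟩ := exists_F hd ψ hψ
  obtain ⟨x0, hx0⟩ : (sphere (0 : EuclideanSpace ℝ (Fin d)) 1).Nonempty :=
    (isConnected_sphere (one_lt_rank hd) 0 zero_le_one).nonempty
  let N : 𝕊 d := ⟨mk 0 1, mk_mem _ _ (by simp)⟩
  let S : 𝕊 d := ⟨mk 0 (-1), mk_mem _ _ (by simp)⟩
  have hNS : N ≠ S := by
    intro h
    have := (mk_inj (congrArg Subtype.val h)).2
    norm_num at this
  set D := (range fun x => ψ (x, ⟨0, by norm_num⟩)) with hD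
  have hFD : ∀ x, (F (ψ (x, ⟨0, by norm_num⟩))).1 = mk x.1 0 := by
    intro x
    rw [hFψ]
    simp
  have hFD0 : ∀ y ∈ D, (F y).1 0 = 0 := by
    rintro _ ⟨x, rfl⟩
    simp only
    rw [hFD]; simp
  have hsurj : Function.Surjective F := by
    intro y
    have hy := sphere_eq y
    obtain ⟨x, hx⟩ : ∃ x : sphere (0 : EuclideanSpace ℝ (Fin d)) 1, tl y.1 = ‖tl y.1‖ • x.1 := by
      by_cases h : tl y.1 = 0
      · exact ⟨⟨x0, hx0⟩, by rw [h]; simp⟩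
      · have h' : ‖tl y.1‖ ≠ 0 := norm_ne_zero_iff.2 h
        refine ⟨⟨(‖tl y.1‖)⁻¹ • tl y.1, ?_⟩, ?_⟩
        · rw [mem_sphere_zero_iff_norm, norm_smul, norm_inv, norm_norm, inv_mul_cancel₀ h']
        · rw [smul_smul, mul_inv_cancel₀ h', one_smul]
    have hb : -1 ≤ y.1 0 ∧ y.1 0 ≤ 1 := by
      constructor <;> nlinarith [sq_nonneg ‖tl y.1‖]
    have h1 := Real.neg_pi_div_two_le_arcsin (y.1 0)
    have h2 := Real.arcsin_le_pi_div_two (y.1 0)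
    let t : ℝ := 2 * Real.arcsin (y.1 0) / Real.pi
    have ht : Real.pi * t / 2 = Real.arcsin (y.1 0) := by
      simp only [t]; field_simp
    have htm : t ∈ Icc (-1 : ℝ) 1 := by
      constructor
      · simp only [t]; rw [le_div_iff₀ hpi]; linarith
      · simp only [t]; rw [div_le_iff₀ hpi]; linarith
    refine ⟨ψ (x, ⟨t, htm⟩), Subtype.ext ?_⟩
    rw [hFψ]
    simp only
    rw [ht, Real.sin_arcsin hb.1 hb.2, Real.cos_arcsin,
      show 1 - y.1 0 ^ 2 = ‖tl y.1‖ ^ 2 by linarith, Real.sqrt_sq (norm_nonneg _), ← hx, mk_tl]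
  have hinW : ∀ y, F y ≠ N → F y ≠ S → ∃ p ∈ openCollar d, ψ p = y := by
    intro y h1 h2
    by_contra h
    rcases hFW y h with h3 | h3
    · exact h1 (Subtype.ext h3)
    · exact h2 (Subtype.ext h3)
  have hinj : ∀ x x', F x = F x' → F x ≠ N → F x ≠ S → x = x' := by
    intro y y' h h1 h2
    obtain ⟨p, hp, rfl⟩ := hinW y h1 h2
    obtain ⟨p', hp', rfl⟩ := hinW y' (h ▸ h1) (h ▸ h2)
    have h3 := congrArg Subtype.val h
    rw [hFψ, hFψ] at h3
    obtain ⟨h4, h5⟩ := mk_inj h3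
    have hp1 : -1 < (p.2 : ℝ) := hp.1
    have hp2 : (p.2 : ℝ) < 1 := hp.2
    have hp1' : -1 < (p'.2 : ℝ) := hp'.1
    have hp2' : (p'.2 : ℝ) < 1 := hp'.2
    have h6 : Real.pi * p.2 / 2 = Real.pi * p'.2 / 2 := by
      apply Real.injOn_sin _ _ h5
      · constructor <;> nlinarith
      · constructor <;> nlinarith
    have h7 : (p.2 : ℝ) = p'.2 := by
      apply mul_left_cancel₀ hpi.ne'
      linarith
    have h8 : 0 < Real.cos (Real.pi * p.2 / 2) :=
      Real.cos_pos_of_mem_Ioo ⟨by nlinarith, by nlinarith⟩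
    rw [← h6] at h4
    have h9 : p.1.1 = p'.1.1 := smul_right_injective _ h8.ne' h4
    congr 1
    exact Prod.ext (Subtype.ext h9) (Subtype.ext h7)
  have hc0 : Continuous fun y : 𝕊 d => y.1 0 := by fun_prop
  obtain ⟨G, hG⟩ := combine (shrinks_sphere d) (shrinks_sphere d) (iod_sphere d) F hF hsurj N S hNS
    hinj D _ ⟨⟨x0, hx0⟩, rfl⟩ {y | 0 < y.1 0} {y | y.1 0 < 0}
    ((isOpen_lt continuous_const hc0).mem_nhds (by change (0 : ℝ) < 1; norm_num))
    ((isOpen_lt hc0 continuous_const).mem_nhds (by change (-1 : ℝ) < 0; norm_num))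
    (Set.disjoint_left.2 fun y h1 h2 => lt_asymm (show 0 < y.1 0 from h1) h2)
    (fun y hy h => (lt_irrefl (0 : ℝ)) (by
      have h : 0 < (F y).1 0 := h
      rwa [hFD0 y hy] at h))
    (fun y hy h => (lt_irrefl (0 : ℝ)) (by
      have h : (F y).1 0 < 0 := h
      rwa [hFD0 y hy] at h))
  refine ⟨G, fun y => ⟨fun hy => by rw [hG y hy]; exact hFD0 y hy, fun hy => ?_⟩⟩
  have h1 := sphere_eq (G y)
  rw [hy] at h1
  have h2 : ‖tl (G y).1‖ = 1 := by
    refine (pow_eq_one_iff_of_nonneg (norm_nonneg _) two_ne_zero).1 ?_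
    linarith
  let x : sphere (0 : EuclideanSpace ℝ (Fin d)) 1 := ⟨tl (G y).1, mem_sphere_zero_iff_norm.2 h2⟩
  refine ⟨x, G.injective (Subtype.ext ?_)⟩
  simp only
  rw [hG _ ⟨x, rfl⟩, hFD]
  conv_rhs => rw [← mk_tl (G y).1, hy]

end GS

namespace GS
open Set Metric

local notation "𝕊" d => (sphere (0 : EuclideanSpace ℝ (Fin (d + 1))) 1)

lemma param (d : ℕ) (p q : 𝕊 d) (h : p ≠ q) :
    ∃ e : OnePoint (EuclideanSpace ℝ (Fin d)) ≃ₜ (𝕊 d), e OnePoint.infty = p ∧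
      e ((0 : EuclideanSpace ℝ (Fin d)) : OnePoint (EuclideanSpace ℝ (Fin d))) = q := by
  obtain ⟨j, hj, hr⟩ := exists_stereo d p
  obtain ⟨v, hv⟩ : q ∈ range j := by rw [hr]; exact h.symm
  have hj2 : IsEmbedding (j ∘ Homeomorph.addRight v) :=
    hj.isEmbedding.comp (Homeomorph.addRight v).isEmbedding
  have hr2 : range (j ∘ Homeomorph.addRight v) = {p}ᶜ := by
    rw [(Homeomorph.addRight v).surjective.range_comp, hr]
  refine ⟨OnePoint.equivOfIsEmbeddingOfRangeEq p _ hj2 hr2, ?_, ?_⟩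
  · rfl
  · change j (0 + v) = q
    rw [zero_add, hv]

lemma two_transitive (d : ℕ) (p q p' q' : 𝕊 d) (h : p ≠ q) (h' : p' ≠ q') :
    ∃ G : (𝕊 d) ≃ₜ (𝕊 d), G p = p' ∧ G q = q' := by
  obtain ⟨e, h1, h2⟩ := param d p q h
  obtain ⟨e', h1', h2'⟩ := param d p' q' h'
  refine ⟨e.symm.trans e', ?_, ?_⟩
  · rw [← h1, ← h1']; simp
  · rw [← h2, ← h2']; simp

theorem exists_G1 (ψ : Collar 1 → 𝕊 1) (hψ : IsEmbedding ψ) :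
    ∃ G : (𝕊 1) ≃ₜ (𝕊 1), ∀ y, y ∈ (range fun x => ψ (x, ⟨0, by norm_num⟩)) ↔
      (G y : EuclideanSpace ℝ (Fin (1 + 1))) 0 = 0 := by
  let e : sphere (0 : EuclideanSpace ℝ (Fin 1)) 1 := ⟨EuclideanSpace.single 0 1, by simp⟩
  have hmk : ∀ x : sphere (0 : EuclideanSpace ℝ (Fin 1)) 1, mk x.1 0 ∈ 𝕊 1 := by
    intro x
    apply mk_mem
    rw [mem_sphere_zero_iff_norm.1 x.2]; norm_num
  have hne : e ≠ -e := by
    intro h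
    have h1 := congrArg (fun x => x.1 0) h
    simp [e] at h1
    norm_num at h1
  have hall : ∀ x : sphere (0 : EuclideanSpace ℝ (Fin 1)) 1, x = e ∨ x = -e := by
    intro x
    have h1 := mem_sphere_zero_iff_norm.1 x.2
    rw [EuclideanSpace.norm_eq] at h1
    simp [Real.sqrt_sq_eq_abs] at h1
    rcases (abs_eq zero_le_one).1 h1 with h | h
    · left
      apply Subtype.ext; ext i
      rw [Subsingleton.elim i 0, h]; simp [e]
    · right
      apply Subtype.ext; ext i
      rw [Subsingleton.elim i 0, h]; simp [e]
  obtain ⟨G, hG1, hG2⟩ := two_transitive 1 (ψ (e, ⟨0, by norm_num⟩)) (ψ (-e, ⟨0, by norm_num⟩))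
    ⟨_, hmk e⟩ ⟨_, hmk (-e)⟩ (fun h => hne (congrArg Prod.fst (hψ.injective h)))
    (fun h => hne (Subtype.ext (mk_inj (congrArg Subtype.val h)).1))
  have hG : ∀ x, (G (ψ (x, ⟨0, by norm_num⟩))).1 = mk x.1 0 := by
    intro x
    rcases hall x with rfl | rfl
    · rw [hG1]
    · rw [hG2]
  refine ⟨G, fun y => ⟨?_, fun hy => ?_⟩⟩
  · rintro ⟨x, rfl⟩
    simp only
    rw [hG, mk_zero]
  have h1 := sphere_eq (G y)
  rw [hy] at h1
  have h2 : ‖tl (G y).1‖ = 1 := by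
    refine (pow_eq_one_iff_of_nonneg (norm_nonneg _) two_ne_zero).1 ?_
    linarith
  let x : sphere (0 : EuclideanSpace ℝ (Fin 1)) 1 := ⟨tl (G y).1, mem_sphere_zero_iff_norm.2 h2⟩
  refine ⟨x, G.injective (Subtype.ext ?_)⟩
  simp only
  rw [hG]
  conv_rhs => rw [← mk_tl (G y).1, hy]

theorem exists_G0 (ψ : Collar 0 → 𝕊 0) :
    ∃ G : (𝕊 0) ≃ₜ (𝕊 0), ∀ y, y ∈ (range fun x => ψ (x, ⟨0, by norm_num⟩)) ↔
      (G y : EuclideanSpace ℝ (Fin (0 + 1))) 0 = 0 := by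
  refine ⟨Homeomorph.refl _, fun y => ⟨?_, fun hy => ?_⟩⟩
  · rintro ⟨x, rfl⟩
    have h1 := mem_sphere_zero_iff_norm.1 x.2
    rw [Subsingleton.elim x.1 0, norm_zero] at h1
    norm_num at h1
  · exfalso
    have h1 := sphere_eq y
    have hy : y.1 0 = 0 := hy
    rw [hy, Subsingleton.elim (tl y.1) 0, norm_zero] at h1
    norm_num at h1

end GS

/-- generalized Schönflies: a tame embedded sphere of codimension one in
`S^d` — given via a bicollar, i.e. an embedding `ψ̃ : S^{d-1} × [-1,1] → S^d`, the
sphere being the image of `ψ̃(·,0)` — separates `S^d` into exactly two connected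
components, each homeomorphic to an open `d`-ball, and the closure of each component is
homeomorphic to a closed `d`-ball. -/
theorem generalized_schoenflies (d : ℕ)
    (ψ : ↥(Metric.sphere (0 : EuclideanSpace ℝ (Fin d)) 1) × ↥(Set.Icc (-1 : ℝ) 1) →
      ↥(Metric.sphere (0 : EuclideanSpace ℝ (Fin (d + 1))) 1))
    (hψ : IsEmbedding ψ) :
    ∃ U V : Set ↥(Metric.sphere (0 : EuclideanSpace ℝ (Fin (d + 1))) 1),
      IsOpen U ∧ IsOpen V ∧ Disjoint U V ∧
      IsConnected U ∧ IsConnected V ∧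
      U ∪ V = (Set.range fun x => ψ (x, ⟨0, by norm_num⟩))ᶜ ∧
      Nonempty (↥U ≃ₜ ↥(Metric.ball (0 : EuclideanSpace ℝ (Fin d)) 1)) ∧
      Nonempty (↥V ≃ₜ ↥(Metric.ball (0 : EuclideanSpace ℝ (Fin d)) 1)) ∧
      Nonempty (↥(closure U) ≃ₜ ↥(Metric.closedBall (0 : EuclideanSpace ℝ (Fin d)) 1)) ∧
      Nonempty (↥(closure V) ≃ₜ ↥(Metric.closedBall (0 : EuclideanSpace ℝ (Fin d)) 1)) := by
  have key : ∃ G : ↥(Metric.sphere (0 : EuclideanSpace ℝ (Fin (d + 1))) 1) ≃ₜ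
      ↥(Metric.sphere (0 : EuclideanSpace ℝ (Fin (d + 1))) 1),
      ∀ y, y ∈ (Set.range fun x => ψ (x, ⟨0, by norm_num⟩)) ↔
      (G y : EuclideanSpace ℝ (Fin (d + 1))) 0 = 0 := by
    match d, ψ, hψ with
    | 0, ψ, _ => exact GS.exists_G0 ψ
    | 1, ψ, hψ => exact GS.exists_G1 ψ hψ
    | d + 2, ψ, hψ => exact GS.exists_G (by omega) ψ hψ
  obtain ⟨G, hG⟩ := key
  exact GS.conclude d _ G hG
end

section
/- The complement of an embedded circle in S² is a disjoint union of two open disks, without any tameness assumption on the embedding (Jordan–Schönflies theorem on the sphere). -/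
open Topology

namespace JS

open Complex Set Metric

/-- `f` has a continuous logarithm on `s`. -/
def HasLogOn {X : Type*} [TopologicalSpace X] (s : Set X) (f : X → ℂ) : Prop :=
  ∃ g : X → ℂ, ContinuousOn g s ∧ ∀ z ∈ s, exp (g z) = f z

section basic
variable {X : Type*} [TopologicalSpace X] {s t : Set X} {f g : X → ℂ}

lemma HasLogOn.mono (h : HasLogOn t f) (hst : s ⊆ t) : HasLogOn s f := by
  obtain ⟨u, hu, hu'⟩ := h
  exact ⟨u, hu.mono hst, fun z hz => hu' z (hst hz)⟩

lemma HasLogOn.congr (h : HasLogOn s f) (hfg : ∀ z ∈ s, f z = g z) : HasLogOn s g := by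
  obtain ⟨u, hu, hu'⟩ := h
  exact ⟨u, hu, fun z hz => (hu' z hz).trans (hfg z hz)⟩

lemma HasLogOn.mul (hf : HasLogOn s f) (hg : HasLogOn s g) :
    HasLogOn s (fun z => f z * g z) := by
  obtain ⟨u, hu, hu'⟩ := hf
  obtain ⟨v, hv, hv'⟩ := hg
  exact ⟨fun z => u z + v z, hu.add hv, fun z hz => by rw [exp_add, hu' z hz, hv' z hz]⟩

lemma HasLogOn.inv (hf : HasLogOn s f) : HasLogOn s (fun z => (f z)⁻¹) := by
  obtain ⟨u, hu, hu'⟩ := hf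
  exact ⟨fun z => - u z, hu.neg, fun z hz => by rw [exp_neg, hu' z hz]⟩

lemma HasLogOn.zpow (hf : HasLogOn s f) (n : ℤ) : HasLogOn s (fun z => (f z) ^ n) := by
  obtain ⟨u, hu, hu'⟩ := hf
  exact ⟨fun z => n * u z, continuousOn_const.mul hu, fun z hz => by
    rw [exp_int_mul, hu' z hz]⟩

lemma HasLogOn.prod {ι : Type*} (S : Finset ι) (F : ι → X → ℂ) (h : ∀ i ∈ S, HasLogOn s (F i)) :
    HasLogOn s (fun z => ∏ i ∈ S, F i z) := by
  classical
  induction S using Finset.induction_on with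
  | empty => exact ⟨fun _ => 0, continuousOn_const, by simp⟩
  | insert a S ha ih =>
    refine ((h a (by simp)).mul (ih fun i hi => h i (by simp [hi]))).congr fun z _ => ?_
    rw [Finset.prod_insert ha]

lemma hasLogOn_const {c : ℂ} (hc : c ≠ 0) : HasLogOn s (fun _ => c) :=
  ⟨fun _ => log c, continuousOn_const, fun _ _ => exp_log hc⟩

lemma hasLogOn_of_slitPlane (hf : ContinuousOn f s) (h : ∀ z ∈ s, f z ∈ slitPlane) :
    HasLogOn s f :=
  ⟨fun z => log (f z), hf.clog h, fun z hz => exp_log (slitPlane_ne_zero (h z hz))⟩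

lemma mem_slitPlane_of_dist_one {w : ℂ} (h : ‖w - 1‖ < 1) : w ∈ slitPlane := by
  rw [mem_slitPlane_iff]
  left
  have := (abs_re_le_norm (w - 1)).trans_lt h
  rw [abs_lt] at this
  simp at this
  linarith [this.1]

lemma hasLogOn_of_near_one (hf : ContinuousOn f s) (h : ∀ z ∈ s, ‖f z - 1‖ < 1) :
    HasLogOn s f :=
  hasLogOn_of_slitPlane hf fun z hz => mem_slitPlane_of_dist_one (h z hz)

lemma HasLogOn.comp {Y : Type*} [TopologicalSpace Y] {s' : Set Y} {u : Y → X}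
    (h : HasLogOn s f) (hu : ContinuousOn u s') (hm : MapsTo u s' s) :
    HasLogOn s' (fun y => f (u y)) := by
  obtain ⟨v, hv, hv'⟩ := h
  exact ⟨fun y => v (u y), hv.comp hu hm, fun z hz => hv' _ (hm hz)⟩

end basic

/-- Nonvanishing continuous functions on simply connected spaces have logs. -/
lemma hasLogOn_univ {X : Type*} [TopologicalSpace X] [LocallyPathConnectedSpace X]
    [SimplyConnectedSpace X] {f : X → ℂ} (hf : Continuous f) (h0 : ∀ z, f z ≠ 0) :
    HasLogOn univ f := by
  obtain ⟨g, hg, hg'⟩ := exists_continuousOn_eqOn_exp_comp (X := X) (U := univ)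
    (show SimplyConnectedSpace (univ : Set X) from
      (Homeomorph.Set.univ X).toHomotopyEquiv.simplyConnectedSpace_iff.2 inferInstance) isOpen_univ hf.continuousOn (by simpa using h0)
  exact ⟨g, hg, fun z hz => hg' hz⟩

lemma tietze {X : Type*} [TopologicalSpace X] [NormalSpace X] {s : Set X} (hs : IsClosed s)
    {g : X → ℂ} (hg : ContinuousOn g s) : ∃ G : X → ℂ, Continuous G ∧ EqOn G g s := by
  obtain ⟨G, hG⟩ := ContinuousMap.exists_restrict_eq hs
    (⟨s.domRestrict g, continuousOn_iff_continuous_domRestrict.mp hg⟩ : C(s, ℂ))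
  refine ⟨G, G.continuous, fun z hz => ?_⟩
  exact DFunLike.congr_fun hG ⟨z, hz⟩

/-- A continuous function with `exp ∘ h = 1` on a preconnected set is constant. -/
lemma const_of_exp_eq_one {X : Type*} [TopologicalSpace X] {s : Set X} (hs : IsPreconnected s)
    {h : X → ℂ} (hc : ContinuousOn h s) (h1 : ∀ z ∈ s, exp (h z) = 1) {x y : X} (hx : x ∈ s)
    (hy : y ∈ s) : h x = h y := by
  have key : ∀ z ∈ s, ∃ n : ℤ, h z = n * (2 * Real.pi * I) := fun z hz =>
    exp_eq_one_iff.1 (h1 z hz)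
  have hpi : (2 * Real.pi : ℝ) ≠ 0 := by positivity
  have hc' : ContinuousOn (fun z => (h z).im / (2 * Real.pi)) s :=
    (continuous_im.comp_continuousOn hc).div_const _
  have hint : ∀ z ∈ s, ∃ n : ℤ, (h z).im / (2 * Real.pi) = n ∧ h z = n * (2 * Real.pi * I) := by
    intro z hz
    obtain ⟨n, hn⟩ := key z hz
    refine ⟨n, ?_, hn⟩
    rw [hn]
    simp
  have hpre := (hs.image _ hc')
  have : (h x).im / (2 * Real.pi) = (h y).im / (2 * Real.pi) := by
    by_contra hne
    have hoc := hpre.ordConnected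
    obtain ⟨n, hn, _⟩ := hint x hx
    obtain ⟨m, hm, _⟩ := hint y hy
    have hX : (n : ℝ) ∈ (fun z => (h z).im / (2 * Real.pi)) '' s := ⟨x, hx, hn⟩
    have hY : (m : ℝ) ∈ (fun z => (h z).im / (2 * Real.pi)) '' s := ⟨y, hy, hm⟩
    rw [hn, hm] at hne
    have hne' : n ≠ m := by exact_mod_cast hne
    have hgen : ∀ a b : ℤ, a < b → (a : ℝ) ∈ (fun z => (h z).im / (2 * Real.pi)) '' s →
        (b : ℝ) ∈ (fun z => (h z).im / (2 * Real.pi)) '' s → False := by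
      intro a b hab ha hb
      have hab' : (a : ℝ) + 1 ≤ b := by exact_mod_cast hab
      obtain ⟨z, hz, hz'⟩ := hoc.out ha hb (show (a : ℝ) + 1 / 2 ∈ Icc (a : ℝ) b by
        constructor <;> linarith)
      obtain ⟨k, hk, _⟩ := hint z hz
      simp only at hz'
      rw [hk] at hz'
      have h3 : (a : ℝ) < k := by linarith
      have h4 : (k : ℝ) < a + 1 := by linarith
      have h3' : a < k := by exact_mod_cast h3
      have h4' : k < a + 1 := by exact_mod_cast h4
      omega
    rcases lt_or_gt_of_ne hne' with h | h
    · exact hgen _ _ h hX hY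
    · exact hgen _ _ h hY hX
  obtain ⟨n, hn, hn'⟩ := hint x hx
  obtain ⟨m, hm, hm'⟩ := hint y hy
  rw [hn, hm] at this
  rw [hn', hm', show n = m by exact_mod_cast this]

lemma no_log_circle {n : ℤ} {g : Circle → ℂ} (hg : Continuous g)
    (h : ∀ z : Circle, exp (g z) = (z : ℂ) ^ n) : n = 0 := by
  have := const_of_exp_eq_one (s := (univ : Set ℝ)) isPreconnected_univ
    (h := fun t => g (Circle.exp t) - n * (t * I)) (by fun_prop) (fun t _ => by
      rw [exp_sub, h, exp_int_mul, Circle.coe_exp]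
      exact div_self (zpow_ne_zero _ (exp_ne_zero _))) (mem_univ 0) (mem_univ (2 * Real.pi))
  rw [Circle.exp_two_pi, Circle.exp_zero] at this
  have h2 : (n : ℂ) * (2 * Real.pi * I) = 0 := by
    push_cast at this
    linear_combination this
  have hpi : (2 * Real.pi * I : ℂ) ≠ 0 := two_pi_I_ne_zero
  simpa [hpi] using h2

lemma exists_log_circle {f : Circle → ℂ} (hf : Continuous f) (h0 : ∀ z, f z ≠ 0) :
    ∃ (k : ℤ) (g : Circle → ℂ), Continuous g ∧ ∀ z, f z = (z : ℂ) ^ k * exp (g z) := by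
  obtain ⟨h, hc, hh⟩ := hasLogOn_univ (X := ℝ) (f := fun t => f (Circle.exp t)) (by fun_prop)
    (fun t => h0 _)
  have hc : Continuous h := continuousOn_univ.1 hc
  have hper : ∀ t : ℝ, exp (h (t + 2 * Real.pi) - h t) = 1 := by
    intro t
    have e : f (Circle.exp (t + 2 * Real.pi)) = f (Circle.exp t) := by
      rw [Circle.periodic_exp t]
    rw [exp_sub, hh _ (mem_univ _), hh _ (mem_univ _)]
    refine (congrArg (· / f (Circle.exp t)) e).trans ?_
    exact div_self (h0 _)
  obtain ⟨k, hk⟩ := exp_eq_one_iff.1 (hper 0)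
  have hk' : ∀ t : ℝ, h (t + 2 * Real.pi) = h t + k * (2 * Real.pi * I) := by
    intro t
    have := const_of_exp_eq_one (s := (univ : Set ℝ)) isPreconnected_univ
      (h := fun t => h (t + 2 * Real.pi) - h t) (by fun_prop) (fun t _ => hper t) (mem_univ t)
      (mem_univ 0)
    rw [hk] at this
    linear_combination this
  set u : ℝ → ℂ := fun t => h t - k * (t * I) with hu
  have hup : Function.Periodic u (2 * Real.pi) := by
    intro t
    simp only [hu, hk']
    push_cast
    ring
  have hlc : Continuous hup.lift := by
    apply continuous_coinduced_dom.2
    show Continuous u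
    fun_prop
  refine ⟨k, fun z => hup.lift (AddCircle.homeomorphCircle'.symm z), hlc.comp
    (Homeomorph.continuous _), fun z => ?_⟩
  obtain ⟨t, rfl⟩ : ∃ t : ℝ, Circle.exp t = z := ⟨arg z, Circle.exp_arg z⟩
  have : AddCircle.homeomorphCircle'.symm (Circle.exp t) = (t : AddCircle (2 * Real.pi)) := by
    rw [Homeomorph.symm_apply_eq]
    rfl
  show f (Circle.exp t) = (Circle.exp t : ℂ) ^ k *
    exp (hup.lift (AddCircle.homeomorphCircle'.symm (Circle.exp t)))
  rw [this, Function.Periodic.lift_coe]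
  refine (hh t (mem_univ _)).symm.trans ?_
  rw [Circle.coe_exp, ← exp_int_mul,
    ← exp_add]
  congr 1
  simp [hu]

lemma no_log_sphere {n : ℤ} {a : ℂ} {R : ℝ} (hR : 0 < R)
    (h : HasLogOn (sphere a R) (fun z => (z - a) ^ n)) : n = 0 := by
  have h1 : HasLogOn (univ : Set Circle) (fun z => ((a + R * (z : ℂ)) - a) ^ n) := by
    refine h.comp (u := fun z : Circle => a + R * (z : ℂ)) (by fun_prop) ?_
    intro z _
    have := Circle.norm_coe z
    simp [abs_of_pos hR, this]
  have hR' : (R : ℂ) ≠ 0 := by exact_mod_cast hR.ne'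
  obtain ⟨g, hg, hg'⟩ := h1.mul ((hasLogOn_const hR').zpow (-n))
  refine no_log_circle (continuousOn_univ.1 hg) (n := n) fun z => ?_
  refine (hg' z (mem_univ _)).trans ?_
  show (a + R * (z : ℂ) - a) ^ n * (R : ℂ) ^ (-n) = (z : ℂ) ^ n
  rw [add_sub_cancel_left, mul_zpow, zpow_neg]
  field_simp

end JS

namespace JS

open Complex Set Metric

lemma hasLog_step {K : Set ℂ} {a b : ℂ} (h : ∀ z ∈ K, ‖a - b‖ < ‖z - b‖)
    (hb : HasLogOn K (fun z => z - b)) : HasLogOn K (fun z => z - a) := by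
  have hne : ∀ z ∈ K, z - b ≠ 0 := fun z hz h0 => by
    have := h z hz
    rw [h0, norm_zero] at this
    exact absurd this (not_lt.2 (norm_nonneg _))
  have h1 : HasLogOn K (fun z => (z - a) / (z - b)) := by
    refine hasLogOn_of_near_one (ContinuousOn.div (by fun_prop) (by fun_prop) hne) fun z hz => ?_
    have e : (z - a) / (z - b) - 1 = - (a - b) / (z - b) := by
      have := hne z hz
      field_simp
      ring
    rw [e, norm_div, norm_neg, div_lt_one (norm_pos_iff.2 (hne z hz))]
    exact h z hz
  refine (hb.mul h1).congr fun z hz => ?_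
  have := hne z hz
  field_simp

lemma hasLog_of_unbounded {K S : Set ℂ} (hK : IsCompact K) (hS : IsPreconnected S)
    (hSK : S ⊆ Kᶜ) (hSb : ¬ Bornology.IsBounded S) {a : ℂ} (ha : a ∈ S) :
    HasLogOn K (fun z => z - a) := by
  have key : ∀ a ∉ K, ∃ ε > 0, ∀ b ∈ ball a ε, b ∉ K ∧
      (HasLogOn K (fun z => z - a) ↔ HasLogOn K (fun z => z - b)) := by
    intro a ha
    obtain ⟨ε, hε, hb⟩ := Metric.isOpen_iff.1 hK.isClosed.isOpen_compl a ha
    refine ⟨ε / 2, by positivity, fun b hb' => ?_⟩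
    have hba : ‖b - a‖ < ε / 2 := by simpa [dist_eq_norm] using hb'
    have h2 : ∀ z ∈ K, ε ≤ ‖z - a‖ := fun z hz => by
      by_contra hlt
      exact hb (show z ∈ ball a ε by simpa [dist_eq_norm] using hlt) hz
    refine ⟨hb (ball_subset_ball (by linarith) hb'), fun h => hasLog_step (fun z hz => ?_) h,
      fun h => hasLog_step (fun z hz => ?_) h⟩
    · linarith [h2 z hz]
    · have := h2 z hz
      have h3 := norm_sub_le_norm_sub_add_norm_sub z b a
      rw [norm_sub_rev a b]
      linarith
  have hu : IsOpen {a | a ∉ K ∧ HasLogOn K (fun z => z - a)} := by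
    refine Metric.isOpen_iff.2 fun a ha => ?_
    obtain ⟨ε, hε, h⟩ := key a ha.1
    exact ⟨ε, hε, fun b hb => ⟨(h b hb).1, (h b hb).2.1 ha.2⟩⟩
  have hv : IsOpen {a | a ∉ K ∧ ¬ HasLogOn K (fun z => z - a)} := by
    refine Metric.isOpen_iff.2 fun a ha => ?_
    obtain ⟨ε, hε, h⟩ := key a ha.1
    exact ⟨ε, hε, fun b hb => ⟨(h b hb).1, fun h' => ha.2 ((h b hb).2.2 h')⟩⟩
  have := hS.subset_left_of_subset_union hu hv
    (Set.disjoint_left.2 fun x hx hx' => hx'.2 hx.2)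
    (fun x hx => by
      by_cases hl : HasLogOn K (fun z => z - x)
      · exact Or.inl ⟨hSK hx, hl⟩
      · exact Or.inr ⟨hSK hx, hl⟩) ?_
  · exact (this ha).2
  · obtain ⟨R, hR⟩ := hK.isBounded.exists_norm_le
    obtain ⟨b, hb, hb'⟩ : ∃ b ∈ S, max R 0 < ‖b‖ := by
      by_contra hcon
      push Not at hcon
      exact hSb (isBounded_iff_forall_norm_le.2 ⟨_, hcon⟩)
    have hb1 : R < ‖b‖ := (le_max_left _ _).trans_lt hb'
    have hb0 : 0 < ‖b‖ := (le_max_right _ _).trans_lt hb'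
    have hbne : b ≠ 0 := norm_pos_iff.1 hb0
    refine ⟨b, hb, hSK hb, ?_⟩
    have h1 : HasLogOn K (fun z => (z - b) / (-b)) := by
      refine hasLogOn_of_near_one (by fun_prop) fun z hz => ?_
      have e : (z - b) / (-b) - 1 = - z / b := by
        field_simp
        ring
      rw [e, norm_div, norm_neg, div_lt_one hb0]
      exact (hR z hz).trans_lt hb1
    refine (h1.mul (hasLogOn_const (neg_ne_zero.2 hbne))).congr fun z _ => ?_
    field_simp

lemma no_log_bounded {K D : Set ℂ} (hK : IsCompact K) (hDo : IsOpen D)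
    (hDb : Bornology.IsBounded D) (hDK : frontier D ⊆ K) {a : ℂ} (ha : a ∈ D) {n : ℤ} {r : ℂ → ℂ}
    (hr : ContinuousOn r (closure D)) (hr0 : ∀ z ∈ closure D, r z ≠ 0)
    (h : HasLogOn K (fun z => (z - a) ^ n * r z)) : n = 0 := by
  classical
  obtain ⟨g, hg, hg'⟩ := h
  obtain ⟨G, hG, hGg⟩ := tietze hK.isClosed hg
  set F : ℂ → ℂ := fun z => if z ∈ closure D then exp (G z) / r z else (z - a) ^ n with hF
  have hFc : Continuous F := by
    rw [← continuousOn_univ]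
    refine ContinuousOn.if ?_ ?_ ?_
    · rintro z ⟨-, hz⟩
      have hz' : z ∈ frontier D := frontier_closure_subset hz
      rw [hGg (hDK hz'), hg' z (hDK hz')]
      exact mul_div_cancel_right₀ _ (hr0 z (frontier_subset_closure hz'))
    · simp only [univ_inter]
      change ContinuousOn _ (closure (closure D))
      rw [closure_closure]
      exact (by fun_prop : Continuous fun z => exp (G z)).continuousOn.div hr hr0
    · simp only [univ_inter]
      refine ContinuousOn.zpow₀ (by fun_prop) n fun z hz => Or.inl ?_
      intro h0
      have hza : z = a := sub_eq_zero.1 h0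
      subst hza
      refine absurd hz ?_
      change z ∉ closure (closure D)ᶜ
      rw [closure_compl, notMem_compl_iff]
      exact interior_maximal subset_closure hDo ha
  have hF0 : ∀ z, F z ≠ 0 := by
    intro z
    simp only [hF]
    split_ifs with hz
    · exact div_ne_zero (exp_ne_zero _) (hr0 z hz)
    · refine zpow_ne_zero _ (sub_ne_zero.2 ?_)
      rintro rfl
      exact hz (subset_closure ha)
  obtain ⟨R, hR⟩ := hDb.closure.subset_closedBall a
  have hmax : 0 < max R 0 + 1 := by positivity
  refine no_log_sphere (a := a) hmax (((hasLogOn_univ hFc hF0).mono (subset_univ _)).congr ?_)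
  intro z hz
  have : z ∉ closure D := fun hz' => by
    have h1 := mem_closedBall.1 (hR hz')
    have h2 := mem_sphere.1 hz
    have := le_max_left R 0
    linarith
  simp [hF, this]

/-- A zero `a` of `P` that can be removed. -/
def Nice (K : Set ℂ) (P : ℂ → ℂ) (a : ℂ) : Prop :=
  ∃ q : ℂ → ℂ, ContinuousOn q {a}ᶜ ∧ (∀ z, z ≠ a → q z ≠ 0) ∧ HasLogOn K q ∧
    ∃ r > 0, HasLogOn (ball a r \ {a}) (fun z => P z * q z)

lemma hasLog_of_nice {W K : Set ℂ} (hW : IsOpen W) (hK : IsCompact K) (hKW : K ⊆ W)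
    (hWlog : ∀ P : ℂ → ℂ, ContinuousOn P W → (∀ z ∈ W, P z ≠ 0) → HasLogOn W P)
    (Z : Finset ℂ) : ∀ (P : ℂ → ℂ), ContinuousOn P W → (∀ z ∈ W, P z = 0 → z ∈ Z) →
      (∀ a ∈ Z, a ∈ W ∧ a ∉ K) → (∀ a ∈ Z, Nice K P a) → HasLogOn K P := by
  classical
  induction Z using Finset.induction_on with
  | empty =>
    intro P hP h0 _ _
    exact (hWlog P hP fun z hz h => by simpa using h0 z hz h).mono hKW
  | insert a Z haZ ih =>
    intro P hP h0 hZ hN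
    obtain ⟨q, hqc, hq0, hqK, r0, hr0, hr0log⟩ := hN a (by simp)
    have hopen : IsOpen (W ∩ Kᶜ ∩ (Z : Set ℂ)ᶜ) :=
      (hW.inter hK.isClosed.isOpen_compl).inter Z.finite_toSet.isClosed.isOpen_compl
    obtain ⟨r1, hr1, hball⟩ := Metric.isOpen_iff.1 hopen a
      ⟨hZ a (by simp), by simpa using haZ⟩
    set r := min r0 r1 with hr
    have hrpos : 0 < r := lt_min hr0 hr1
    obtain ⟨g, hg, hg'⟩ := hr0log.mono (s := ball a r \ {a})
      (sdiff_subset_sdiff_left (ball_subset_ball (min_le_left _ _)))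
    have hball : ball a r ⊆ W ∩ Kᶜ ∩ (Z : Set ℂ)ᶜ :=
      (ball_subset_ball (min_le_right _ _)).trans hball
    have hsph : sphere a (r / 2) ⊆ ball a r \ {a} := by
      intro z hz
      rw [mem_sphere] at hz
      refine ⟨by rw [mem_ball]; linarith, ?_⟩
      rintro rfl
      rw [dist_self] at hz
      linarith
    have hcb : closedBall a (r / 2) ⊆ ball a r := closedBall_subset_ball (by linarith)
    obtain ⟨G, hG, hGg⟩ := tietze isClosed_sphere (hg.mono hsph)
    set P1 : ℂ → ℂ := fun z => if z ∈ closedBall a (r / 2) then exp (G z) else P z * q z with hP1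
    have hP1out : ∀ z, z ∉ closedBall a (r / 2) → P1 z = P z * q z := fun z hz => by
      simp only [hP1, if_neg hz]
    have hP1K : ∀ z ∈ K, P1 z = P z * q z := fun z hz => hP1out z fun hz' =>
      (hball (hcb hz')).1.2 hz
    have hIH : HasLogOn K P1 := by
      refine ih P1 ?_ ?_ (fun b hb => hZ b (by simp [hb])) ?_
      · refine ContinuousOn.if ?_ ?_ ?_
        · rintro z ⟨-, hz⟩
          have hz' : z ∈ sphere a (r / 2) := frontier_closedBall_subset_sphere hz
          rw [hGg hz', hg' z (hsph hz')]
        · fun_prop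
        · refine (hP.mono inter_subset_left).mul (hqc.mono ?_)
          rintro z ⟨-, hz⟩ hza
          rw [mem_singleton_iff] at hza
          subst hza
          refine absurd hz ?_
          change z ∉ closure (closedBall z (r / 2))ᶜ
          rw [closure_compl, notMem_compl_iff]
          exact ball_subset_interior_closedBall (mem_ball_self (by positivity))
      · intro z hz hz0
        simp only [hP1] at hz0
        split_ifs at hz0 with hzc
        · exact absurd hz0 (exp_ne_zero _)
        · have hza : z ≠ a := by
            rintro rfl
            exact hzc (mem_closedBall_self (by positivity))
          have := h0 z hz ((mul_eq_zero.1 hz0).resolve_right (hq0 z hza))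
          simpa [hza] using this
      · intro b hb
        obtain ⟨q', hqc', hq0', hqK', r', hr', hlog'⟩ := hN b (by simp [hb])
        refine ⟨q', hqc', hq0', hqK', ?_⟩
        have hbc : b ∉ closedBall a (r / 2) := fun h => (hball (hcb h)).2 (by simpa using hb)
        have hba : b ≠ a := by
          rintro rfl
          exact haZ hb
        have hcont : ContinuousAt q b := hqc.continuousAt (isOpen_compl_singleton.mem_nhds hba)
        have hcont' : ContinuousAt (fun z => q z / q b) b := hcont.div_const _
        have hev : ∀ᶠ z in 𝓝 b, z ∉ closedBall a (r / 2) ∧ z ≠ a ∧ ‖q z / q b - 1‖ < 1 := by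
          have e1 : ∀ᶠ z in 𝓝 b, z ∉ closedBall a (r / 2) :=
            isClosed_closedBall.isOpen_compl.mem_nhds hbc
          have e2 : ∀ᶠ z in 𝓝 b, z ≠ a := isOpen_compl_singleton.mem_nhds hba
          refine e1.and (e2.and ?_)
          have h2 : ContinuousAt (fun z => ‖q z / q b - 1‖) b := (hcont'.sub_const 1).norm
          refine h2.eventually_lt_const ?_
          simp [div_self (hq0 b hba)]
        obtain ⟨r2, hr2, hb2⟩ := Metric.eventually_nhds_iff_ball.1 hev
        refine ⟨min r' r2, lt_min hr' hr2, ?_⟩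
        have l1 : HasLogOn (ball b (min r' r2) \ {b}) (fun z => P z * q' z) :=
          hlog'.mono (sdiff_subset_sdiff_left (ball_subset_ball (min_le_left _ _)))
        have l2 : HasLogOn (ball b (min r' r2) \ {b}) (fun z => q z / q b) := by
          refine hasLogOn_of_near_one ?_ fun z hz => ?_
          · refine (hqc.mono fun z hz => ?_).div_const _
            exact (hb2 z (ball_subset_ball (min_le_right _ _) hz.1)).2.1
          · exact (hb2 z (ball_subset_ball (min_le_right _ _) hz.1)).2.2
        refine ((l1.mul l2).mul (hasLogOn_const (hq0 b hba))).congr fun z hz => ?_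
        have h3 := hb2 z (ball_subset_ball (min_le_right _ _) hz.1)
        rw [hP1out z h3.1]
        have := hq0 b hba
        field_simp
    refine (hIH.mul hqK.inv).congr fun z hz => ?_
    have hza : z ≠ a := by
      rintro rfl
      exact (hZ z (by simp)).2 hz
    rw [hP1K z hz, mul_assoc, mul_inv_cancel₀ (hq0 z hza), mul_one]

end JS

namespace JS

open Complex Set Metric

lemma nice_of_deriv {K : Set ℂ} (hlog : ∀ a ∉ K, HasLogOn K (fun z => z - a)) {P : ℂ → ℂ}
    (hPc : Continuous P) {a : ℂ} (ha : a ∉ K) {A : ℂ →L[ℝ] ℂ} (hA : HasFDerivAt P A a)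
    (hdet : A.det ≠ 0) (hPa : P a = 0) : Nice K P a := by
  have hinj : ∀ z, A z = 0 → z = 0 := by
    intro z hz
    by_contra hne
    apply hdet
    have : LinearMap.det (A : ℂ →ₗ[ℝ] ℂ) = 0 := by
      rw [LinearMap.det_eq_zero_iff_ker_ne_bot]
      intro hb
      exact hne (by simpa [hb] using (LinearMap.mem_ker.2 hz : z ∈ LinearMap.ker (A : ℂ →ₗ[ℝ] ℂ)))
    exact this
  set α : ℂ := (A 1 - I * A I) / 2 with hα
  set β : ℂ := (A 1 + I * A I) / 2 with hβ
  have hAz : ∀ z, A z = α * z + β * (starRingEnd ℂ) z := by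
    intro z
    have h1 : A z = z.re • A 1 + z.im • A I := by
      rw [← map_smul, ← map_smul, ← map_add]
      congr 1
      simp [Complex.re_add_im]
    have h2 : z = z.re + z.im * I := (Complex.re_add_im z).symm
    have h3 : (starRingEnd ℂ) z = z.re - z.im * I := by
      apply Complex.ext <;> simp
    rw [h1, h3, hα, hβ]
    conv_rhs => rw [h2]
    simp only [real_smul, add_re, ofReal_re, mul_re, I_re, mul_zero, ofReal_im, I_im, mul_one,
      sub_self, add_zero, add_im, mul_im, zero_add]
    linear_combination ((z.im : ℂ) * A I) * I_sq
  have hne : ‖α‖ ≠ ‖β‖ := by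
    intro he
    have hn : α * (starRingEnd ℂ) α = β * (starRingEnd ℂ) β := by
      rw [Complex.mul_conj, Complex.mul_conj, Complex.normSq_eq_norm_sq, Complex.normSq_eq_norm_sq,
        he]
    have z1 := hinj (β - (starRingEnd ℂ) α) (by
      rw [hAz]
      simp only [map_sub, Complex.conj_conj]
      linear_combination -hn)
    have z2 := hinj (I * (β + (starRingEnd ℂ) α)) (by
      rw [hAz]
      simp only [map_mul, map_add, Complex.conj_conj, conj_I]
      linear_combination I * hn)
    have z2' : β + (starRingEnd ℂ) α = 0 := by simpa using z2
    have hβ0 : β = 0 := by linear_combination (z1 + z2') / 2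
    have hα0 : α = 0 := by
      have : (starRingEnd ℂ) α = 0 := by linear_combination (z2' - z1) / 2
      simpa using this
    have := hinj 1 (by rw [hAz, hα0, hβ0]; simp)
    exact one_ne_zero this
  have hsmall : ∀ ε > 0, ∃ r > 0, ∀ z ∈ ball a r, ‖P z - A (z - a)‖ ≤ ε * ‖z - a‖ := by
    intro ε hε
    have := (hasFDerivAt_iff_isLittleO.1 hA).def hε
    obtain ⟨r, hr, h⟩ := Metric.eventually_nhds_iff_ball.1 this
    refine ⟨r, hr, fun z hz => ?_⟩
    simpa [hPa] using h z hz
  have hKa : ∀ z ∈ K, z - a ≠ 0 := fun z hz h0 => ha (sub_eq_zero.1 h0 ▸ hz)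
  have general : ∀ (u : ℂ → ℂ) (γ δ : ℂ), Continuous u → (∀ z, ‖u z‖ = ‖z - a‖) →
      ‖δ‖ < ‖γ‖ → (∀ z, ‖A (z - a) - γ * u z‖ ≤ ‖δ‖ * ‖z - a‖) →
      HasLogOn K (fun z => (u z)⁻¹) → Nice K P a := by
    intro u γ δ hu hun hγδ hAu hlogu
    have hu0 : ∀ z, z ≠ a → u z ≠ 0 := fun z hz => by
      rw [← norm_pos_iff, hun, norm_pos_iff]
      exact sub_ne_zero.2 hz
    have hγ : γ ≠ 0 := norm_pos_iff.1 ((norm_nonneg _).trans_lt hγδ)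
    refine ⟨fun z => (u z)⁻¹, hu.continuousOn.inv₀ fun z hz => hu0 z hz,
      fun z hz => inv_ne_zero (hu0 z hz), hlogu, ?_⟩
    obtain ⟨r, hr, hP⟩ := hsmall ((‖γ‖ - ‖δ‖) / 2) (by linarith)
    refine ⟨r, hr, ?_⟩
    have l1 : HasLogOn (ball a r \ {a}) (fun z => P z * (u z)⁻¹ * γ⁻¹) := by
      refine hasLogOn_of_near_one ?_ ?_
      · exact (hPc.continuousOn.mul (hu.continuousOn.inv₀ fun z hz => hu0 z hz.2)).mul
          continuousOn_const
      · rintro z ⟨hz, hza⟩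
        have huz := hu0 z hza
        have e : P z * (u z)⁻¹ * γ⁻¹ - 1 = (P z - γ * u z) / (γ * u z) := by
          field_simp
        rw [e, norm_div, div_lt_one (norm_pos_iff.2 (mul_ne_zero hγ huz)), norm_mul, hun]
        have hpos : 0 < ‖z - a‖ := norm_pos_iff.2 (sub_ne_zero.2 hza)
        have h3 := norm_sub_le_norm_sub_add_norm_sub (P z) (A (z - a)) (γ * u z)
        have h4 := hP z hz
        have h5 := hAu z
        nlinarith
    refine (l1.mul (hasLogOn_const hγ)).congr fun z _ => ?_
    field_simp
  rcases lt_or_gt_of_ne hne with h | h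
  · refine general (fun z => (starRingEnd ℂ) (z - a)) β α (by fun_prop)
      (fun z => by simp only [RCLike.norm_conj]) h (fun z => ?_) ?_
    · rw [hAz, add_sub_cancel_right, norm_mul]
    · have l2 : HasLogOn K (fun z => (((‖z - a‖ ^ 2)⁻¹ : ℝ) : ℂ)) := by
        refine hasLogOn_of_slitPlane ?_ fun z hz => ?_
        · refine continuous_ofReal.comp_continuousOn (ContinuousOn.inv₀ (by fun_prop) ?_)
          intro z hz
          have := norm_pos_iff.2 (hKa z hz)
          positivity
        · have := norm_pos_iff.2 (hKa z hz)
          rw [ofReal_mem_slitPlane]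
          positivity
      refine ((hlog a ha).mul l2).congr fun z hz => ?_
      have h1 := hKa z hz
      have h2 : (z - a) * (starRingEnd ℂ) (z - a) = ((‖z - a‖ ^ 2 : ℝ) : ℂ) := by
        rw [Complex.mul_conj, Complex.normSq_eq_norm_sq]
      rw [ofReal_inv, ← h2, mul_inv, ← mul_assoc, mul_inv_cancel₀ h1, one_mul]
  · refine general (fun z => z - a) α β (by fun_prop) (fun z => rfl) h (fun z => ?_)
      (hlog a ha).inv
    rw [hAz, add_sub_cancel_left, norm_mul, RCLike.norm_conj]

/-- Eilenberg: if all `z - a` have logs on `K`, then so does every nonvanishing function. -/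
lemma hasLog_of_all {K : Set ℂ} (hK : IsCompact K)
    (hlog : ∀ a ∉ K, HasLogOn K (fun z => z - a)) {f : ℂ → ℂ} (hf : ContinuousOn f K)
    (hf0 : ∀ z ∈ K, f z ≠ 0) : HasLogOn K f := by
  obtain ⟨m, hm, hmf⟩ : ∃ m > 0, ∀ z ∈ K, m ≤ ‖f z‖ := by
    rcases K.eq_empty_or_nonempty with rfl | hne
    · exact ⟨1, one_pos, by simp⟩
    · obtain ⟨z, hz, hz'⟩ := hK.exists_isMinOn hne hf.norm
      exact ⟨‖f z‖, norm_pos_iff.2 (hf0 z hz), fun w hw => hz' hw⟩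
  obtain ⟨G, hG, hGf⟩ := tietze hK.isClosed hf
  obtain ⟨F, hF, hFf⟩ : ∃ F : ℂ → ℂ, ContDiff ℝ 1 F ∧ ∀ z ∈ K, ‖F z - f z‖ < m / 2 := by
    have := hK.uniformContinuousAt_of_continuousAt G (fun z _ => hG.continuousAt)
      (Metric.dist_mem_uniformity (show 0 < m / 4 by positivity))
    obtain ⟨δ, hδ, hd⟩ := Metric.mem_uniformity_dist.1 this
    obtain ⟨F, hF, hF'⟩ := hG.exists_contDiff_dist_le_of_forall_mem_ball_dist_le hδ
    refine ⟨F, hF.of_le (by exact_mod_cast le_top), fun z hz => ?_⟩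
    rw [← hGf hz, ← dist_eq_norm]
    refine (hF' z (m / 4) fun x hx => ?_).trans_lt (by linarith)
    rw [dist_comm]
    exact (hd (by rw [dist_comm]; exact hx) hz).le
  have hFd : ∀ z, HasFDerivAt F (fderiv ℝ F z) z := fun z =>
    (hF.differentiable one_ne_zero z).hasFDerivAt
  obtain ⟨c, hc, hcs⟩ : ∃ c ∈ ball (0 : ℂ) (m / 2), c ∉ F '' {z | (fderiv ℝ F z).det = 0} := by
    by_contra hcon
    push Not at hcon
    have h0 := MeasureTheory.addHaar_image_eq_zero_of_det_fderivWithin_eq_zero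
      MeasureTheory.volume (f := F) (s := {z | (fderiv ℝ F z).det = 0}) (f' := fderiv ℝ F)
      (fun z _ => (hFd z).hasFDerivWithinAt) (fun z hz => hz)
    have h1 : 0 < MeasureTheory.volume (ball (0 : ℂ) (m / 2)) :=
      measure_ball_pos _ _ (by positivity)
    exact absurd (MeasureTheory.measure_mono_null hcon h0) h1.ne'
  have hcn : ‖c‖ < m / 2 := by simpa using hc
  set P : ℂ → ℂ := fun z => F z - c with hP
  have hPc : Continuous P := hF.continuous.sub continuous_const
  have hPf : ∀ z ∈ K, ‖P z / f z - 1‖ < 1 := by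
    intro z hz
    have hz0 := hf0 z hz
    rw [div_sub_one hz0, norm_div, div_lt_one (norm_pos_iff.2 hz0)]
    have : ‖P z - f z‖ ≤ ‖F z - f z‖ + ‖c‖ := by
      have e : P z - f z = (F z - f z) - c := by simp [hP]; ring
      rw [e]
      exact norm_sub_le _ _
    linarith [hFf z hz, hmf z hz]
  have hPK : ∀ z ∈ K, P z ≠ 0 := by
    intro z hz h0
    have := hPf z hz
    simp [h0] at this
  have hPd : ∀ z, P z = 0 → (fderiv ℝ F z).det ≠ 0 := by
    intro z hz h0
    exact hcs ⟨z, h0, by simpa [hP, sub_eq_zero] using hz⟩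
  have hPF : ∀ z, HasFDerivAt P (fderiv ℝ F z) z := fun z => (hFd z).sub_const c
  obtain ⟨R, hR⟩ := hK.isBounded.subset_ball 0
  have hfin0 : ({z | P z = 0} ∩ closedBall 0 R).Finite := by
    have hcomp : IsCompact ({z | P z = 0} ∩ closedBall 0 R) :=
      (isCompact_closedBall (0 : ℂ) R).inter_left (isClosed_eq hPc continuous_const)
    by_contra hinf
    obtain ⟨z, ⟨hz, -⟩, hacc⟩ := Set.Infinite.exists_accPt_of_subset_isCompact hinf hcomp
      Subset.rfl
    rw [accPt_iff_frequently_nhdsNE] at hacc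
    have hker : LinearMap.ker (fderiv ℝ F z : ℂ →ₗ[ℝ] ℂ) = ⊥ := by
      by_contra hne
      exact hPd z hz (LinearMap.det_eq_zero_iff_ker_ne_bot.2 hne)
    obtain ⟨C, -, hC⟩ := LinearMap.exists_antilipschitzWith _ hker
    have := (hPF z).eventually_ne (c := 0) ⟨C, hC⟩
    exact hacc (this.mono fun w hw hw' => hw hw'.1)
  have hfin : ({z | P z = 0} ∩ ball 0 R).Finite :=
    hfin0.subset (inter_subset_inter_right _ ball_subset_closedBall)
  have hlogP : HasLogOn K P := by
    refine hasLog_of_nice isOpen_ball hK hR ?_ hfin.toFinset P hPc.continuousOn ?_ ?_ ?_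
    · intro Q hQ hQ0
      rcases le_or_gt R 0 with h | h
      · rw [ball_eq_empty.2 h]
        exact ⟨fun _ => 0, by simp, by simp⟩
      have hcs : ContractibleSpace (ball (0 : ℂ) R) :=
        (convex_ball _ _).contractibleSpace ⟨0, mem_ball_self h⟩
      obtain ⟨g, hg, hg'⟩ := exists_continuousOn_eqOn_exp_comp (U := ball (0 : ℂ) R)
        (show SimplyConnectedSpace _ from inferInstance) isOpen_ball hQ (by
          rintro ⟨z, hz, hz'⟩
          exact hQ0 z hz hz')
      exact ⟨g, hg, fun z hz => hg' hz⟩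
    · intro z hz h
      simp only [Finite.mem_toFinset]
      exact ⟨h, hz⟩
    · intro a ha
      simp only [Finite.mem_toFinset] at ha
      exact ⟨ha.2, fun hK => hPK a hK ha.1⟩
    · intro a ha
      simp only [Finite.mem_toFinset] at ha
      exact nice_of_deriv hlog hPc (fun hK => hPK a hK ha.1) (hPF a) (hPd a ha.1) ha.1
  have l1 : HasLogOn K (fun z => P z / f z) :=
    hasLogOn_of_near_one (hPc.continuousOn.div hf hf0) hPf
  refine (hlogP.mul l1.inv).congr fun z hz => ?_
  have h1 := hPK z hz
  have h2 := hf0 z hz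
  field_simp

end JS

namespace JS

open Complex Set Metric

/-- `D` is a union of bounded complementary components of `J`. -/
def Inside (J D : Set ℂ) : Prop :=
  IsOpen D ∧ D.Nonempty ∧ Disjoint D J ∧ IsCompact (D ∪ J)

lemma subset_of_clopen {J D S : Set ℂ} (hD : IsOpen D) (hc : IsClosed (D ∪ J))
    (hS : IsPreconnected S) (hSJ : S ⊆ Jᶜ) {a : ℂ} (ha : a ∈ S) (haD : a ∈ D) : S ⊆ D := by
  refine hS.subset_left_of_subset_union hD hc.isOpen_compl
    (Set.disjoint_left.2 fun x hx hx' => hx' (Or.inl hx)) (fun x hx => ?_) ⟨a, ha, haD⟩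
  by_cases h : x ∈ D
  · exact Or.inl h
  · exact Or.inr fun h' => h'.elim h (hSJ hx)

lemma comp_union_closed {J : Set ℂ} (hJ : IsClosed J) (a : ℂ) :
    IsClosed (connectedComponentIn Jᶜ a ∪ J) := by
  rw [← isOpen_compl_iff]
  have e : (connectedComponentIn Jᶜ a ∪ J)ᶜ =
      ⋃ b ∈ (connectedComponentIn Jᶜ a ∪ J)ᶜ, connectedComponentIn Jᶜ b := by
    ext x
    simp only [mem_iUnion]
    constructor
    · intro hx
      exact ⟨x, hx, mem_connectedComponentIn fun h => hx (Or.inr h)⟩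
    · rintro ⟨b, hb, hx⟩ hx'
      rcases hx' with hx' | hx'
      · have := (connectedComponentIn_eq hx).trans (connectedComponentIn_eq hx').symm
        refine hb (Or.inl ?_)
        rw [← this]
        exact mem_connectedComponentIn fun h => hb (Or.inr h)
      · exact connectedComponentIn_subset _ _ hx hx'
  rw [e]
  exact isOpen_biUnion fun b _ => hJ.isOpen_compl.connectedComponentIn

lemma comp_inside {J : Set ℂ} (hJ : IsCompact J) {a : ℂ} (ha : a ∉ J)
    (hb : Bornology.IsBounded (connectedComponentIn Jᶜ a)) :
    Inside J (connectedComponentIn Jᶜ a) := by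
  refine ⟨hJ.isClosed.isOpen_compl.connectedComponentIn, ⟨a, mem_connectedComponentIn ha⟩, ?_, ?_⟩
  · exact disjoint_left.2 fun x hx => connectedComponentIn_subset _ _ hx
  · exact isCompact_of_isClosed_isBounded (comp_union_closed hJ.isClosed a)
      (hb.union hJ.isBounded)

lemma Inside.frontier_subset {J D : Set ℂ} (h : Inside J D) : frontier D ⊆ J := by
  intro x hx
  rw [h.1.frontier_eq] at hx
  have : closure D ⊆ D ∪ J := closure_minimal subset_union_left h.2.2.2.isClosed
  exact (this hx.1).resolve_left hx.2

lemma Inside.no_log {J D : Set ℂ} (hJ : IsCompact J) (h : Inside J D) {a : ℂ} (ha : a ∈ D)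
    {n : ℤ} {r : ℂ → ℂ} (hr : ContinuousOn r (closure D)) (hr0 : ∀ z ∈ closure D, r z ≠ 0)
    (hl : HasLogOn J (fun z => (z - a) ^ n * r z)) : n = 0 :=
  no_log_bounded hJ h.1 (h.2.2.2.isBounded.subset subset_union_left) h.frontier_subset ha hr hr0 hl

section curve

lemma isCompact_J {φ : Circle → ℂ} (hφ : Continuous φ) : IsCompact (range φ) := isCompact_range hφ

lemma exists_invFun {φ : Circle → ℂ} (hφ : Continuous φ)
    (hinj : Function.Injective φ) : ∃ u : ℂ → Circle, ContinuousOn u (range φ) ∧ ∀ z, u (φ z) = z := by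
  have he : IsClosedEmbedding φ := hφ.isClosedEmbedding hinj
  refine ⟨Function.invFun φ, ?_, fun z => Function.leftInverse_invFun hinj z⟩
  rw [continuousOn_iff_continuous_domRestrict]
  have : (range φ).domRestrict (Function.invFun φ) = he.isEmbedding.toHomeomorph.symm := by
    funext x
    obtain ⟨z, hz⟩ := he.isEmbedding.toHomeomorph.surjective x
    subst hz
    simp only [Homeomorph.symm_apply_apply]
    exact Function.leftInverse_invFun hinj z
  rw [this]
  exact Homeomorph.continuous _

lemma hasLog_of_circle {φ : Circle → ℂ} (hφ : Continuous φ)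
    (hinj : Function.Injective φ) {f : ℂ → ℂ} {g : Circle → ℂ} (hg : Continuous g)
    (h : ∀ z, f (φ z) = exp (g z)) : HasLogOn (range φ) f := by
  obtain ⟨u, hu, hu'⟩ := exists_invFun hφ hinj
  refine ⟨fun x => g (u x), hg.comp_continuousOn hu, ?_⟩
  rintro _ ⟨z, rfl⟩
  rw [h]
  show exp (g (u (φ z))) = _
  rw [hu']

lemma exists_inside {φ : Circle → ℂ} (hφ : Continuous φ)
    (hinj : Function.Injective φ) : ∃ D, Inside (range φ) D := by
  by_contra hcon
  push Not at hcon
  have hJ := isCompact_J hφ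
  have hlog : ∀ a ∉ range φ, HasLogOn (range φ) (fun z => z - a) := by
    intro a ha
    refine hasLog_of_unbounded hJ isPreconnected_connectedComponentIn
      (connectedComponentIn_subset _ _) (fun hb => hcon _ (comp_inside hJ ha hb))
      (mem_connectedComponentIn ha)
  obtain ⟨u, hu, hu'⟩ := exists_invFun hφ hinj
  obtain ⟨g, hg, hg'⟩ := hasLog_of_all hJ hlog (f := fun z => (u z : ℂ))
    ((by fun_prop : Continuous fun z : Circle => (z : ℂ)).comp_continuousOn hu) (fun z _ => Circle.coe_ne_zero _)
  have := no_log_circle (n := 1) (g := fun z => g (φ z))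
    (hg.comp_continuous hφ fun z => mem_range_self z) (fun z => by
      refine (hg' (φ z) (mem_range_self z)).trans ?_
      show ((u (φ z) : Circle) : ℂ) = _
      rw [hu', zpow_one])
  exact one_ne_zero this

lemma comp_unique {φ : Circle → ℂ} (hφ : Continuous φ)
    (hinj : Function.Injective φ) {D : Set ℂ} (hD : Inside (range φ) D) : IsPreconnected D := by
  have hJ := isCompact_J hφ
  have hcomp : ∀ a ∈ D, connectedComponentIn (range φ)ᶜ a ⊆ D ∧
      Inside (range φ) (connectedComponentIn (range φ)ᶜ a) := by
    intro a ha
    have haJ : a ∉ range φ := disjoint_left.1 hD.2.2.1 ha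
    have h1 := subset_of_clopen hD.1 hD.2.2.2.isClosed isPreconnected_connectedComponentIn
      (connectedComponentIn_subset (range φ)ᶜ a) (mem_connectedComponentIn haJ) ha
    exact ⟨h1, comp_inside hJ haJ
      (hD.2.2.2.isBounded.subset (h1.trans subset_union_left))⟩
  refine isPreconnected_of_forall_pair fun a ha b hb => ?_
  refine ⟨connectedComponentIn (range φ)ᶜ a, (hcomp a ha).1,
    mem_connectedComponentIn (disjoint_left.1 hD.2.2.1 ha), ?_,
    isPreconnected_connectedComponentIn⟩
  by_contra hne
  have haJ : a ∉ range φ := disjoint_left.1 hD.2.2.1 ha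
  have hbJ : b ∉ range φ := disjoint_left.1 hD.2.2.1 hb
  have hne' : a ∉ connectedComponentIn (range φ)ᶜ b := by
    intro h
    apply hne
    rw [← connectedComponentIn_eq h]
    exact mem_connectedComponentIn hbJ
  have hcl : ∀ x y, y ∉ range φ → x ∈ D → y ∉ connectedComponentIn (range φ)ᶜ x →
      ∀ z ∈ closure (connectedComponentIn (range φ)ᶜ x), z - y ≠ 0 := by
    intro x y hy hx hyx z hz h0
    have hzy : z = y := sub_eq_zero.1 h0
    subst hzy
    rcases closure_minimal subset_union_left (comp_union_closed hJ.isClosed x) hz with h | h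
    · exact hyx h
    · exact hy h
  obtain ⟨k1, g1, hg1, h1⟩ := exists_log_circle (f := fun z => φ z - a) (by fun_prop)
    (fun z h => haJ ⟨z, sub_eq_zero.1 h⟩)
  obtain ⟨k2, g2, hg2, h2⟩ := exists_log_circle (f := fun z => φ z - b) (by fun_prop)
    (fun z h => hbJ ⟨z, sub_eq_zero.1 h⟩)
  have hl : HasLogOn (range φ) (fun z => (z - a) ^ k2 * (z - b) ^ (-k1)) := by
    refine hasLog_of_circle hφ hinj (g := fun z => k2 * g1 z + (-k1 : ℤ) * g2 z) (by fun_prop) ?_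
    intro z
    rw [h1 z, h2 z, exp_add, exp_int_mul, exp_int_mul, mul_zpow, mul_zpow, ← zpow_mul, ← zpow_mul]
    have hz : (z : ℂ) ≠ 0 := Circle.coe_ne_zero z
    have : (z : ℂ) ^ (k1 * k2) * (z : ℂ) ^ (k2 * -k1) = 1 := by
      rw [← zpow_add₀ hz]
      simp [mul_comm]
    linear_combination (exp (g1 z) ^ k2 * exp (g2 z) ^ (-k1)) * this
  have hk2 : k2 = 0 := by
    refine (hcomp a ha).2.no_log hJ (mem_connectedComponentIn haJ) ?_ ?_ hl
    · exact ContinuousOn.zpow₀ (by fun_prop) _ fun z hz => Or.inl (hcl a b hbJ ha hne z hz)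
    · exact fun z hz => zpow_ne_zero _ (hcl a b hbJ ha hne z hz)
  have hl2 : HasLogOn (range φ) (fun z => (z - b) ^ (1 : ℤ) * 1) := by
    refine hasLog_of_circle hφ hinj hg2 fun z => ?_
    rw [zpow_one, mul_one, h2 z, hk2, zpow_zero, one_mul]
  exact one_ne_zero ((hcomp b hb).2.no_log hJ (mem_connectedComponentIn hbJ)
    continuousOn_const (fun _ _ => one_ne_zero) hl2)

lemma compl_connected {φ : Circle → ℂ} (hφ : Continuous φ) {D : Set ℂ} (hD : Inside (range φ) D) : IsPreconnected Dᶜ := by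
  have hJ := isCompact_J hφ
  have hJc : IsPreconnected (range φ) := isPreconnected_range hφ
  have hJD : range φ ⊆ Dᶜ := fun x hx hx' => disjoint_left.1 hD.2.2.1 hx' hx
  refine isPreconnected_of_forall (φ 1) fun y hy => ?_
  by_cases hyJ : y ∈ range φ
  · exact ⟨range φ, hJD, mem_range_self _, hyJ, hJc⟩
  set E := connectedComponentIn (range φ)ᶜ y with hE
  have hyE : y ∈ E := mem_connectedComponentIn hyJ
  have hcl : closure E ⊆ E ∪ range φ :=
    closure_minimal subset_union_left (comp_union_closed hJ.isClosed y)
  have hED : E ⊆ Dᶜ := by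
    intro x hx hxD
    exact hy (subset_of_clopen hD.1 hD.2.2.2.isClosed isPreconnected_connectedComponentIn
      (connectedComponentIn_subset (range φ)ᶜ y) hx hxD hyE)
  have hEo : IsOpen E := hJ.isClosed.isOpen_compl.connectedComponentIn
  obtain ⟨j, hj, hj'⟩ : ∃ j, j ∈ closure E ∧ j ∈ range φ := by
    by_contra hcon
    push Not at hcon
    have : IsClopen E := ⟨isClosed_of_closure_subset fun x hx =>
      (hcl hx).resolve_right (hcon x hx), hEo⟩
    have h2 : E = univ := this.eq_univ ⟨y, hyE⟩
    exact connectedComponentIn_subset (range φ)ᶜ y (h2 ▸ mem_univ (φ 1) : φ 1 ∈ E)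
      (mem_range_self _)
  refine ⟨closure E ∪ range φ, union_subset (hcl.trans (union_subset hED hJD)) hJD,
    Or.inr (mem_range_self _), Or.inl (subset_closure hyE), ?_⟩
  exact isPreconnected_connectedComponentIn.closure.union j hj hj' hJc

end curve

end JS

namespace JS

open Complex Set Metric

lemma not_bounded_compl {U : Set ℂ} (hb : Bornology.IsBounded U) : ¬ Bornology.IsBounded Uᶜ := by
  intro h
  have := hb.union h
  rw [union_compl_self] at this
  exact NormedSpace.unbounded_univ ℝ ℂ this

lemma hasLog_deep {U : Set ℂ} (hb : Bornology.IsBounded U) (hc : IsPreconnected Uᶜ) {δ : ℝ}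
    (hδ : 0 < δ) {f : ℂ → ℂ} (hf : ContinuousOn f U) (hf0 : ∀ z ∈ U, f z ≠ 0) :
    HasLogOn {z | δ ≤ infDist z Uᶜ} f := by
  have hub := not_bounded_compl hb
  have hne : Uᶜ.Nonempty := by
    rw [nonempty_iff_ne_empty]
    intro h
    rw [h] at hub
    exact hub Bornology.isBounded_empty
  have hKU : {z | δ ≤ infDist z Uᶜ} ⊆ U := by
    intro z hz
    by_contra hzU
    have h0 : infDist z Uᶜ = 0 := infDist_zero_of_mem hzU
    have : δ ≤ infDist z Uᶜ := hz
    linarith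
  have hK : IsCompact {z | δ ≤ infDist z Uᶜ} := isCompact_of_isClosed_isBounded
    (isClosed_le continuous_const (continuous_infDist_pt _)) (hb.subset hKU)
  refine hasLog_of_all hK (fun a ha => ?_) (hf.mono hKU) fun z hz => hf0 z (hKU hz)
  have ha' : infDist a Uᶜ < δ := not_le.1 ha
  obtain ⟨b, hbU, hab⟩ := (infDist_lt_iff hne).1 ha'
  refine hasLog_of_unbounded (S := ball b δ ∪ Uᶜ) hK ?_ ?_ ?_ (Or.inl hab)
  · exact (convex_ball b δ).isPreconnected.union b (mem_ball_self hδ) hbU hc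
  · rintro z (hz | hz) hz'
    · have h1 : infDist z Uᶜ ≤ dist z b := infDist_le_dist_of_mem hbU
      have h2 : dist z b < δ := hz
      have h3 : δ ≤ infDist z Uᶜ := hz'
      linarith
    · exact hz (hKU hz')
  · exact fun h => hub (h.subset subset_union_right)

lemma hasLog_inside {U : Set ℂ} (hU : IsOpen U) (hUc : IsPreconnected U)
    (hb : Bornology.IsBounded U) (hc : IsPreconnected Uᶜ) {f : ℂ → ℂ} (hf : ContinuousOn f U)
    (hf0 : ∀ z ∈ U, f z ≠ 0) : HasLogOn U f := by
  rcases U.eq_empty_or_nonempty with rfl | ⟨z0, hz0⟩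
  · exact ⟨fun _ => 0, by simp, by simp⟩
  have hne : Uᶜ.Nonempty := by
    rw [nonempty_iff_ne_empty]
    intro h
    have hub := not_bounded_compl hb
    rw [h] at hub
    exact hub Bornology.isBounded_empty
  set δ : ℕ → ℝ := fun n => 1 / ((n : ℝ) + 1) with hδ
  have hδ0 : ∀ n, 0 < δ n := fun n => Nat.one_div_pos_of_nat
  have hδm : ∀ n m, n ≤ m → δ m ≤ δ n := fun n m h => Nat.one_div_le_one_div h
  choose g hg hg' using fun n => hasLog_deep hb hc (hδ0 n) hf hf0
  set W : ℕ → Set ℂ := fun n => {z | δ n < infDist z Uᶜ} with hW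
  have hWo : ∀ n, IsOpen (W n) := fun n =>
    isOpen_lt continuous_const (continuous_infDist_pt _)
  set V : ℕ → Set ℂ := fun n => connectedComponentIn (W n) z0 with hV
  have hVo : ∀ n, IsOpen (V n) := fun n => (hWo n).connectedComponentIn
  have hVW : ∀ n, V n ⊆ W n := fun n => connectedComponentIn_subset _ _
  have hVz : ∀ n, (V n).Nonempty → z0 ∈ V n := fun n h =>
    mem_connectedComponentIn (connectedComponentIn_nonempty_iff.1 h)
  have hWK : ∀ n m, n ≤ m → W n ⊆ {z | δ m ≤ infDist z Uᶜ} := fun n m h z hz =>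
    (hδm n m h).trans (le_of_lt hz)
  set G : ℕ → ℂ → ℂ := fun n z => g n z - g n z0 + log (f z0) with hG
  have hcomp : ∀ n m, n ≤ m → ∀ z ∈ V n, G n z = G m z := by
    intro n m h z hz
    have := const_of_exp_eq_one (s := V n) isPreconnected_connectedComponentIn
      (h := fun z => g n z - g m z)
      (((hg n).mono ((hVW n).trans (hWK n n le_rfl))).sub
        ((hg m).mono ((hVW n).trans (hWK n m h)))) (fun x hx => by
        rw [exp_sub]
        rw [hg' n x (hWK n n le_rfl (hVW n hx)), hg' m x (hWK n m h (hVW n hx))]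
        apply div_self
        rw [← hg' n x (hWK n n le_rfl (hVW n hx))]
        exact exp_ne_zero _) hz (hVz n ⟨z, hz⟩)
    simp only [hG]
    linear_combination this
  have hcomp' : ∀ n m, ∀ z ∈ V n, z ∈ V m → G n z = G m z := by
    intro n m z hn hm
    rcases le_total n m with h | h
    · exact hcomp n m h z hn
    · exact (hcomp m n h z hm).symm
  have hcover : ∀ z ∈ U, ∃ n, z ∈ V n := by
    intro z hz
    obtain ⟨γ, hγ⟩ := (hU.isConnected_iff_isPathConnected.1 ⟨⟨z0, hz0⟩, hUc⟩).joinedIn z0 hz0 z hz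
    have hcr : IsCompact (range γ) := isCompact_range γ.continuous
    obtain ⟨x, ⟨t, rfl⟩, hx⟩ := hcr.exists_isMinOn (range_nonempty γ)
      (continuous_infDist_pt Uᶜ).continuousOn
    have hpos : 0 < infDist (γ t) Uᶜ :=
      (hU.isClosed_compl.notMem_iff_infDist_pos hne).1 (by simpa using hγ t)
    obtain ⟨n, hn⟩ := exists_nat_one_div_lt hpos
    refine ⟨n, ?_⟩
    have hsub : range γ ⊆ W n := fun y hy => hn.trans_le (hx hy)
    exact (isPreconnected_range γ.continuous).subset_connectedComponentIn ⟨0, γ.source⟩ hsub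
      ⟨1, γ.target⟩
  choose! N hN using hcover
  have hVU : ∀ n, V n ⊆ U := by
    intro n z hz
    by_contra hzU
    have h0 : infDist z Uᶜ = 0 := infDist_zero_of_mem hzU
    have : δ n < infDist z Uᶜ := hVW n hz
    linarith [hδ0 n]
  refine ⟨fun z => G (N z) z, fun z hz => ContinuousAt.continuousWithinAt ?_, fun z hz => ?_⟩
  · have h1 : ContinuousAt (G (N z)) z := by
      have : ContinuousAt (g (N z)) z := ((hg (N z)).mono
        ((hVW _).trans (hWK _ _ le_rfl))).continuousAt ((hVo _).mem_nhds (hN z hz))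
      exact (this.sub continuousAt_const).add continuousAt_const
    refine h1.congr ?_
    filter_upwards [(hVo (N z)).mem_nhds (hN z hz)] with x hx
    exact hcomp' _ _ x hx (hN x (hVU _ hx))
  · have h1 := hN z hz
    have h2 := hVz _ ⟨z, h1⟩
    simp only [hG]
    rw [exp_add, exp_sub, hg' _ z (hWK _ _ le_rfl (hVW _ h1)),
      hg' _ z0 (hWK _ _ le_rfl (hVW _ h2)), exp_log (hf0 z0 hz0)]
    have := hf0 z0 hz0
    field_simp

end JS

namespace JS

open Complex Set Metric Filter

/-- Hurwitz: a nonconstant locally uniform limit of injective maps is injective. -/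
lemma hurwitz {U : Set ℂ} (hU : IsOpen U) (hUc : IsPreconnected U) {z0 : ℂ} (hz0 : z0 ∈ U)
    {p : Filter ℕ} [p.NeBot] {F : ℕ → ℂ → ℂ} {f : ℂ → ℂ} (hF : ∀ n, DifferentiableOn ℂ (F n) U)
    (hFi : ∀ n, InjOn (F n) U) (hlim : TendstoLocallyUniformlyOn F f p U)
    (hf' : deriv f z0 ≠ 0) : InjOn f U := by
  have hf : DifferentiableOn ℂ f U := hlim.differentiableOn (Eventually.of_forall hF) hU
  have hfa : AnalyticOnNhd ℂ f U := hf.analyticOnNhd hU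
  intro a ha b hb hab
  by_contra hne
  have hiso : ∀ᶠ z in 𝓝[≠] b, f z - f b ≠ 0 := by
    refine ((hfa b hb).sub analyticAt_const).eventually_eq_zero_or_eventually_ne_zero.resolve_left ?_
    intro h
    have h1 : EqOn f (fun _ => f b) U := by
      refine hfa.eqOn_of_preconnected_of_eventuallyEq (fun z _ => analyticAt_const) hUc hb ?_
      filter_upwards [h] with z hz
      exact sub_eq_zero.1 hz
    have h2 : f =ᶠ[𝓝 z0] fun _ => f b := by
      filter_upwards [hU.mem_nhds hz0] with z hz
      exact h1 hz
    apply hf'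
    rw [h2.deriv_eq]
    simp
  rw [eventually_nhdsWithin_iff] at hiso
  have hev1 : ∀ᶠ z in 𝓝 b, z ∈ U := hU.mem_nhds hb
  have hev2 : ∀ᶠ z in 𝓝 b, z ∈ ({a}ᶜ : Set ℂ) :=
    isOpen_compl_singleton.mem_nhds (Ne.symm hne)
  obtain ⟨r0, hr0, hball⟩ := Metric.eventually_nhds_iff_ball.1
    (hiso.and (hev1.and hev2))
  set r := r0 / 2 with hr
  have hrpos : 0 < r := by positivity
  have hcb : closedBall b r ⊆ ball b r0 := closedBall_subset_ball (by linarith)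
  have hcU : closedBall b r ⊆ U := fun z hz => (hball z (hcb hz)).2.1
  have hsph : ∀ z ∈ sphere b r, f z - f b ≠ 0 := fun z hz => by
    refine (hball z (hcb (sphere_subset_closedBall hz))).1 ?_
    rintro rfl
    simp at hz
    linarith
  obtain ⟨m, hm, hmf⟩ : ∃ m > 0, ∀ z ∈ sphere b r, m ≤ ‖f z - f b‖ := by
    have hne : (sphere b r).Nonempty := NormedSpace.sphere_nonempty.2 hrpos.le
    obtain ⟨x, hx, hx'⟩ := (isCompact_sphere b r).exists_isMinOn hne
      ((hf.continuousOn.mono (sphere_subset_closedBall.trans hcU)).sub continuousOn_const).norm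
    exact ⟨‖f x - f b‖, norm_pos_iff.2 (hsph x hx), fun w hw => hx' hw⟩
  have hK : TendstoUniformlyOn F f p (insert a (closedBall b r)) :=
    (tendstoLocallyUniformlyOn_iff_forall_isCompact hU).1 hlim _
      (insert_subset ha hcU) ((isCompact_closedBall b r).insert a)
  obtain ⟨n, hn⟩ := (Metric.tendstoUniformlyOn_iff.1 hK (m / 8) (by positivity)).exists
  have hna := hn a (by simp)
  have hnb := hn b (by simp [hrpos.le])
  rw [dist_eq_norm] at hna hnb
  have hsub : ball (F n b) ((3 * m / 4) / 2) ⊆ F n '' closedBall b r := by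
    refine DiffContOnCl.ball_subset_image_closedBall ?_ hrpos ?_ ?_
    · refine DifferentiableOn.diffContOnCl ?_
      rw [closure_ball b hrpos.ne']
      exact (hF n).mono hcU
    · intro z hz
      have hnz := hn z (mem_insert_of_mem _ (sphere_subset_closedBall hz))
      rw [dist_eq_norm] at hnz
      have h1 := hmf z hz
      have e : f z - f b = (f z - F n z) + (F n z - F n b) - (f b - F n b) := by ring
      rw [e] at h1
      have h2 := norm_sub_le ((f z - F n z) + (F n z - F n b)) (f b - F n b)
      have h3 := norm_add_le (f z - F n z) (F n z - F n b)
      linarith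
    · have : ∀ᶠ z in 𝓝[≠] b, F n z ≠ F n b := by
        rw [eventually_nhdsWithin_iff]
        filter_upwards [hU.mem_nhds hb] with z hz hzb h
        exact hzb (hFi n hz hb h)
      exact this.frequently.filter_mono nhdsWithin_le_nhds
  have hmem : F n a ∈ ball (F n b) ((3 * m / 4) / 2) := by
    rw [mem_ball, dist_eq_norm]
    have e : F n a - F n b = (f b - F n b) - (f a - F n a) := by rw [hab]; ring
    rw [e]
    have := norm_sub_le (f b - F n b) (f a - F n a)
    linarith
  obtain ⟨c, hc, hca⟩ := hsub hmem
  have : c = a := hFi n (hcU hc) ha hca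
  exact (hball c (hcb hc)).2.2 this

/-- Montel, along an ultrafilter. -/
lemma montel {U : Set ℂ} (hU : IsOpen U) (p : Ultrafilter ℕ) {F : ℕ → ℂ → ℂ}
    (hF : ∀ n, DifferentiableOn ℂ (F n) U) (hFb : ∀ n, MapsTo (F n) U (ball 0 1)) :
    ∃ f : ℂ → ℂ, TendstoLocallyUniformlyOn F f p U ∧ MapsTo f U (closedBall 0 1) ∧
      ∀ z ∈ U, Tendsto (fun n => F n z) p (𝓝 (f z)) := by
  have hex : ∀ z, ∃ w, z ∈ U → w ∈ closedBall (0 : ℂ) 1 ∧ Tendsto (fun n => F n z) p (𝓝 w) := by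
    intro z
    by_cases hz : z ∈ U
    · obtain ⟨w, hw, hw'⟩ := (isCompact_closedBall (0 : ℂ) 1).ultrafilter_le_nhds
        (p.map fun n => F n z) (by
          rw [le_principal_iff]
          have : ∀ᶠ n in (p : Filter ℕ), F n z ∈ closedBall (0 : ℂ) 1 :=
            Filter.Eventually.of_forall fun n => ball_subset_closedBall (hFb n hz)
          exact this)
      exact ⟨w, fun _ => ⟨hw, hw'⟩⟩
    · exact ⟨0, fun h => absurd h hz⟩
  choose f hf using hex
  refine ⟨f, ?_, fun z hz => (hf z hz).1, fun z hz => (hf z hz).2⟩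
  rw [Metric.tendstoLocallyUniformlyOn_iff]
  intro ε hε x hx
  obtain ⟨r, hr, hrU⟩ := Metric.isOpen_iff.1 hU x hx
  have hlip : ∀ n, ∀ z ∈ ball x r, dist (F n z) (F n x) ≤ 2 / r * dist z x := by
    intro n z hz
    refine Complex.dist_le_div_mul_dist_of_mapsTo_ball ((hF n).mono hrU) ?_ hz
    intro w hw
    have h1 : ‖F n w‖ < 1 := by simpa using hFb n (hrU hw)
    have h2 : ‖F n x‖ < 1 := by simpa using hFb n hx
    rw [mem_closedBall, dist_eq_norm]
    linarith [norm_sub_le (F n w) (F n x)]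
  have hlip' : ∀ z ∈ ball x r, dist (f z) (f x) ≤ 2 / r * dist z x := by
    intro z hz
    exact le_of_tendsto ((hf z (hrU hz)).2.dist (hf x hx).2)
      (Eventually.of_forall fun n => hlip n z hz)
  refine ⟨ball x (min r (r * ε / 8)), mem_nhdsWithin_of_mem_nhds (ball_mem_nhds x (by positivity)),
    ?_⟩
  have hev := Metric.tendsto_nhds.1 (hf x hx).2 (ε / 2) (by positivity)
  filter_upwards [hev] with n hn z hz
  have hzr : z ∈ ball x r := ball_subset_ball (min_le_left _ _) hz
  have hze : dist z x < r * ε / 8 := (mem_ball.1 hz).trans_le (min_le_right _ _)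
  have hb : 2 / r * dist z x ≤ ε / 4 := by
    calc 2 / r * dist z x ≤ 2 / r * (r * ε / 8) := by gcongr
      _ = ε / 4 := by field_simp; norm_num
  have h1 := hlip n z hzr
  have h2 := hlip' z hzr
  have h3 := dist_triangle4 (f z) (f x) (F n x) (F n z)
  rw [dist_comm (f x) (F n x), dist_comm (F n x) (F n z)] at h3
  linarith

/-- Blaschke factor. -/
noncomputable def mob (w ζ : ℂ) : ℂ := (ζ - w) / (1 - (starRingEnd ℂ) w * ζ)

lemma mob_den {w ζ : ℂ} (hw : ‖w‖ < 1) (hζ : ‖ζ‖ < 1) : 1 - (starRingEnd ℂ) w * ζ ≠ 0 := by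
  intro h
  have h1 : (starRingEnd ℂ) w * ζ = 1 := (sub_eq_zero.1 h).symm
  have h2 : ‖w‖ * ‖ζ‖ = 1 := by
    have := congrArg norm h1
    rwa [norm_mul, RCLike.norm_conj, norm_one] at this
  nlinarith [norm_nonneg w, norm_nonneg ζ]

lemma norm_mob {w ζ : ℂ} (hw : ‖w‖ < 1) (hζ : ‖ζ‖ < 1) : ‖mob w ζ‖ < 1 := by
  have hd := mob_den hw hζ
  rw [mob, norm_div, div_lt_one (norm_pos_iff.2 hd)]
  refine lt_of_pow_lt_pow_left₀ 2 (norm_nonneg _) ?_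
  have e : ‖1 - (starRingEnd ℂ) w * ζ‖ ^ 2 - ‖ζ - w‖ ^ 2 = (1 - ‖w‖ ^ 2) * (1 - ‖ζ‖ ^ 2) := by
    simp only [Complex.sq_norm, Complex.normSq_apply]
    simp
    ring
  have h1 : 0 < (1 - ‖w‖ ^ 2) * (1 - ‖ζ‖ ^ 2) := by
    have := norm_nonneg w
    have := norm_nonneg ζ
    apply mul_pos <;> nlinarith
  linarith

lemma mob_inj {w ζ ξ : ℂ} (hw : ‖w‖ < 1) (hζ : ‖ζ‖ < 1) (hξ : ‖ξ‖ < 1)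
    (h : mob w ζ = mob w ξ) : ζ = ξ := by
  have hd := mob_den hw hζ
  have hd' := mob_den hw hξ
  rw [mob, mob, div_eq_div_iff hd hd'] at h
  have hw1 : 1 - (starRingEnd ℂ) w * w ≠ 0 := mob_den hw hw
  have : (1 - (starRingEnd ℂ) w * w) * (ζ - ξ) = 0 := by linear_combination h
  exact sub_eq_zero.1 ((mul_eq_zero.1 this).resolve_left hw1)

lemma hasDerivAt_mob {w ζ : ℂ} (hw : ‖w‖ < 1) (hζ : ‖ζ‖ < 1) :
    HasDerivAt (mob w) ((1 - (starRingEnd ℂ) w * w) / (1 - (starRingEnd ℂ) w * ζ) ^ 2) ζ := by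
  have hd := mob_den hw hζ
  have h1 : HasDerivAt (fun ζ : ℂ => ζ - w) 1 ζ := (hasDerivAt_id ζ).sub_const w
  have h2 : HasDerivAt (fun ζ : ℂ => 1 - (starRingEnd ℂ) w * ζ) (-((starRingEnd ℂ) w * 1)) ζ :=
    ((hasDerivAt_id ζ).const_mul _).const_sub 1
  have h3 := h1.div h2 hd
  refine h3.congr_deriv ?_
  congr 1
  ring

/-- A continuous square root of a holomorphic function is holomorphic. -/
lemma hasDerivAt_sqrt {h g : ℂ → ℂ} {x g' : ℂ} (hh : ContinuousAt h x) (h0 : h x ≠ 0)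
    (hg : HasDerivAt g g' x) (e : ∀ᶠ z in 𝓝 x, h z ^ 2 = g z) :
    HasDerivAt h (g' / (2 * h x)) x := by
  rw [hasDerivAt_iff_tendsto_slope] at hg ⊢
  have h1 : Tendsto (fun z => h z + h x) (𝓝[≠] x) (𝓝 (2 * h x)) := by
    rw [two_mul]
    exact (hh.add continuousAt_const).tendsto.mono_left nhdsWithin_le_nhds
  have h20 : 2 * h x ≠ 0 := mul_ne_zero two_ne_zero h0
  refine (hg.div h1 h20).congr' ?_
  have e2 : ∀ᶠ z in 𝓝[≠] x, h z + h x ≠ 0 := h1.eventually_ne h20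
  filter_upwards [e2, e.filter_mono nhdsWithin_le_nhds] with z hz hz'
  have ex := e.self_of_nhds
  rw [Pi.div_apply, slope_def_field, slope_def_field]
  show (g z - g x) / (z - x) / (h z + h x) = (h z - h x) / (z - x)
  rw [← hz', ← ex]
  rw [div_div, mul_comm, ← div_div]
  congr 1
  rw [div_eq_iff hz]
  ring

end JS

namespace JS

open Complex Set Metric Filter

/-- The competing family in the Riemann mapping theorem. -/
def Fam (U : Set ℂ) (z0 : ℂ) (f : ℂ → ℂ) : Prop :=
  DifferentiableOn ℂ f U ∧ InjOn f U ∧ MapsTo f U (ball 0 1) ∧ f z0 = 0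

lemma koebe {U : Set ℂ} (hU : IsOpen U) {z0 : ℂ} (hz0 : z0 ∈ U)
    (hlog : ∀ f : ℂ → ℂ, ContinuousOn f U → (∀ z ∈ U, f z ≠ 0) → HasLogOn U f)
    {f : ℂ → ℂ} (hf : Fam U z0 f) (hf' : deriv f z0 ≠ 0) {w : ℂ} (hw : ‖w‖ < 1)
    (hwU : w ∉ f '' U) : ∃ F, Fam U z0 F ∧ ‖deriv f z0‖ < ‖deriv F z0‖ := by
  obtain ⟨hfd, hfi, hfm, hf0⟩ := hf
  have hfn : ∀ z ∈ U, ‖f z‖ < 1 := fun z hz => by simpa using hfm hz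
  set g : ℂ → ℂ := fun z => mob w (f z) with hg
  have hgn : ∀ z ∈ U, ‖g z‖ < 1 := fun z hz => norm_mob hw (hfn z hz)
  have hgd : ∀ z ∈ U, HasDerivAt g
      ((1 - (starRingEnd ℂ) w * w) / (1 - (starRingEnd ℂ) w * f z) ^ 2 * deriv f z) z :=
    fun z hz => (hasDerivAt_mob hw (hfn z hz)).comp z
      (hfd.differentiableAt (hU.mem_nhds hz)).hasDerivAt
  have hg0 : ∀ z ∈ U, g z ≠ 0 := by
    intro z hz h0
    simp only [hg, mob] at h0
    rcases div_eq_zero_iff.1 h0 with h | h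
    · exact hwU ⟨z, hz, sub_eq_zero.1 h⟩
    · exact mob_den hw (hfn z hz) h
  obtain ⟨l, hlc, hl⟩ := hlog g (fun z hz => (hgd z hz).continuousAt.continuousWithinAt) hg0
  set h : ℂ → ℂ := fun z => exp (l z / 2) with hh
  have hsq : ∀ z ∈ U, h z ^ 2 = g z := by
    intro z hz
    rw [← hl z hz]
    simp only [hh]
    rw [← exp_nat_mul]
    congr 1
    push_cast
    ring
  have hh0 : ∀ z, h z ≠ 0 := fun z => exp_ne_zero _
  have hhc : ContinuousOn h U := (hlc.div_const 2).cexp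
  have hhd : ∀ z ∈ U, HasDerivAt h
      ((1 - (starRingEnd ℂ) w * w) / (1 - (starRingEnd ℂ) w * f z) ^ 2 * deriv f z / (2 * h z)) z := by
    intro z hz
    refine hasDerivAt_sqrt (hhc.continuousAt (hU.mem_nhds hz)) (hh0 z) (hgd z hz) ?_
    filter_upwards [hU.mem_nhds hz] with x hx
    exact hsq x hx
  have hhn : ∀ z ∈ U, ‖h z‖ < 1 := by
    intro z hz
    have h1 : ‖h z‖ ^ 2 < 1 := by
      rw [← norm_pow, hsq z hz]
      exact hgn z hz
    nlinarith [norm_nonneg (h z)]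
  have hn0 := hhn z0 hz0
  have hFd : ∀ z ∈ U, HasDerivAt (fun z => mob (h z0) (h z))
      ((1 - (starRingEnd ℂ) (h z0) * h z0) / (1 - (starRingEnd ℂ) (h z0) * h z) ^ 2 *
      ((1 - (starRingEnd ℂ) w * w) / (1 - (starRingEnd ℂ) w * f z) ^ 2 * deriv f z / (2 * h z))) z :=
    fun z hz => (hasDerivAt_mob hn0 (hhn z hz)).comp z (hhd z hz)
  refine ⟨fun z => mob (h z0) (h z), ⟨fun z hz => (hFd z hz).differentiableAt.differentiableWithinAt,
    ?_, ?_, ?_⟩, ?_⟩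
  · intro x hx y hy hxy
    have h1 : h x = h y := mob_inj hn0 (hhn x hx) (hhn y hy) hxy
    have h2 : g x = g y := by rw [← hsq x hx, ← hsq y hy, h1]
    exact hfi hx hy (mob_inj hw (hfn x hx) (hfn y hy) h2)
  · intro z hz
    rw [mem_ball_zero_iff]
    exact norm_mob hn0 (hhn z hz)
  · simp [mob]
  · rw [(hFd z0 hz0).deriv, hf0]
    set t := ‖h z0‖ with ht
    have htpos : 0 < t := norm_pos_iff.2 (hh0 z0)
    have hwt : ‖w‖ = t ^ 2 := by
      rw [ht, ← norm_pow, hsq z0 hz0]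
      simp [hg, mob, hf0]
    have e1 : 1 - (starRingEnd ℂ) (h z0) * h z0 = ((1 - t ^ 2 : ℝ) : ℂ) := by
      rw [mul_comm, Complex.mul_conj, Complex.normSq_eq_norm_sq]
      push_cast
      rfl
    have e2 : 1 - (starRingEnd ℂ) w * w = ((1 - t ^ 4 : ℝ) : ℂ) := by
      rw [mul_comm, Complex.mul_conj, Complex.normSq_eq_norm_sq, hwt]
      push_cast
      ring
    rw [e1, e2]
    have p1 : 0 < 1 - t ^ 2 := by nlinarith
    have p2 : 0 < 1 - t ^ 4 := by nlinarith [sq_nonneg t]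
    simp only [mul_zero, sub_zero, one_pow, div_one, norm_mul, norm_div, norm_pow, norm_real,
      Real.norm_eq_abs, abs_of_pos p1, abs_of_pos p2, RCLike.norm_ofNat]
    rw [← ht]
    have hd : 0 < ‖deriv f z0‖ := norm_pos_iff.2 hf'
    have e3 : (1 - t ^ 2) / (1 - t ^ 2) ^ 2 * ((1 - t ^ 4) * ‖deriv f z0‖ / (2 * t)) =
        ‖deriv f z0‖ * ((1 + t ^ 2) / (2 * t)) := by
      field_simp
      ring
    rw [e3]
    refine lt_mul_of_one_lt_right hd ?_
    rw [one_lt_div (by positivity)]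
    nlinarith [sq_pos_of_pos (sub_pos.2 hn0)]

lemma riemann {U : Set ℂ} (hU : IsOpen U) (hUc : IsPreconnected U) (hb : Bornology.IsBounded U)
    {z0 : ℂ} (hz0 : z0 ∈ U)
    (hlog : ∀ f : ℂ → ℂ, ContinuousOn f U → (∀ z ∈ U, f z ≠ 0) → HasLogOn U f) :
    ∃ f : ℂ → ℂ, DifferentiableOn ℂ f U ∧ InjOn f U ∧ f '' U = ball 0 1 ∧ deriv f z0 ≠ 0 := by
  obtain ⟨r, hr, hrU⟩ := Metric.isOpen_iff.1 hU z0 hz0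
  set A : Set ℝ := {x | ∃ f, Fam U z0 f ∧ ‖deriv f z0‖ = x} with hA
  have hAb : BddAbove A := by
    refine ⟨1 / r, ?_⟩
    rintro x ⟨f, ⟨h1, h2, h3, h4⟩, rfl⟩
    refine Complex.norm_deriv_le_div_of_mapsTo_ball (h1.mono hrU) ?_ hr
    rw [h4]
    exact fun z hz => ball_subset_closedBall (h3 (hrU hz))
  obtain ⟨s0, hs0, hs0A⟩ : ∃ s0 > 0, s0 ∈ A := by
    obtain ⟨R, hR⟩ := hb.subset_ball z0
    have hRpos : 0 < R := by simpa using hR hz0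
    have hd : ∀ z, HasDerivAt (fun z : ℂ => (z - z0) / R) (1 / R) z := fun z =>
      ((hasDerivAt_id z).sub_const z0).div_const _
    refine ⟨1 / R, by positivity, fun z => (z - z0) / R, ⟨?_, ?_, ?_, by simp⟩, ?_⟩
    · exact fun z _ => (hd z).differentiableAt.differentiableWithinAt
    · intro x _ y _ hxy
      have : (R : ℂ) ≠ 0 := by exact_mod_cast hRpos.ne'
      have h2 : (x - z0) / R = (y - z0) / R := hxy
      rw [div_left_inj' this] at h2
      linear_combination h2
    · intro z hz
      have := hR hz
      rw [mem_ball, dist_eq_norm] at this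
      rw [mem_ball_zero_iff, norm_div, norm_real, Real.norm_eq_abs, abs_of_pos hRpos,
        div_lt_one hRpos]
      exact this
    · rw [(hd z0).deriv]
      simp [abs_of_pos hRpos]
  obtain ⟨u, -, hu, huA⟩ := exists_seq_tendsto_sSup ⟨s0, hs0A⟩ hAb
  choose F hF hFu using huA
  set p : Ultrafilter ℕ := Ultrafilter.of atTop with hp
  have hple : (p : Filter ℕ) ≤ atTop := Ultrafilter.of_le atTop
  obtain ⟨f, hlim, hfc, hpt⟩ := montel hU p (fun n => (hF n).1) (fun n => (hF n).2.2.1)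
  have hfd : DifferentiableOn ℂ f U :=
    hlim.differentiableOn (Eventually.of_forall fun n => (hF n).1) hU
  have hder : Tendsto (fun n => deriv (F n) z0) p (𝓝 (deriv f z0)) :=
    (hlim.deriv (Eventually.of_forall fun n => (hF n).1) hU).tendsto_at hz0
  have hnorm : ‖deriv f z0‖ = sSup A := by
    refine tendsto_nhds_unique hder.norm ?_
    simp_rw [hFu]
    exact hu.mono_left hple
  have hpos : 0 < ‖deriv f z0‖ := by
    rw [hnorm]
    exact hs0.trans_le (le_csSup hAb hs0A)
  have hd0 : deriv f z0 ≠ 0 := norm_pos_iff.1 hpos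
  have hinj : InjOn f U := hurwitz hU hUc hz0 (fun n => (hF n).1) (fun n => (hF n).2.1) hlim hd0
  have hopen : IsOpen (f '' U) := by
    rcases (hfd.analyticOnNhd hU).is_constant_or_isOpen hUc with ⟨c, hc⟩ | h
    · exfalso
      apply hd0
      have h2 : f =ᶠ[𝓝 z0] fun _ => c := by
        filter_upwards [hU.mem_nhds hz0] with z hz
        exact hc z hz
      rw [h2.deriv_eq]
      simp
    · exact h U Subset.rfl hU
  have hsub : f '' U ⊆ ball 0 1 := by
    have := interior_maximal hfc.image_subset hopen
    rwa [interior_closedBall _ one_ne_zero] at this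
  have hf0 : f z0 = 0 := by
    refine tendsto_nhds_unique (hpt z0 hz0) ?_
    simp_rw [fun n => (hF n).2.2.2]
    exact tendsto_const_nhds
  refine ⟨f, hfd, hinj, hsub.antisymm fun w hw => ?_, hd0⟩
  by_contra hwU
  obtain ⟨G, hG, hlt⟩ := koebe hU hz0 hlog ⟨hfd, hinj, mapsTo_iff_image_subset.2 hsub, hf0⟩ hd0
    (by simpa using hw) hwU
  have : ‖deriv G z0‖ ≤ sSup A := le_csSup hAb ⟨G, hG, rfl⟩
  linarith

lemma homeo_of_map {U : Set ℂ} (hU : IsOpen U) (hUc : IsPreconnected U) {z0 : ℂ}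
    (hz0 : z0 ∈ U) {f : ℂ → ℂ} (hfd : DifferentiableOn ℂ f U) (hinj : InjOn f U)
    (him : f '' U = ball 0 1) (hd0 : deriv f z0 ≠ 0) :
    Nonempty (U ≃ₜ ball (0 : ℂ) 1) := by
  have hop : ∀ s ⊆ U, IsOpen s → IsOpen (f '' s) := by
    rcases (hfd.analyticOnNhd hU).is_constant_or_isOpen hUc with ⟨c, hc⟩ | h
    · exfalso
      apply hd0
      have h2 : f =ᶠ[𝓝 z0] fun _ => c := by
        filter_upwards [hU.mem_nhds hz0] with z hz
        exact hc z hz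
      rw [h2.deriv_eq]
      simp
    · exact h
  have hmem : ∀ z : U, f z ∈ ball (0 : ℂ) 1 := fun z => him ▸ mem_image_of_mem f z.2
  set F : U → ball (0 : ℂ) 1 := fun z => ⟨f z, hmem z⟩ with hF
  have hFc : Continuous F :=
    (continuousOn_iff_continuous_domRestrict.1 hfd.continuousOn).subtype_mk _
  have hbij : Function.Bijective F := by
    constructor
    · intro x y hxy
      exact Subtype.ext (hinj x.2 y.2 (congrArg Subtype.val hxy))
    · rintro ⟨w, hw⟩
      rw [← him] at hw
      obtain ⟨z, hz, rfl⟩ := hw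
      exact ⟨⟨z, hz⟩, rfl⟩
  have hFo : IsOpenMap F := by
    intro s hs
    have h1 : IsOpen (f '' (Subtype.val '' s)) :=
      hop _ (by rintro _ ⟨x, -, rfl⟩; exact x.2) (hU.isOpenMap_subtype_val s hs)
    have h2 : F '' s = Subtype.val ⁻¹' (f '' (Subtype.val '' s)) := by
      ext y
      constructor
      · rintro ⟨x, hx, rfl⟩
        exact ⟨x, ⟨x, hx, rfl⟩, rfl⟩
      · rintro ⟨_, ⟨x, hx, rfl⟩, hy⟩
        exact ⟨x, hx, Subtype.ext hy⟩
    rw [h2]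
    exact h1.preimage continuous_subtype_val
  exact ⟨(Equiv.ofBijective F hbij).toHomeomorphOfContinuousOpen hFc hFo⟩

/-- The inside of a planar Jordan curve is a disk. -/
theorem inside_homeo {φ : Circle → ℂ} (hφ : Continuous φ) (hinj : Function.Injective φ)
    {D : Set ℂ} (hD : Inside (range φ) D) : Nonempty (D ≃ₜ ball (0 : ℂ) 1) := by
  have hDc := comp_unique hφ hinj hD
  have hDc' := compl_connected hφ hD
  have hb : Bornology.IsBounded D := hD.2.2.2.isBounded.subset subset_union_left
  obtain ⟨z0, hz0⟩ := hD.2.1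
  obtain ⟨f, h1, h2, h3, h4⟩ := riemann hD.1 hDc hb hz0
    (fun f hf hf0 => hasLog_inside hD.1 hDc hb hDc' hf hf0)
  exact homeo_of_map hD.1 hDc hz0 h1 h2 h3 h4

end JS

namespace JS

open Complex Set Metric Filter

/-- The 2-sphere. -/
abbrev S2 : Type := ↥(Metric.sphere (0 : EuclideanSpace ℝ (Fin 3)) 1)

lemma exists_chart (q : S2) : ∃ (σ : S2 → ℂ) (τ : ℂ → S2), ContinuousOn σ {q}ᶜ ∧
    IsOpenEmbedding τ ∧ (∀ x, x ≠ q → τ (σ x) = x) ∧ (∀ z, τ z ≠ q) ∧ ∀ z, σ (τ z) = z := by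
  have : Fact (Module.finrank ℝ (EuclideanSpace ℝ (Fin 3)) = 2 + 1) := ⟨by simp⟩
  set e := stereographic' 2 q with he
  set c : ℂ ≃ₜ EuclideanSpace ℝ (Fin 2) :=
    Complex.orthonormalBasisOneI.repr.toHomeomorph with hc
  have hs : e.source = {q}ᶜ := stereographic'_source q
  have ht : e.target = univ := stereographic'_target q
  refine ⟨fun x => c.symm (e x), fun z => e.symm (c z), ?_, ?_, ?_, ?_, ?_⟩
  · rw [← hs]
    exact c.symm.continuous.comp_continuousOn e.continuousOn
  · exact (e.symm.isOpenEmbedding (by simpa using ht)).comp c.isOpenEmbedding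
  · intro x hx
    simp only [Homeomorph.apply_symm_apply]
    exact e.left_inv (by rw [hs]; exact hx)
  · intro z
    have : e.symm (c z) ∈ e.source := e.map_target (by rw [ht]; trivial)
    rw [hs] at this
    exact this
  · intro z
    show c.symm (e (e.symm (c z))) = z
    rw [e.right_inv (by rw [ht]; trivial)]
    simp

lemma exists_notMem {Ψ : Circle → S2} (hΨ : Continuous Ψ) (hinj : Function.Injective Ψ) :
    ∃ q, q ∉ range Ψ := by
  by_contra hcon
  push Not at hcon
  obtain ⟨u, hu⟩ : ∃ u : S2 ≃ₜ Circle, ∀ z, u (Ψ z) = z := by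
    refine ⟨(hΨ.homeoOfEquivCompactToT2 (f := Equiv.ofBijective Ψ ⟨hinj, hcon⟩)).symm, ?_⟩
    intro z
    exact (Equiv.ofBijective Ψ ⟨hinj, hcon⟩).symm_apply_apply z
  obtain ⟨σ, τ, -, hτ, h1, h2, h3⟩ := exists_chart (Ψ 1)
  have hne : ∀ z : Circle, z ≠ 1 → Ψ z ≠ Ψ 1 := fun z hz h => hz (hinj h)
  set m1 : Circle := Circle.exp Real.pi with hm1
  set pI : Circle := Circle.exp (Real.pi / 2) with hpI
  set nI : Circle := Circle.exp (-(Real.pi / 2)) with hnI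
  have em : (m1 : ℂ) = -1 := by rw [hm1, Circle.coe_exp]; exact exp_pi_mul_I
  have ep : (pI : ℂ) = I := by
    rw [hpI, Circle.coe_exp]
    push_cast
    exact exp_pi_div_two_mul_I
  have en : (nI : ℂ) = -I := by
    rw [hnI, Circle.coe_exp]
    push_cast
    rw [← neg_div]
    exact exp_neg_pi_div_two_mul_I
  have hu1 : ∀ z, u (τ z) ≠ 1 := by
    intro z h
    apply h2 z
    rw [← hu 1] at h
    exact u.injective h
  have hT : IsPreconnected ({σ (Ψ m1)}ᶜ : Set ℂ) :=
    (isConnected_compl_singleton_of_one_lt_rank (by simp) _).isPreconnected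
  have hpm : ∀ z : Circle, (z : ℂ).im = 0 → z = 1 ∨ z = m1 := by
    intro z hz
    have hn : (z : ℂ).re * (z : ℂ).re + (z : ℂ).im * (z : ℂ).im = 1 := by
      have := Circle.normSq_coe z
      rwa [Complex.normSq_apply] at this
    rw [hz, mul_zero, add_zero] at hn
    rcases mul_self_eq_one_iff.1 hn with h | h
    · left
      apply Circle.ext
      apply Complex.ext <;> simp [h, hz]
    · right
      apply Circle.ext
      rw [em]
      apply Complex.ext <;> simp [h, hz]
  have hmem : ∀ z : Circle, z ≠ 1 → z ≠ m1 → σ (Ψ z) ∈ ({σ (Ψ m1)}ᶜ : Set ℂ) ∧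
      u (τ (σ (Ψ z))) = z := by
    intro z hz hz'
    have e1 : τ (σ (Ψ z)) = Ψ z := h1 _ (hne z hz)
    refine ⟨fun h => ?_, by rw [e1, hu]⟩
    have hm : m1 ≠ 1 := by
      intro h
      have := congrArg (fun z : Circle => (z : ℂ).re) h
      simp [em] at this
      norm_num at this
    have e2 : τ (σ (Ψ m1)) = Ψ m1 := h1 _ (hne m1 hm)
    rw [mem_singleton_iff] at h
    rw [h, e2] at e1
    exact hz' (hinj e1).symm
  have ne_of_im : ∀ z : Circle, (z : ℂ).im ≠ 0 → z ≠ 1 ∧ z ≠ m1 := by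
    intro z hz
    constructor
    · rintro rfl
      simp at hz
    · intro h
      rw [h, em] at hz
      simp at hz
  obtain ⟨p1, p2⟩ := ne_of_im pI (by simp [ep])
  obtain ⟨n1, n2⟩ := ne_of_im nI (by simp [en])
  obtain ⟨hp, hp'⟩ := hmem pI p1 p2
  obtain ⟨hn, hn'⟩ := hmem nI n1 n2
  have hcont : Continuous (fun z => ((u (τ z) : Circle) : ℂ).im) :=
    Complex.continuous_im.comp ((by fun_prop : Continuous fun z : Circle => (z : ℂ)).comp
      (u.continuous.comp hτ.continuous))
  have hivt := hT.intermediate_value hn hp hcont.continuousOn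
  have h0 : (0 : ℝ) ∈ Icc ((u (τ (σ (Ψ nI))) : Circle) : ℂ).im
      ((u (τ (σ (Ψ pI))) : Circle) : ℂ).im := by
    rw [hp', hn', ep, en]
    simp
  obtain ⟨z, hz, hz0⟩ := hivt h0
  rcases hpm _ hz0 with h | h
  · exact hu1 z h
  · apply hz
    rw [mem_singleton_iff, ← h3 z]
    congr 1
    rw [← hu m1] at h
    exact u.injective h

theorem jordan_circle {Ψ : Circle → S2} (hΨ : Continuous Ψ) (hinj : Function.Injective Ψ) :
    ∃ U V : Set S2, IsOpen U ∧ IsOpen V ∧ Disjoint U V ∧ U ∪ V = (range Ψ)ᶜ ∧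
      Nonempty (U ≃ₜ ball (0 : ℂ) 1) ∧ Nonempty (V ≃ₜ ball (0 : ℂ) 1) := by
  obtain ⟨q, hq⟩ := exists_notMem hΨ hinj
  have hcurve : ∀ (q : S2) (σ : S2 → ℂ) (τ : ℂ → S2), q ∉ range Ψ → ContinuousOn σ {q}ᶜ →
      (∀ x, x ≠ q → τ (σ x) = x) →
      Continuous (fun t => σ (Ψ t)) ∧ Function.Injective (fun t => σ (Ψ t)) := by
    intro q σ τ hq hσ h1
    have hne : ∀ t, Ψ t ≠ q := fun t h => hq ⟨t, h⟩
    refine ⟨hσ.comp_continuous hΨ hne, fun s t hst => ?_⟩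
    have : τ (σ (Ψ s)) = τ (σ (Ψ t)) := congrArg τ hst
    rw [h1 _ (hne s), h1 _ (hne t)] at this
    exact hinj this
  have hhomeo : ∀ (τ : ℂ → S2) (W : Set S2) (D : Set ℂ), IsOpenEmbedding τ → τ '' D = W →
      Nonempty (D ≃ₜ ball (0 : ℂ) 1) → Nonempty (W ≃ₜ ball (0 : ℂ) 1) := by
    rintro τ W D hτ rfl ⟨e⟩
    exact ⟨(hτ.isEmbedding.homeomorphImage D).symm.trans e⟩
  obtain ⟨σ, τ, hσ, hτ, h1, h2, h3⟩ := exists_chart q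
  obtain ⟨hφ, hφi⟩ := hcurve q σ τ hq hσ h1
  obtain ⟨D, hD⟩ := exists_inside hφ hφi
  have hDh := inside_homeo hφ hφi hD
  have hneq : ∀ t, Ψ t ≠ q := fun t h => hq ⟨t, h⟩
  set V : Set S2 := τ '' D with hV
  have hVo : IsOpen V := hτ.isOpenMap D hD.1
  have himJ : τ '' (range fun t => σ (Ψ t)) = range Ψ := by
    rw [← range_comp]
    congr 1
    funext t
    exact h1 _ (hneq t)
  have hVJ : Disjoint V (range Ψ) := by
    rw [← himJ, hV]
    exact (disjoint_image_iff hτ.injective).2 hD.2.2.1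
  have hVc : IsClosed (V ∪ range Ψ) := by
    rw [← himJ, hV, ← image_union]
    exact (hD.2.2.2.image hτ.continuous).isClosed
  set U : Set S2 := (V ∪ range Ψ)ᶜ with hU
  have hUo : IsOpen U := hVc.isOpen_compl
  have hUV : Disjoint U V := disjoint_left.2 fun x hx hx' => hx (Or.inl hx')
  have hun : U ∪ V = (range Ψ)ᶜ := by
    ext x
    constructor
    · rintro (hx | hx) hx'
      · exact hx (Or.inr hx')
      · exact disjoint_left.1 hVJ hx hx'
    · intro hx
      by_cases hxV : x ∈ V
      · exact Or.inr hxV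
      · exact Or.inl fun h => h.elim hxV hx
  have hUJ : U ∪ range Ψ = Vᶜ := by
    ext x
    constructor
    · rintro (hx | hx) hx'
      · exact hx (Or.inl hx')
      · exact disjoint_left.1 hVJ hx' hx
    · intro hx
      by_cases hxJ : x ∈ range Ψ
      · exact Or.inr hxJ
      · exact Or.inl fun h => h.elim hx hxJ
  have hqV : q ∉ V := by
    rintro ⟨z, -, hz⟩
    exact h2 z hz
  have hqU : q ∈ U := fun h => h.elim hqV hq
  obtain ⟨q', hq'⟩ : V.Nonempty := hD.2.1.image τ
  obtain ⟨σ₂, τ₂, hσ₂, hτ₂, h1', h2', h3'⟩ := exists_chart q'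
  have hq'J : q' ∉ range Ψ := disjoint_left.1 hVJ hq'
  obtain ⟨hφ', hφi'⟩ := hcurve q' σ₂ τ₂ hq'J hσ₂ h1'
  have hneU : ∀ x ∈ U, x ≠ q' := by
    rintro x hx rfl
    exact hx (Or.inl hq')
  have hneJ : ∀ t, Ψ t ≠ q' := fun t h => hq'J ⟨t, h⟩
  have hD' : Inside (range fun t => σ₂ (Ψ t)) (τ₂ ⁻¹' U) := by
    refine ⟨hUo.preimage hτ₂.continuous, ⟨σ₂ q, ?_⟩, ?_, ?_⟩
    · rw [mem_preimage, h1' q (hneU q hqU)]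
      exact hqU
    · refine disjoint_left.2 ?_
      rintro _ hx ⟨t, rfl⟩
      rw [mem_preimage] at hx
      rw [h1' _ (hneJ t)] at hx
      exact hx (Or.inr ⟨t, rfl⟩)
    · have e : τ₂ ⁻¹' U ∪ (range fun t => σ₂ (Ψ t)) = σ₂ '' (Vᶜ) := by
        rw [← hUJ, image_union]
        congr 1
        · ext z
          constructor
          · intro hz
            exact ⟨τ₂ z, hz, h3' z⟩
          · rintro ⟨x, hx, rfl⟩
            rw [mem_preimage, h1' x (hneU x hx)]
            exact hx
        · rw [← range_comp]
          rfl
      rw [e]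
      refine (hVo.isClosed_compl.isCompact).image_of_continuousOn (hσ₂.mono ?_)
      intro x hx hxq
      rw [mem_singleton_iff] at hxq
      subst hxq
      exact hx hq'
  have hUim : τ₂ '' (τ₂ ⁻¹' U) = U := by
    refine image_preimage_eq_of_subset fun x hx => ⟨σ₂ x, h1' x (hneU x hx)⟩
  exact ⟨U, V, hUo, hVo, hUV, hun, hhomeo τ₂ U _ hτ₂ hUim (inside_homeo hφ' hφi' hD'),
    hhomeo τ V D hτ rfl hDh⟩

/-- The complex unit disk is the Euclidean one. -/
lemma disk_homeo : Nonempty (ball (0 : ℂ) 1 ≃ₜ ball (0 : EuclideanSpace ℝ (Fin 2)) 1) := by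
  set c := Complex.orthonormalBasisOneI.repr with hc
  refine ⟨(c.toHomeomorph.subtype fun z => ?_)⟩
  rw [mem_ball_zero_iff, mem_ball_zero_iff]
  show _ ↔ ‖c z‖ < 1
  rw [c.norm_map]

lemma circle_homeo : Nonempty (Circle ≃ₜ sphere (0 : EuclideanSpace ℝ (Fin 2)) 1) := by
  set c := Complex.orthonormalBasisOneI.repr with hc
  have hmem : ∀ z : Circle, c (z : ℂ) ∈ sphere (0 : EuclideanSpace ℝ (Fin 2)) 1 := fun z => by
    rw [mem_sphere_zero_iff_norm, c.norm_map, Circle.norm_coe]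
  set f : Circle → sphere (0 : EuclideanSpace ℝ (Fin 2)) 1 := fun z => ⟨c (z : ℂ), hmem z⟩ with hf
  have hfc : Continuous f :=
    (c.continuous.comp (by fun_prop : Continuous fun z : Circle => (z : ℂ))).subtype_mk _
  have hfb : Function.Bijective f := by
    constructor
    · intro x y hxy
      exact Circle.ext (c.injective (congrArg Subtype.val hxy))
    · rintro ⟨w, hw⟩
      have hn : ‖c.symm w‖ = 1 := by
        rw [c.symm.norm_map]
        simpa using hw
      refine ⟨⟨c.symm w, mem_sphere_zero_iff_norm.2 hn⟩, Subtype.ext ?_⟩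
      exact c.apply_symm_apply w
  exact ⟨hfc.homeoOfEquivCompactToT2 (f := Equiv.ofBijective f hfb)⟩

end JS

/-- Jordan–Schönflies on the sphere: the complement of any embedded
circle in `S²` — with no tameness assumption — is a disjoint union of two open sets,
each homeomorphic to the open 2-disk. -/
theorem jordan_schoenflies_sphere
    (ψ : ↥(Metric.sphere (0 : EuclideanSpace ℝ (Fin 2)) 1) →
      ↥(Metric.sphere (0 : EuclideanSpace ℝ (Fin 3)) 1))
    (hψ : IsEmbedding ψ) :
    ∃ U V : Set ↥(Metric.sphere (0 : EuclideanSpace ℝ (Fin 3)) 1),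
      IsOpen U ∧ IsOpen V ∧ Disjoint U V ∧
      U ∪ V = (Set.range ψ)ᶜ ∧
      Nonempty (↥U ≃ₜ ↥(Metric.ball (0 : EuclideanSpace ℝ (Fin 2)) 1)) ∧
      Nonempty (↥V ≃ₜ ↥(Metric.ball (0 : EuclideanSpace ℝ (Fin 2)) 1)) := by
  obtain ⟨c⟩ := JS.circle_homeo
  obtain ⟨d⟩ := JS.disk_homeo
  obtain ⟨U, V, hU, hV, hUV, hun, ⟨e1⟩, ⟨e2⟩⟩ := JS.jordan_circle (Ψ := fun z => ψ (c z))
    (hψ.continuous.comp c.continuous) (hψ.injective.comp c.injective)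
  refine ⟨U, V, hU, hV, hUV, ?_, ⟨e1.trans d⟩, ⟨e2.trans d⟩⟩
  rw [hun]
  congr 1
  exact c.surjective.range_comp ψ
end
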